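/- arXiv:0804.3032 — 2 statements merged into one kernel-verified Lean document; each statement's English description precedes it below -/
import Mathlib

section
/- Let β > 0 and let m ≥ 1 be an integer. Set c_1 = m(m−1)(1+β)²/β² + m(m−1)²(1+β)³/(β²(2+β)) and c_2 = (2+5β)/(2β)·m² + (2−β)/(2β)·m. Then there exist a constant K > 0 and an integer n_0 ≥ 3 such that for all n ≥ n_0, the expected clustering coefficient of the Móri graph satisfies |E[C(G^n_{m,β})] − 3·c_1·log n/(c_2·n)| ≤ K/n. -/
open Finset

/-- A parent sequence of length `N`: for each `t ∈ {2,…,N}` an index `f t ∈ {1,…,t-1}`. -/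
def ParentSeq (N : ℕ) : Type :=
  ∀ t : Set.Icc 2 N, Set.Icc 1 ((t : ℕ) - 1)

noncomputable instance (N : ℕ) : Fintype (ParentSeq N) := by
  unfold ParentSeq
  classical
  infer_instance

/-- The value of a parent sequence at `j` (junk value `0` outside `{2,…,N}`). -/
def pval {N : ℕ} (f : ParentSeq N) (j : ℕ) : ℕ :=
  if h : 2 ≤ j ∧ j ≤ N then (f ⟨j, Set.mem_Icc.mpr h⟩ : ℕ) else 0

/-- The degree `d_t(v_i)` of vertex `i` at time `t` in the tree determined by `f`. -/
def deg {N : ℕ} (f : ParentSeq N) (t i : ℕ) : ℕ :=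
  ((Finset.Icc 2 t).filter (fun j => pval f j = i)).card + (if 2 ≤ i then 1 else 0)

/-- The Móri probability of the parent sequence `f`. -/
noncomputable def moriP {N : ℕ} (β : ℝ) (f : ParentSeq N) : ℝ :=
  ∏ t ∈ Finset.Icc 2 N, ((deg f (t - 1) (pval f t) : ℝ) + β) / ((2 + β) * ((t : ℝ) - 1) - 2)

/-- Expectation of `X` under the Móri measure on parent sequences of length `N`. -/
noncomputable def moriE (N : ℕ) (β : ℝ) (X : ParentSeq N → ℝ) : ℝ :=
  ∑ f : ParentSeq N, moriP β f * X f

open Classical in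
/-- Probability of an event under the Móri measure on parent sequences of length `N`. -/
noncomputable def moriPr (N : ℕ) (β : ℝ) (p : ParentSeq N → Prop) : ℝ :=
  ∑ f : ParentSeq N, if p f then moriP β f else 0

/-- The index of the merged vertex containing tree vertex `t` when merging in blocks of `m`. -/
def blk (m t : ℕ) : ℕ := (t - 1) / m + 1

/-- The number `m(a,b)` of edges joining `u_a` and `u_b` in the Móri graph `G^n_{m,β}`. -/
def mult (n m : ℕ) (f : ParentSeq (n * m)) (a b : ℕ) : ℕ :=
  ((Finset.Icc 2 (n * m)).filter (fun t =>
    (blk m t = a ∧ blk m (pval f t) = b) ∨ (blk m t = b ∧ blk m (pval f t) = a))).card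

/-- The degree `d(u_i)` of the merged vertex `u_i` in the Móri graph `G^n_{m,β}`
(a loop contributes `2`). -/
def degU (n m : ℕ) (f : ParentSeq (n * m)) (i : ℕ) : ℕ :=
  ((Finset.Icc 2 (n * m)).filter (fun t => blk m t = i)).card +
  ((Finset.Icc 2 (n * m)).filter (fun t => blk m (pval f t) = i)).card

/-!
Merge the first `t` tree vertices into blocks and let the weight `W i` of a merged vertex be its
degree plus `β m`. Up to a correction at the block that is still being filled, the next edge goes
from that block `c` to `a` with probability proportional to `W a`, and it closes as many new
triangles as there are paths `c - b - a` in the current multigraph. The conditional mean increment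
of the number `N` of triangles is therefore a weighted count `V` of such paths divided by
`(2 + β) t - 2`. The drift of `V` is governed by the sum of `W i * W j` over the edges, whose drift
is governed in turn by the sum of the `W i ^ 2`. All these expectations satisfy linear recursions
`E (t + 1) = (1 + q / t) * E t + ...` and hence have explicit first-order asymptotics. As `V`
vanishes at the start of a block, its expectation is asymptotically a constant times `t % m`, and
the sum of `(t % m) / t` over `t ≤ n m` produces the logarithm.

Finally `D` may be replaced by `c₂ n` at the cost of `O(1 / n)`: with `ρ = (4 + β) / (2 + β) < 2`,
the second moment of `D - c₂ n` is `O(n ^ ρ)` and that of `N` is `O(n ^ (2 - ρ))`.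
-/

open Filter
open scoped Matrix

namespace MoriGraph

/-! ### Adding an edge to a weighted multigraph -/

section AddEdge

variable {ι R : Type*} [Fintype ι] [DecidableEq ι] [CommRing R]

/-- The adjacency matrix `M` of a multigraph after an edge between `c` and `a` is added.
Loops are not recorded: nothing happens when `a = c`. -/
def addEdge (M : Matrix ι ι R) (c a : ι) : Matrix ι ι R :=
  M + if a = c then 0 else Matrix.single a c 1 + Matrix.single c a 1

/-- Twice the sum over the edges of the product of the weights of their endpoints. -/
def edgeWeight (M : Matrix ι ι R) (W : ι → R) : R :=
  W ⬝ᵥ M *ᵥ W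

/-- The sum over all walks `b - i - b'` of the product of the weights of their vertices. -/
def starWeight (M : Matrix ι ι R) (W : ι → R) : R :=
  ∑ i, W i * (M *ᵥ W) i ^ 2

/-- The sum of the weights of the end points `a ≠ c` of the walks `c - b - a`. A new edge from
`c` to `a` closes each of these walks to a triangle. -/
def cherryWeight (M : Matrix ι ι R) (W : ι → R) (c : ι) : R :=
  ∑ b, M c b * ((M *ᵥ W) b - M b c * W c)

/-- The number of triangles of a loopless multigraph with adjacency matrix `M`, counted with
multiplicity. -/
noncomputable def triangleCount (M : Matrix ι ι ℝ) : ℝ :=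
  (M * M * M).trace / 6

omit [Fintype ι] in
@[simp] lemma addEdge_self (M : Matrix ι ι R) (c : ι) : addEdge M c c = M := by
  simp [addEdge]

omit [Fintype ι] in
lemma addEdge_of_ne (M : Matrix ι ι R) {c a : ι} (h : a ≠ c) :
    addEdge M c a = M + (Matrix.single a c 1 + Matrix.single c a 1) := by
  simp [addEdge, h]

omit [Fintype ι] in
lemma addEdge_apply (M : Matrix ι ι R) (c a i j : ι) :
    addEdge M c a i j = M i j +
      if a ≠ c ∧ (a = i ∧ c = j ∨ c = i ∧ a = j) then 1 else 0 := by
  by_cases h : a = c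
  · simp [h]
  · simp only [addEdge_of_ne M h, Matrix.add_apply, Matrix.single_apply]
    grind

lemma addEdge_mulVec (M : Matrix ι ι R) (W : ι → R) (c a : ι) :
    addEdge M c a *ᵥ (W + Pi.single a 1) = M *ᵥ W + M.col a +
      if a = c then 0 else Pi.single a (W c) + Pi.single c (W a + 1) := by
  rcases eq_or_ne a c with rfl | h
  · simp [Matrix.mulVec_add]
  · rw [addEdge_of_ne M h, if_neg h, Matrix.add_mulVec, Matrix.add_mulVec, Matrix.mulVec_add,
      Matrix.mulVec_single_one, Matrix.single_mulVec, Matrix.single_mulVec]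
    simp [h.symm, Pi.single]

lemma mulVec_addEdge_apply (M : Matrix ι ι R) (W : ι → R) (c a i : ι) :
    (addEdge M c a *ᵥ (W + Pi.single a 1)) i = (M *ᵥ W) i + M i a +
      if a = c then 0 else (if i = a then W c else 0) + if i = c then W a + 1 else 0 := by
  rw [addEdge_mulVec]
  split_ifs <;> simp_all

omit [DecidableEq ι] in
lemma dotProduct_col {M : Matrix ι ι R} (hM : M.IsSymm) (W : ι → R) (a : ι) :
    W ⬝ᵥ M.col a = (M *ᵥ W) a := by
  simp only [dotProduct, Matrix.mulVec, Matrix.col_apply, hM.apply a, mul_comm]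

lemma edgeWeight_addEdge {M : Matrix ι ι R} (hM : M.IsSymm) (hdiag : ∀ i, M i i = 0)
    (W : ι → R) (c a : ι) :
    edgeWeight (addEdge M c a) (W + Pi.single a 1) = edgeWeight M W + 2 * (M *ᵥ W) a +
      if a = c then 0 else 2 * (W a + 1) * W c := by
  rw [edgeWeight, addEdge_mulVec, dotProduct_add, dotProduct_add, add_dotProduct, add_dotProduct,
    dotProduct_col hM]
  split_ifs with h
  · simp [hdiag, edgeWeight]
    ring
  · simp [hdiag, edgeWeight, Ne.symm h, dotProduct_add]
    ring

lemma cherryWeight_addEdge {M : Matrix ι ι R} (hdiag : ∀ i, M i i = 0) (W : ι → R) (c a : ι) :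
    cherryWeight (addEdge M c a) (W + Pi.single a 1) c = cherryWeight M W c +
      if a = c then 0 else (M * M) c a + ((M *ᵥ W) a - M a c * W c) := by
  unfold cherryWeight
  simp only [mulVec_addEdge_apply]
  rcases eq_or_ne a c with rfl | h
  · simp only [addEdge_self, Pi.add_apply, Pi.single_eq_same, if_true, add_zero]
    exact sum_congr rfl fun i _ => by ring
  · have hterm (b : ι) : addEdge M c a c b * ((M *ᵥ W) b + M b a +
          ((if b = a then W c else 0) + if b = c then W a + 1 else 0) - addEdge M c a b c * W c) =
        M c b * ((M *ᵥ W) b - M b c * W c) + M c b * M b a +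
          ((if b = c then M c c * (W a + 1) else 0) +
            if b = a then (M *ᵥ W) a + M a a - M a c * W c else 0) := by
      rcases eq_or_ne b a with rfl | hba
      · simp [addEdge_apply, h, hdiag]
        ring
      · rcases eq_or_ne b c with rfl | hbc
        · simp [addEdge_apply, h, hba, hdiag]
        · simp [addEdge_apply, h, hba, hbc, hba.symm, hbc.symm]
          ring
    simp [h, h.symm, hterm, sum_add_distrib, Matrix.mul_apply, hdiag]
    ring

omit [DecidableEq ι] in
lemma trace_cube_add (A D : Matrix ι ι R) :
    ((A + D) * (A + D) * (A + D)).trace = (A * A * A).trace + 3 * (A * A * D).trace +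
      3 * (A * (D * D)).trace + (D * D * D).trace := by
  have hADA : (A * D * A).trace = (A * A * D).trace := Matrix.trace_mul_cycle A D A
  have hDAA : (D * A * A).trace = (A * A * D).trace := by
    rw [Matrix.trace_mul_cycle, hADA]
  have hDAD : (D * A * D).trace = (A * (D * D)).trace := by
    rw [Matrix.trace_mul_cycle, Matrix.trace_mul_comm]
  have hDDA : (D * D * A).trace = (A * (D * D)).trace := Matrix.trace_mul_comm _ _
  rw [show (A + D) * (A + D) * (A + D) = A * A * A + A * A * D + A * D * A + A * (D * D) +
      D * A * A + D * A * D + D * D * A + D * D * D by noncomm_ring]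
  simp only [Matrix.trace_add, hADA, hDAA, hDAD, hDDA]
  ring

lemma trace_cube_addEdge {M : Matrix ι ι R} (hM : M.IsSymm) (hdiag : ∀ i, M i i = 0) {c a : ι}
    (h : a ≠ c) :
    (addEdge M c a * addEdge M c a * addEdge M c a).trace =
      (M * M * M).trace + 6 * (M * M) c a := by
  have hsq : (Matrix.single a c (1 : R) + Matrix.single c a 1) *
      (Matrix.single a c 1 + Matrix.single c a 1) = Matrix.single a a 1 + Matrix.single c c 1 := by
    simp [add_mul, mul_add, h, h.symm, add_comm]
  have hMM : (M * M) a c = (M * M) c a := by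
    simpa [pow_two] using (hM.pow 2).apply c a
  rw [addEdge_of_ne M h, trace_cube_add, hsq]
  simp [mul_add, add_mul, Matrix.trace_add, Matrix.trace_mul_single, hdiag, hMM, h, h.symm,
    Matrix.trace_single_eq_of_ne]
  ring

lemma triangleCount_addEdge {M : Matrix ι ι ℝ} (hM : M.IsSymm) (hdiag : ∀ i, M i i = 0)
    (c a : ι) :
    triangleCount (addEdge M c a) = triangleCount M + if a = c then 0 else (M * M) c a := by
  rcases eq_or_ne a c with rfl | h
  · simp
  · rw [triangleCount, triangleCount, trace_cube_addEdge hM hdiag h, if_neg h]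
    ring

end AddEdge

/-! ### Preferential attachment steps -/

section WeightedMean

variable {ι : Type*} [Fintype ι]

/-- The mean of `F` with respect to the weights `X`, whose total is meant to be `L`. -/
noncomputable def weightedMean (X : ι → ℝ) (L : ℝ) (F : ι → ℝ) : ℝ :=
  (∑ a, X a * F a) / L

lemma weightedMean_add (X : ι → ℝ) (L : ℝ) (F G : ι → ℝ) :
    weightedMean X L (fun a => F a + G a) = weightedMean X L F + weightedMean X L G := by
  simp only [weightedMean, mul_add, sum_add_distrib, add_div]

lemma weightedMean_const_mul (X : ι → ℝ) (L r : ℝ) (F : ι → ℝ) :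
    weightedMean X L (fun a => r * F a) = r * weightedMean X L F := by
  simp only [weightedMean, mul_left_comm _ r, ← mul_sum, mul_div_assoc]

end WeightedMean

/-- The data of one attachment step. A new edge joins the current vertex `c` of a loopless
multigraph with adjacency matrix `M` to a vertex drawn with probability `X / L`. Vertex `i` has
received `Z i` edges so far, `w` is the weight of a vertex without received edges, bounded by
`w₀`, and `W = w + Z`. The attachment weight `X` agrees with `W` except at `c`, where it lags
behind by `g` because `c` is still incomplete, and at the vertices not yet present. -/
structure AttachmentStep {ι : Type*} [Fintype ι] (m w₀ g L : ℝ) (c : ι) (w Z W X : ι → ℝ)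
    (M : Matrix ι ι ℝ) : Prop where
  one_le : 1 ≤ m
  Z_nonneg : ∀ i, 0 ≤ Z i
  M_nonneg : ∀ i j, 0 ≤ M i j
  M_symm : M.IsSymm
  M_diag : ∀ i, M i i = 0
  M_le : ∀ i j, M i j ≤ m
  sum_row_le : ∑ j, M c j ≤ m
  Z_self_le : Z c ≤ m
  w_nonneg : ∀ i, 0 ≤ w i
  w_le : ∀ i, w i ≤ w₀
  W_eq : ∀ i, W i = w i + Z i
  L_pos : 0 < L
  X_nonneg : ∀ i, 0 ≤ X i
  sum_X : ∑ i, X i = L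
  sum_Z_le : ∑ i, Z i ≤ L
  X_self : X c = W c - g
  g_nonneg : 0 ≤ g
  g_le : g ≤ w₀
  X_eq_or : ∀ i, i ≠ c → X i = W i ∨ (X i = 0 ∧ Z i = 0 ∧ ∀ j, M i j = 0)

namespace AttachmentStep

variable {ι : Type*} [Fintype ι] {m w₀ g L : ℝ} {c : ι} {w Z W X : ι → ℝ} {M : Matrix ι ι ℝ}
  (h : AttachmentStep m w₀ g L c w Z W X M)
include h

lemma weightedMean_const (r : ℝ) : weightedMean X L (fun _ => r) = r := by
  rw [weightedMean, ← sum_mul, h.sum_X, mul_div_cancel_left₀ _ h.L_pos.ne']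

lemma weightedMean_mono {F G : ι → ℝ} (hFG : ∀ a, F a ≤ G a) :
    weightedMean X L F ≤ weightedMean X L G :=
  div_le_div_of_nonneg_right
    (sum_le_sum fun a _ => mul_le_mul_of_nonneg_left (hFG a) (h.X_nonneg a)) h.L_pos.le

lemma w₀_nonneg : 0 ≤ w₀ := h.g_nonneg.trans h.g_le

lemma W_nonneg (i : ι) : 0 ≤ W i := by
  rw [h.W_eq]
  exact add_nonneg (h.w_nonneg i) (h.Z_nonneg i)

lemma W_le (i : ι) : W i ≤ w₀ + Z i := by
  linarith [h.W_eq i, h.w_le i]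

lemma W_self_le : W c ≤ w₀ + m := by
  linarith [h.W_le c, h.Z_self_le]

lemma X_le_W (i : ι) : X i ≤ W i := by
  rcases eq_or_ne i c with rfl | hi
  · linarith [h.X_self, h.g_nonneg]
  · rcases h.X_eq_or i hi with hX | ⟨hX, -⟩
    · exact hX.le
    · exact hX ▸ h.W_nonneg i

lemma X_le (i : ι) : X i ≤ w₀ + Z i := (h.X_le_W i).trans (h.W_le i)

lemma X_mul_M {i : ι} (hi : i ≠ c) (j : ι) : X i * M i j = W i * M i j := by
  rcases h.X_eq_or i hi with hX | ⟨-, -, hM⟩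
  · rw [hX]
  · simp [hM j]

lemma mulVec_nonneg (i : ι) : 0 ≤ (M *ᵥ W) i :=
  sum_nonneg fun j _ => mul_nonneg (h.M_nonneg i j) (h.W_nonneg j)

lemma X_mul_mulVec {i : ι} (hi : i ≠ c) : X i * (M *ᵥ W) i = W i * (M *ᵥ W) i := by
  simp only [Matrix.mulVec, dotProduct, mul_sum, ← mul_assoc, h.X_mul_M hi]

lemma edgeWeight_nonneg : 0 ≤ edgeWeight M W :=
  sum_nonneg fun i _ => mul_nonneg (h.W_nonneg i) (h.mulVec_nonneg i)

lemma starWeight_nonneg : 0 ≤ starWeight M W :=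
  sum_nonneg fun i _ => mul_nonneg (h.W_nonneg i) (sq_nonneg _)

lemma mulVec_sub_nonneg (i : ι) : 0 ≤ (M *ᵥ W) i - M i c * W c :=
  sub_nonneg.mpr <| single_le_sum (f := fun j => M i j * W j)
    (fun j _ => mul_nonneg (h.M_nonneg i j) (h.W_nonneg j)) (mem_univ c)

lemma cherryWeight_nonneg : 0 ≤ cherryWeight M W c :=
  sum_nonneg fun i _ => mul_nonneg (h.M_nonneg c i) (h.mulVec_sub_nonneg i)

lemma triangleCount_nonneg : 0 ≤ triangleCount M := by
  refine div_nonneg (sum_nonneg fun a _ => ?_) (by norm_num)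
  simp only [Matrix.diag_apply, Matrix.mul_apply]
  exact sum_nonneg fun b _ => mul_nonneg
    (sum_nonneg fun d _ => mul_nonneg (h.M_nonneg _ _) (h.M_nonneg _ _)) (h.M_nonneg _ _)

lemma sq_apply_nonneg (a : ι) : 0 ≤ (M * M) c a := by
  rw [Matrix.mul_apply]
  exact sum_nonneg fun b _ => mul_nonneg (h.M_nonneg _ _) (h.M_nonneg _ _)

lemma sq_apply_le (a : ι) : (M * M) c a ≤ m ^ 2 := by
  calc (M * M) c a ≤ ∑ b, M c b * m := by
        rw [Matrix.mul_apply]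
        exact sum_le_sum fun b _ => mul_le_mul_of_nonneg_left (h.M_le _ _) (h.M_nonneg _ _)
    _ = (∑ b, M c b) * m := by rw [sum_mul]
    _ ≤ m * m := mul_le_mul_of_nonneg_right h.sum_row_le (by linarith [h.one_le])
    _ = m ^ 2 := by ring

lemma weightedMean_mulVec_sq_le :
    weightedMean X L (fun a => (M *ᵥ W) a ^ 2) ≤ starWeight M W / L :=
  div_le_div_of_nonneg_right
    (sum_le_sum fun i _ => mul_le_mul_of_nonneg_right (h.X_le_W i) (sq_nonneg _)) h.L_pos.le

lemma X_mul_one_add_W_sq_le (i : ι) : X i * (1 + W i) ^ 2 ≤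
    2 * (1 + w₀) ^ 2 * X i + 2 * w₀ * Z i + 2 * (1 + w₀) * Z i ^ 3 := by
  have hw₀ := h.w₀_nonneg
  have hZ := h.Z_nonneg i
  have hsq : (1 + W i) ^ 2 ≤ 2 * (1 + w₀) ^ 2 + 2 * Z i ^ 2 := by
    nlinarith [sq_nonneg (1 + w₀ - Z i), h.W_le i, h.W_nonneg i]
  have hXZ : X i * Z i ^ 2 ≤ (w₀ + Z i) * Z i ^ 2 :=
    mul_le_mul_of_nonneg_right (h.X_le i) (sq_nonneg _)
  have hZ23 : Z i ^ 2 ≤ Z i + Z i ^ 3 := by nlinarith [mul_nonneg hZ (sq_nonneg (Z i - 1))]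
  nlinarith [mul_le_mul_of_nonneg_left hsq (h.X_nonneg i), mul_le_mul_of_nonneg_left hZ23 hw₀]

lemma weightedMean_one_add_W_sq_le : weightedMean X L (fun a => (1 + W a) ^ 2) ≤
    (2 * (1 + w₀) ^ 2 + 2 * w₀) * (1 + (∑ i, Z i ^ 3) / L) := by
  have hw₀ := h.w₀_nonneg
  have hL := h.L_pos
  have hT : 0 ≤ ∑ i, Z i ^ 3 := sum_nonneg fun i _ => pow_nonneg (h.Z_nonneg i) 3
  rw [weightedMean, div_le_iff₀ hL]
  calc ∑ i, X i * (1 + W i) ^ 2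
      ≤ ∑ i, (2 * (1 + w₀) ^ 2 * X i + 2 * w₀ * Z i + 2 * (1 + w₀) * Z i ^ 3) :=
        sum_le_sum fun i _ => h.X_mul_one_add_W_sq_le i
    _ = 2 * (1 + w₀) ^ 2 * L + 2 * w₀ * (∑ i, Z i) + 2 * (1 + w₀) * ∑ i, Z i ^ 3 := by
        simp only [sum_add_distrib, ← mul_sum, h.sum_X]
    _ ≤ (2 * (1 + w₀) ^ 2 + 2 * w₀) * (L + ∑ i, Z i ^ 3) := by
        nlinarith [mul_le_mul_of_nonneg_left h.sum_Z_le hw₀,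
          mul_nonneg (show 0 ≤ w₀ + w₀ ^ 2 + w₀ by positivity) hT]
    _ = (2 * (1 + w₀) ^ 2 + 2 * w₀) * (1 + (∑ i, Z i ^ 3) / L) * L := by field_simp

lemma X_mul_sq_add_le (i : ι) : X i * (3 * Z i ^ 2 + 3 * Z i + 1) ≤
    X i + 4 * Z i ^ 3 + ((3 * w₀ + 3) ^ 2 / 4 + 3 * w₀) * Z i := by
  have hZ := h.Z_nonneg i
  have hXZ : X i * (3 * Z i ^ 2 + 3 * Z i) ≤ (w₀ + Z i) * (3 * Z i ^ 2 + 3 * Z i) :=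
    mul_le_mul_of_nonneg_right (h.X_le i) (by positivity)
  nlinarith [mul_nonneg hZ (sq_nonneg (Z i - (3 * w₀ + 3) / 2))]

lemma weightedMean_sq_add_le : weightedMean X L (fun a => 3 * Z a ^ 2 + 3 * Z a + 1) ≤
    4 / L * (∑ i, Z i ^ 3) + ((3 * w₀ + 3) ^ 2 / 4 + 3 * w₀ + 1) := by
  have hL := h.L_pos
  have hw₀ := h.w₀_nonneg
  rw [weightedMean, div_le_iff₀ hL]
  calc ∑ i, X i * (3 * Z i ^ 2 + 3 * Z i + 1)
      ≤ ∑ i, (X i + 4 * Z i ^ 3 + ((3 * w₀ + 3) ^ 2 / 4 + 3 * w₀) * Z i) :=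
        sum_le_sum fun i _ => h.X_mul_sq_add_le i
    _ = L + 4 * (∑ i, Z i ^ 3) + ((3 * w₀ + 3) ^ 2 / 4 + 3 * w₀) * ∑ i, Z i := by
        simp only [sum_add_distrib, ← mul_sum, h.sum_X]
    _ ≤ L + 4 * (∑ i, Z i ^ 3) + ((3 * w₀ + 3) ^ 2 / 4 + 3 * w₀) * L := by
        gcongr
        exact h.sum_Z_le
    _ = (4 / L * (∑ i, Z i ^ 3) + ((3 * w₀ + 3) ^ 2 / 4 + 3 * w₀ + 1)) * L := by
        field_simp
        ring

lemma weightedMean_sq_recenter_le (G δ : ℝ) :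
    weightedMean X L (fun a => (G + (2 * W a + 1 - δ)) ^ 2) ≤
      G ^ 2 + 2 * G * (2 * weightedMean X L W + 1 - δ) +
        (8 * weightedMean X L (fun a => (1 + W a) ^ 2) + 2 * (1 + δ) ^ 2) := by
  have hpt (a : ι) : (G + (2 * W a + 1 - δ)) ^ 2 ≤
      (G ^ 2 + 2 * G * (1 - δ) + 2 * (1 + δ) ^ 2) + 4 * G * W a + 8 * (1 + W a) ^ 2 := by
    nlinarith [sq_nonneg (2 * (1 + W a) + (1 + δ))]
  have hmean := h.weightedMean_mono hpt
  rw [weightedMean_add, weightedMean_add, h.weightedMean_const, weightedMean_const_mul,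
    weightedMean_const_mul] at hmean
  linarith

lemma weightedMean_W : weightedMean X L W =
    ((∑ i, (W i ^ 2 - w i ^ 2)) - g * Z c + ∑ i, w i * (X i - Z i)) / L := by
  classical
  have hpt (i : ι) : X i * W i =
      (W i ^ 2 - w i ^ 2) + w i * (X i - Z i) - if i = c then g * Z i else 0 := by
    rcases eq_or_ne i c with rfl | hi
    · rw [if_pos rfl, h.X_self, h.W_eq]
      ring
    · rw [if_neg hi]
      rcases h.X_eq_or i hi with hX | ⟨hX, hZ, -⟩
      · rw [hX, h.W_eq]
        ring
      · rw [hX, h.W_eq, hZ]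
        ring
  rw [weightedMean]
  simp only [hpt, sum_sub_distrib, sum_add_distrib, sum_ite_eq', mem_univ, if_true]
  ring

lemma weightedMean_mulVec :
    weightedMean X L (M *ᵥ W) = (edgeWeight M W - g * (M *ᵥ W) c) / L := by
  classical
  have hpt (i : ι) : X i * (M *ᵥ W) i =
      W i * (M *ᵥ W) i - if i = c then g * (M *ᵥ W) i else 0 := by
    rcases eq_or_ne i c with rfl | hi
    · rw [if_pos rfl, h.X_self]
      ring
    · rw [if_neg hi, h.X_mul_mulVec hi, sub_zero]
  simp only [weightedMean, hpt, sum_sub_distrib, sum_ite_eq', mem_univ, if_true]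
  rfl

lemma weightedMean_mulVec_le : weightedMean X L (M *ᵥ W) ≤ edgeWeight M W / L := by
  rw [h.weightedMean_mulVec]
  exact div_le_div_of_nonneg_right
    (sub_le_self _ (mul_nonneg h.g_nonneg (h.mulVec_nonneg c))) h.L_pos.le

variable [DecidableEq ι]

lemma weightedMean_mulVec_sub :
    weightedMean X L (fun a => if a = c then 0 else (M *ᵥ W) a - M a c * W c) =
      (edgeWeight M W - 2 * W c * (M *ᵥ W) c) / L := by
  have hpt (i : ι) : X i * (if i = c then 0 else (M *ᵥ W) i - M i c * W c) =
      W i * (M *ᵥ W) i - (if i = c then W i * (M *ᵥ W) i else 0) - M c i * W i * W c := by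
    rcases eq_or_ne i c with rfl | hi
    · simp [h.M_diag]
    · rw [if_neg hi, if_neg hi, h.M_symm.apply i c]
      linear_combination h.X_mul_mulVec hi - W c * h.X_mul_M hi c
  simp only [weightedMean, hpt, sum_sub_distrib, sum_ite_eq', mem_univ, if_true, ← sum_mul]
  rw [show ∑ i, M c i * W i = (M *ᵥ W) c from rfl]
  unfold edgeWeight dotProduct
  ring

lemma weightedMean_sq_apply :
    weightedMean X L (fun a => if a = c then 0 else (M * M) c a) = cherryWeight M W c / L := by
  have hpt (i : ι) : X i * (if i = c then 0 else (M * M) c i) =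
      (∑ b, M c b * (M b i * W i)) - if i = c then ∑ b, M c b * (M b i * W i) else 0 := by
    rcases eq_or_ne i c with rfl | hi
    · simp
    · rw [if_neg hi, if_neg hi, Matrix.mul_apply, mul_sum, sub_zero]
      refine sum_congr rfl fun b _ => ?_
      rw [← h.M_symm.apply b i]
      linear_combination M c b * h.X_mul_M hi b
  simp only [weightedMean, hpt, sum_sub_distrib, sum_ite_eq', mem_univ, if_true]
  rw [sum_comm]
  simp only [cherryWeight, mul_sub, sum_sub_distrib, Matrix.mulVec, dotProduct, mul_sum]

lemma weightedMean_sum_cube_le :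
    weightedMean X L (fun a => ∑ i, (Z + Pi.single a 1 : ι → ℝ) i ^ 3) ≤
      (1 + 4 / L) * (∑ i, Z i ^ 3) + ((3 * w₀ + 3) ^ 2 / 4 + 3 * w₀ + 1) := by
  have hstep (a : ι) : ∑ i, (Z + Pi.single a 1 : ι → ℝ) i ^ 3 =
      (∑ i, Z i ^ 3) + (3 * Z a ^ 2 + 3 * Z a + 1) := by
    have hpt (i : ι) : (Z + Pi.single a 1 : ι → ℝ) i ^ 3 =
        Z i ^ 3 + if i = a then 3 * Z i ^ 2 + 3 * Z i + 1 else 0 := by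
      rcases eq_or_ne i a with rfl | hi
      · simp only [Pi.add_apply, Pi.single_eq_same, if_true]
        ring
      · simp [hi]
    simp only [hpt, sum_add_distrib, sum_ite_eq', mem_univ, if_true]
  simp only [hstep]
  rw [weightedMean_add, h.weightedMean_const]
  linarith [h.weightedMean_sq_add_le]

lemma weightedMean_triangleCount : weightedMean X L (fun a => triangleCount (addEdge M c a)) =
    triangleCount M + cherryWeight M W c / L := by
  simp only [triangleCount_addEdge h.M_symm h.M_diag]
  rw [weightedMean_add, h.weightedMean_const, h.weightedMean_sq_apply]

lemma weightedMean_cherryWeight :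
    weightedMean X L (fun a => cherryWeight (addEdge M c a) (W + Pi.single a 1) c) =
      (1 + 1 / L) * cherryWeight M W c + (edgeWeight M W - 2 * W c * (M *ᵥ W) c) / L := by
  simp only [cherryWeight_addEdge h.M_diag]
  have hsplit : (fun a => if a = c then 0 else (M * M) c a + ((M *ᵥ W) a - M a c * W c)) =
      fun a => (if a = c then 0 else (M * M) c a) +
        if a = c then 0 else (M *ᵥ W) a - M a c * W c := by
    funext a
    split_ifs <;> simp
  rw [weightedMean_add, h.weightedMean_const, hsplit, weightedMean_add, h.weightedMean_sq_apply,
    h.weightedMean_mulVec_sub]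
  ring

lemma weightedMean_two_mul_W :
    weightedMean X L (fun a => if a = c then 0 else 2 * (W a + 1) * W c) =
      2 * W c * (weightedMean X L W + 1) - 2 * W c * (X c * (W c + 1)) / L := by
  have hpt (a : ι) : X a * (if a = c then 0 else 2 * (W a + 1) * W c) =
      2 * W c * (X a * W a + X a) - if a = c then 2 * W c * (X a * (W a + 1)) else 0 := by
    split_ifs <;> ring
  simp only [weightedMean, hpt, sum_sub_distrib, ← mul_sum, sum_add_distrib, h.sum_X,
    sum_ite_eq', mem_univ, if_true]
  field_simp [h.L_pos.ne']

lemma weightedMean_edgeWeight :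
    weightedMean X L (fun a => edgeWeight (addEdge M c a) (W + Pi.single a 1)) =
      (1 + 2 / L) * edgeWeight M W - 2 * g * (M *ᵥ W) c / L +
        2 * W c * (weightedMean X L W + 1) - 2 * W c * (X c * (W c + 1)) / L := by
  simp only [edgeWeight_addEdge h.M_symm h.M_diag]
  rw [weightedMean_add, weightedMean_add, h.weightedMean_const, weightedMean_const_mul,
    h.weightedMean_mulVec, h.weightedMean_two_mul_W]
  ring

lemma weightedMean_mulVec_self_sq_le :
    weightedMean X L (fun a => (addEdge M c a *ᵥ (W + Pi.single a 1)) c ^ 2) ≤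
      2 * (M *ᵥ W) c ^ 2 + 2 * (m + 1) ^ 2 * weightedMean X L (fun a => (1 + W a) ^ 2) := by
  rw [← h.weightedMean_const (2 * (M *ᵥ W) c ^ 2), ← weightedMean_const_mul, ← weightedMean_add]
  refine h.weightedMean_mono fun a => ?_
  obtain ⟨u, hu, hu₀, hu₁⟩ : ∃ u, (addEdge M c a *ᵥ (W + Pi.single a 1)) c = (M *ᵥ W) c + u ∧
      0 ≤ u ∧ u ≤ (m + 1) * (1 + W a) := by
    have hM₀ := h.M_nonneg c a
    have hM₁ := h.M_le c a
    have hW := h.W_nonneg a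
    have hm := h.one_le
    refine ⟨_, by rw [mulVec_addEdge_apply, add_assoc], ?_, ?_⟩ <;>
    · rcases eq_or_ne a c with rfl | hac
      · simp only [if_true]
        nlinarith
      · simp only [if_neg hac, if_neg hac.symm, if_true]
        nlinarith
  rw [hu]
  nlinarith [sq_nonneg ((M *ᵥ W) c - u), pow_le_pow_left₀ hu₀ hu₁ 2]

lemma edgeWeight_addEdge_sq_le (a : ι) :
    edgeWeight (addEdge M c a) (W + Pi.single a 1) ^ 2 ≤
      edgeWeight M W ^ 2 + 2 * edgeWeight M W * (2 * (M *ᵥ W) a + 2 * (w₀ + m) * (W a + 1)) +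
        (8 * (M *ᵥ W) a ^ 2 + 8 * (w₀ + m) ^ 2 * (1 + W a) ^ 2) := by
  have hy := h.mulVec_nonneg a
  have hW := h.W_nonneg a
  have hc := h.W_nonneg c
  have hle := h.W_self_le
  obtain ⟨u, hu, hu₀, hu₁⟩ : ∃ u, edgeWeight (addEdge M c a) (W + Pi.single a 1) =
      edgeWeight M W + u ∧ 0 ≤ u ∧ u ≤ 2 * (M *ᵥ W) a + 2 * (w₀ + m) * (W a + 1) := by
    refine ⟨_, by rw [edgeWeight_addEdge h.M_symm h.M_diag, add_assoc], ?_, ?_⟩ <;> split_ifs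
    · positivity
    · positivity
    · nlinarith
    · nlinarith
  rw [hu]
  nlinarith [sq_nonneg (2 * (M *ᵥ W) a - 2 * (w₀ + m) * (W a + 1)), pow_le_pow_left₀ hu₀ hu₁ 2,
    mul_le_mul_of_nonneg_left hu₁ h.edgeWeight_nonneg]

lemma weightedMean_edgeWeight_sq_le {β : ℝ} (hβ : 0 < β) :
    weightedMean X L (fun a => edgeWeight (addEdge M c a) (W + Pi.single a 1) ^ 2) ≤
      (1 + (4 + β) / L) * edgeWeight M W ^ 2 +
        4 * (w₀ + m) ^ 2 / β * (L * (weightedMean X L W + 1) ^ 2) + 8 * (starWeight M W / L) +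
        8 * (w₀ + m) ^ 2 * weightedMean X L (fun a => (1 + W a) ^ 2) := by
  have hL := h.L_pos
  have hP := h.edgeWeight_nonneg
  have hmean := h.weightedMean_mono h.edgeWeight_addEdge_sq_le
  rw [weightedMean_add, weightedMean_add, h.weightedMean_const, weightedMean_const_mul,
    weightedMean_add, weightedMean_add, weightedMean_const_mul, weightedMean_const_mul,
    weightedMean_const_mul, weightedMean_const_mul, weightedMean_add, h.weightedMean_const]
    at hmean
  set A := weightedMean X L W + 1
  have hcross : 2 * edgeWeight M W * (2 * (w₀ + m) * A) ≤
      β / L * edgeWeight M W ^ 2 + 4 * (w₀ + m) ^ 2 / β * (L * A ^ 2) := by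
    have hsq : 0 ≤ (β * edgeWeight M W - 2 * (w₀ + m) * (L * A)) ^ 2 / (β * L) := by positivity
    have hexpand : (β * edgeWeight M W - 2 * (w₀ + m) * (L * A)) ^ 2 / (β * L) =
        β / L * edgeWeight M W ^ 2 + 4 * (w₀ + m) ^ 2 / β * (L * A ^ 2) -
          2 * edgeWeight M W * (2 * (w₀ + m) * A) := by
      field_simp
      ring
    linarith
  have hdrift : 2 * edgeWeight M W * (2 * weightedMean X L (M *ᵥ W)) ≤
      4 / L * edgeWeight M W ^ 2 := by
    calc 2 * edgeWeight M W * (2 * weightedMean X L (M *ᵥ W))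
        ≤ 2 * edgeWeight M W * (2 * (edgeWeight M W / L)) := by
          gcongr
          exact h.weightedMean_mulVec_le
      _ = 4 / L * edgeWeight M W ^ 2 := by ring
  have hsplit : (1 + (4 + β) / L) * edgeWeight M W ^ 2 =
      edgeWeight M W ^ 2 + 4 / L * edgeWeight M W ^ 2 + β / L * edgeWeight M W ^ 2 := by ring
  linarith [h.weightedMean_mulVec_sq_le]

lemma cherryWeight_addEdge_sq_le (a : ι) :
    cherryWeight (addEdge M c a) (W + Pi.single a 1) c ^ 2 ≤
      2 * cherryWeight M W c ^ 2 + 4 * m ^ 4 + 4 * (M *ᵥ W) a ^ 2 := by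
  obtain ⟨u, hu, hu₀, hu₁⟩ : ∃ u, cherryWeight (addEdge M c a) (W + Pi.single a 1) c =
      cherryWeight M W c + u ∧ 0 ≤ u ∧ u ≤ m ^ 2 + (M *ᵥ W) a := by
    refine ⟨_, cherryWeight_addEdge h.M_diag W c a, ?_, ?_⟩ <;> split_ifs
    · rfl
    · exact add_nonneg (h.sq_apply_nonneg a) (h.mulVec_sub_nonneg a)
    · exact add_nonneg (sq_nonneg m) (h.mulVec_nonneg a)
    · linarith [h.sq_apply_le a, mul_nonneg (h.M_nonneg a c) (h.W_nonneg c)]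
  rw [hu]
  nlinarith [sq_nonneg (cherryWeight M W c - u), sq_nonneg (m ^ 2 - (M *ᵥ W) a),
    pow_le_pow_left₀ hu₀ hu₁ 2]

lemma weightedMean_cherryWeight_sq_le :
    weightedMean X L (fun a => cherryWeight (addEdge M c a) (W + Pi.single a 1) c ^ 2) ≤
      2 * cherryWeight M W c ^ 2 + 4 * m ^ 4 + 4 * (starWeight M W / L) := by
  have hmean := h.weightedMean_mono h.cherryWeight_addEdge_sq_le
  rw [weightedMean_add, h.weightedMean_const, weightedMean_const_mul] at hmean
  linarith [h.weightedMean_mulVec_sq_le]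

lemma weightedMean_triangleCount_sq_le :
    weightedMean X L (fun a => triangleCount (addEdge M c a) ^ 2) ≤
      triangleCount M ^ 2 + 2 * (triangleCount M * cherryWeight M W c) / L +
        m ^ 2 * (cherryWeight M W c / L) := by
  have hpt (a : ι) : triangleCount (addEdge M c a) ^ 2 ≤ triangleCount M ^ 2 +
      (2 * triangleCount M + m ^ 2) * (if a = c then 0 else (M * M) c a) := by
    rw [triangleCount_addEdge h.M_symm h.M_diag]
    split_ifs
    · simp
    · nlinarith [h.sq_apply_nonneg a, h.sq_apply_le a]
  refine (h.weightedMean_mono hpt).trans_eq ?_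
  rw [weightedMean_add, weightedMean_const_mul, h.weightedMean_const, h.weightedMean_sq_apply]
  ring

lemma weightedMean_triangleCount_mul_cherryWeight_le :
    weightedMean X L (fun a => triangleCount (addEdge M c a) *
        cherryWeight (addEdge M c a) (W + Pi.single a 1) c) ≤
      (1 + 1 / L) * (triangleCount M * cherryWeight M W c) +
        triangleCount M * edgeWeight M W / L + cherryWeight M W c ^ 2 / L +
        m ^ 2 * ((cherryWeight M W c + edgeWeight M W) / L) := by
  have hpt (a : ι) : triangleCount (addEdge M c a) *
      cherryWeight (addEdge M c a) (W + Pi.single a 1) c ≤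
        triangleCount M * cherryWeight M W c +
          ((triangleCount M + m ^ 2 + cherryWeight M W c) *
              (if a = c then 0 else (M * M) c a) +
            (triangleCount M + m ^ 2) *
              (if a = c then 0 else (M *ᵥ W) a - M a c * W c)) := by
    rw [triangleCount_addEdge h.M_symm h.M_diag, cherryWeight_addEdge h.M_diag]
    split_ifs
    · simp
    · have hd := h.sq_apply_nonneg a
      nlinarith [mul_le_mul_of_nonneg_right (h.sq_apply_le a)
        (add_nonneg hd (h.mulVec_sub_nonneg a))]
  have hmean := h.weightedMean_mono hpt
  rw [weightedMean_add, weightedMean_add, h.weightedMean_const, weightedMean_const_mul,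
    weightedMean_const_mul, h.weightedMean_sq_apply, h.weightedMean_mulVec_sub] at hmean
  have hdrop : (edgeWeight M W - 2 * W c * (M *ᵥ W) c) / L ≤ edgeWeight M W / L :=
    div_le_div_of_nonneg_right
      (by nlinarith [mul_nonneg (h.W_nonneg c) (h.mulVec_nonneg c)]) h.L_pos.le
  have hcoef : 0 ≤ triangleCount M + m ^ 2 := add_nonneg h.triangleCount_nonneg (sq_nonneg m)
  calc _ ≤ _ := hmean
    _ ≤ triangleCount M * cherryWeight M W c +
        ((triangleCount M + m ^ 2 + cherryWeight M W c) * (cherryWeight M W c / L) +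
          (triangleCount M + m ^ 2) * (edgeWeight M W / L)) := by gcongr
    _ = _ := by ring

lemma mulVec_addEdge_sq_le (a i : ι) :
    (addEdge M c a *ᵥ (W + Pi.single a 1)) i ^ 2 ≤
      (M *ᵥ W) i ^ 2 + (2 * (M *ᵥ W) i + m) * M i a +
        (if i = a then 2 * (w₀ + m) * (M *ᵥ W) a + (w₀ + m) ^ 2 else 0) +
        if i = c then (M *ᵥ W) c ^ 2 + 2 * ((m + 1) * (1 + W a)) ^ 2 else 0 := by
  have hy := h.mulVec_nonneg i
  have hMle := h.M_le i a
  have hM := h.M_nonneg i a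
  have hW := h.W_nonneg a
  have hWc := h.W_nonneg c
  have hle := h.W_self_le
  have hm := h.one_le
  rw [mulVec_addEdge_apply]
  rcases eq_or_ne a c with rfl | hac
  · simp only [if_true, add_zero]
    split_ifs with hi
    · subst hi
      rw [h.M_diag]
      nlinarith [mul_nonneg (add_nonneg h.w₀_nonneg (zero_le_one.trans hm)) hy,
        sq_nonneg ((m + 1) * (1 + W i)), sq_nonneg (w₀ + m), sq_nonneg ((M *ᵥ W) i)]
    · nlinarith
  · rw [if_neg hac]
    rcases eq_or_ne i a with rfl | hia
    · simp only [if_true, if_neg hac, h.M_diag]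
      nlinarith
    · rcases eq_or_ne i c with rfl | hic
      · simp only [if_neg hia, if_true]
        have hsq : (M i a + (W a + 1)) ^ 2 ≤ ((m + 1) * (1 + W a)) ^ 2 :=
          pow_le_pow_left₀ (by positivity) (by nlinarith) 2
        nlinarith [sq_nonneg ((M *ᵥ W) i - (M i a + (W a + 1))), mul_nonneg hy hM]
      · simp only [if_neg hia, if_neg hic]
        nlinarith

lemma sum_W_mul_mulVec_addEdge_sq_le (a : ι) :
    ∑ i, W i * (addEdge M c a *ᵥ (W + Pi.single a 1)) i ^ 2 ≤
      starWeight M W + 2 * (∑ i, W i * ((M *ᵥ W) i * M i a)) + m * (M *ᵥ W) a +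
        W a * (2 * (w₀ + m) * (M *ᵥ W) a + (w₀ + m) ^ 2) +
        W c * ((M *ᵥ W) c ^ 2 + 2 * ((m + 1) * (1 + W a)) ^ 2) := by
  have hcol : ∑ i, W i * M i a = (M *ᵥ W) a := dotProduct_col h.M_symm W a
  calc ∑ i, W i * (addEdge M c a *ᵥ (W + Pi.single a 1)) i ^ 2
      ≤ ∑ i, W i * ((M *ᵥ W) i ^ 2 + (2 * (M *ᵥ W) i + m) * M i a +
          (if i = a then 2 * (w₀ + m) * (M *ᵥ W) a + (w₀ + m) ^ 2 else 0) +
          if i = c then (M *ᵥ W) c ^ 2 + 2 * ((m + 1) * (1 + W a)) ^ 2 else 0) :=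
        sum_le_sum fun i _ => mul_le_mul_of_nonneg_left (h.mulVec_addEdge_sq_le a i) (h.W_nonneg i)
    _ = ∑ i, (W i * (M *ᵥ W) i ^ 2 + 2 * (W i * ((M *ᵥ W) i * M i a)) + m * (W i * M i a) +
          (if i = a then W i * (2 * (w₀ + m) * (M *ᵥ W) a + (w₀ + m) ^ 2) else 0) +
          if i = c then W i * ((M *ᵥ W) c ^ 2 + 2 * ((m + 1) * (1 + W a)) ^ 2) else 0) :=
        sum_congr rfl fun i _ => by split_ifs <;> ring
    _ = _ := by
        simp only [sum_add_distrib, ← mul_sum, sum_ite_eq', mem_univ, if_true, hcol]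
        rfl

lemma starWeight_addEdge_le (a : ι) : starWeight (addEdge M c a) (W + Pi.single a 1) ≤
    (starWeight M W + (w₀ + m + 1) * (M *ᵥ W) c ^ 2) +
      (2 * (∑ i, W i * ((M *ᵥ W) i * M i a)) + (2 * (M *ᵥ W) a ^ 2 +
        ((m + 2 * (w₀ + m)) ^ 2 / 4 + (w₀ + m) ^ 2 + 2 * (w₀ + m + 1) * (m + 1) ^ 2) *
          (1 + W a) ^ 2)) := by
  have hm := h.one_le
  have hy := h.mulVec_nonneg a
  have hW := h.W_nonneg a
  have hsplit : starWeight (addEdge M c a) (W + Pi.single a 1) =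
      (∑ i, W i * (addEdge M c a *ᵥ (W + Pi.single a 1)) i ^ 2) +
        (addEdge M c a *ᵥ (W + Pi.single a 1)) a ^ 2 := by
    simp [starWeight, add_mul, sum_add_distrib, Pi.single_apply]
  have hsum := h.sum_W_mul_mulVec_addEdge_sq_le a
  have hself : (addEdge M c a *ᵥ (W + Pi.single a 1)) a ^ 2 ≤ (M *ᵥ W) a ^ 2 +
      (2 * (w₀ + m) * (M *ᵥ W) a + (w₀ + m) ^ 2) +
      ((M *ᵥ W) c ^ 2 + 2 * ((m + 1) * (1 + W a)) ^ 2) := by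
    refine (h.mulVec_addEdge_sq_le a a).trans ?_
    rw [h.M_diag, mul_zero, add_zero, if_pos rfl]
    gcongr
    split_ifs
    · exact le_rfl
    · positivity
  have hcur : W c * ((M *ᵥ W) c ^ 2 + 2 * ((m + 1) * (1 + W a)) ^ 2) ≤
      (w₀ + m) * ((M *ᵥ W) c ^ 2 + 2 * ((m + 1) * (1 + W a)) ^ 2) :=
    mul_le_mul_of_nonneg_right h.W_self_le (by positivity)
  have hcross : (m + 2 * (w₀ + m) * (1 + W a)) * (M *ᵥ W) a ≤
      (M *ᵥ W) a ^ 2 + (m + 2 * (w₀ + m)) ^ 2 / 4 * (1 + W a) ^ 2 := by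
    have hle : (m + 2 * (w₀ + m) * (1 + W a)) * (M *ᵥ W) a ≤
        (m + 2 * (w₀ + m)) * (1 + W a) * (M *ᵥ W) a :=
      mul_le_mul_of_nonneg_right (by nlinarith) hy
    nlinarith [sq_nonneg ((M *ᵥ W) a - (m + 2 * (w₀ + m)) * (1 + W a) / 2)]
  have hlin : (w₀ + m) ^ 2 * (1 + W a) ≤ (w₀ + m) ^ 2 * (1 + W a) ^ 2 :=
    mul_le_mul_of_nonneg_left (by nlinarith) (sq_nonneg _)
  rw [hsplit]
  linarith

omit [DecidableEq ι] in
lemma weightedMean_sum_W_mul_mulVec_mul_le :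
    weightedMean X L (fun a => ∑ i, W i * ((M *ᵥ W) i * M i a)) ≤ starWeight M W / L := by
  refine div_le_div_of_nonneg_right ?_ h.L_pos.le
  calc ∑ a, X a * ∑ i, W i * ((M *ᵥ W) i * M i a)
      ≤ ∑ a, W a * ∑ i, W i * ((M *ᵥ W) i * M i a) :=
        sum_le_sum fun a _ => mul_le_mul_of_nonneg_right (h.X_le_W a) <| sum_nonneg fun i _ =>
          mul_nonneg (h.W_nonneg i) (mul_nonneg (h.mulVec_nonneg i) (h.M_nonneg i a))
    _ = ∑ i, W i * (M *ᵥ W) i * ∑ a, M i a * W a := by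
        simp only [mul_sum]
        rw [sum_comm]
        exact sum_congr rfl fun i _ => sum_congr rfl fun a _ => by ring
    _ = starWeight M W := sum_congr rfl fun i _ => by
        rw [pow_two, ← mul_assoc]
        rfl

lemma weightedMean_starWeight_le :
    weightedMean X L (fun a => starWeight (addEdge M c a) (W + Pi.single a 1)) ≤
      (1 + 4 / L) * starWeight M W +
        ((m + 2 * (w₀ + m)) ^ 2 / 4 + (w₀ + m) ^ 2 + 2 * (w₀ + m + 1) * (m + 1) ^ 2) *
          weightedMean X L (fun a => (1 + W a) ^ 2) + (w₀ + m + 1) * (M *ᵥ W) c ^ 2 := by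
  have hmean := h.weightedMean_mono h.starWeight_addEdge_le
  rw [weightedMean_add, h.weightedMean_const, weightedMean_add, weightedMean_const_mul,
    weightedMean_add, weightedMean_const_mul, weightedMean_const_mul] at hmean
  have hsplit : (1 + 4 / L) * starWeight M W =
      starWeight M W + 2 * (starWeight M W / L) + 2 * (starWeight M W / L) := by ring
  linarith [h.weightedMean_sum_W_mul_mulVec_mul_le, h.weightedMean_mulVec_sq_le]

lemma abs_weightedMean_edgeWeight_sub_le (μ : ℝ) :
    |weightedMean X L (fun a => edgeWeight (addEdge M c a) (W + Pi.single a 1)) -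
        ((1 + 2 / L) * edgeWeight M W + 2 * w₀ * (μ + 1))| ≤
      2 * w₀ * ((M *ᵥ W) c / L) + 2 * w₀ * |weightedMean X L W - μ| +
        2 * (|W c - w₀| * |weightedMean X L W + 1|) +
        2 * (w₀ + m) * ((w₀ + m) * (w₀ + m + 1)) * (1 / L) := by
  have hL := h.L_pos
  have := h.w₀_nonneg
  have : 0 ≤ m := zero_le_one.trans h.one_le
  have := h.W_nonneg c
  have := h.X_nonneg c
  have hWle := h.W_self_le
  have hXle := (h.X_le_W c).trans hWle
  have hyL : 0 ≤ (M *ᵥ W) c / L := div_nonneg (h.mulVec_nonneg c) hL.le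
  have hterms : weightedMean X L (fun a => edgeWeight (addEdge M c a) (W + Pi.single a 1)) -
      ((1 + 2 / L) * edgeWeight M W + 2 * w₀ * (μ + 1)) =
        -(2 * g * ((M *ᵥ W) c / L)) + 2 * w₀ * (weightedMean X L W - μ) +
          2 * ((W c - w₀) * (weightedMean X L W + 1)) -
          2 * W c * (X c * (W c + 1)) * (1 / L) := by
    rw [h.weightedMean_edgeWeight]
    ring
  rw [hterms]
  refine (abs_sub _ _).trans (add_le_add ((abs_add_three _ _ _).trans
    (add_le_add (add_le_add ?_ ?_) ?_)) ?_)
  · rw [abs_neg, abs_of_nonneg (mul_nonneg (mul_nonneg zero_le_two h.g_nonneg) hyL)]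
    gcongr
    exact h.g_le
  · rw [abs_mul, abs_of_nonneg (by positivity)]
  · rw [abs_mul, abs_mul, abs_two]
  · rw [abs_of_nonneg (by positivity)]
    gcongr

end AttachmentStep

/-! ### Linear recursions and sums -/

section TotalWeight

/-- The normalising constant `(2 + β) t - 2` of the attachment step at time `t`: the sum over all
tree vertices present at time `t` of degree plus `β`. -/
def totalWeight (β : ℝ) (t : ℕ) : ℝ := (2 + β) * t - 2

variable {β : ℝ}

lemma totalWeight_pos (hβ : 0 < β) {t : ℕ} (ht : 1 ≤ t) : 0 < totalWeight β t := by
  have : (1 : ℝ) ≤ t := by exact_mod_cast ht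
  unfold totalWeight
  nlinarith

lemma min_mul_le_totalWeight (hβ : 0 < β) {t : ℕ} (ht : 1 ≤ t) :
    min 1 β * t ≤ totalWeight β t := by
  have hmin₁ : min 1 β ≤ 1 := min_le_left _ _
  have hminβ : min 1 β ≤ β := min_le_right _ _
  unfold totalWeight
  rcases ht.eq_or_lt with rfl | ht
  · push_cast
    linarith
  · have : (2 : ℝ) ≤ t := by exact_mod_cast ht
    nlinarith

lemma totalWeight_le (t : ℕ) : totalWeight β t ≤ (2 + β) * t := by
  unfold totalWeight
  linarith

lemma div_totalWeight_le (hβ : 0 < β) {t : ℕ} (ht : 1 ≤ t) {x : ℝ} (hx : 0 ≤ x) :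
    x / totalWeight β t ≤ (min 1 β)⁻¹ * (x / t) := by
  have : 0 < min 1 β := lt_min one_pos hβ
  have : (0 : ℝ) < t := by exact_mod_cast ht
  calc x / totalWeight β t ≤ x / (min 1 β * t) :=
        div_le_div_of_nonneg_left hx (by positivity) (min_mul_le_totalWeight hβ ht)
    _ = (min 1 β)⁻¹ * (x / t) := by field_simp

lemma one_div_totalWeight_le (hβ : 0 < β) {t : ℕ} (ht : 1 ≤ t) :
    1 / totalWeight β t ≤ (min 1 β)⁻¹ := by
  have : 0 < min 1 β := lt_min one_pos hβ
  refine (div_totalWeight_le hβ ht zero_le_one).trans (mul_le_of_le_one_right (by positivity) ?_)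
  exact div_le_self zero_le_one (by exact_mod_cast ht)

lemma tendsto_div_totalWeight (hβ : 0 < β) :
    Tendsto (fun t : ℕ => (t : ℝ) / totalWeight β t) atTop (nhds (1 / (2 + β))) := by
  have hlim : Tendsto (fun t : ℕ => (2 + β) - 2 / (t : ℝ)) atTop (nhds ((2 + β) - 0)) :=
    tendsto_const_nhds.sub (tendsto_const_div_atTop_nhds_zero_nat 2)
  have hinv := hlim.inv₀ (by linarith)
  rw [sub_zero, ← one_div] at hinv
  refine hinv.congr' ?_
  filter_upwards [eventually_ge_atTop 1] with t ht
  have ht₀ : (t : ℝ) ≠ 0 := by positivity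
  have hdiv : (2 + β) - 2 / (t : ℝ) = totalWeight β t / t := by
    unfold totalWeight
    field_simp
  rw [hdiv, inv_div]

end TotalWeight

section Recursion

lemma rpow_mul_one_add_le_rpow_succ {ρ : ℝ} (hρ : 0 ≤ ρ) {t : ℕ} (ht : 1 ≤ t) :
    (t : ℝ) ^ ρ * (1 + ρ / (t + 1)) ≤ ((t + 1 : ℕ) : ℝ) ^ ρ := by
  have ht₀ : (0 : ℝ) < t := by exact_mod_cast ht
  have hfactor : ((t + 1 : ℕ) : ℝ) = t * (1 + 1 / t) := by
    push_cast
    field_simp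
  have hlog : 1 / ((t : ℝ) + 1) ≤ Real.log (1 + 1 / t) := by
    refine le_trans (le_of_eq ?_)
      (Real.one_sub_inv_le_log_of_pos (by positivity : 0 < 1 + 1 / (t : ℝ)))
    field_simp
    ring
  rw [hfactor, Real.mul_rpow ht₀.le (by positivity)]
  gcongr
  calc 1 + ρ / (t + 1) = 1 / ((t : ℝ) + 1) * ρ + 1 := by ring
    _ ≤ Real.log (1 + 1 / t) * ρ + 1 := by gcongr
    _ ≤ Real.exp (Real.log (1 + 1 / t) * ρ) := Real.add_one_le_exp _
    _ = (1 + 1 / (t : ℝ)) ^ ρ := (Real.rpow_def_of_pos (by positivity) ρ).symm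

lemma rpow_le_two_mul_rpow_succ {θ : ℝ} (hθ : -1 ≤ θ) {t : ℕ} (ht : 1 ≤ t) :
    (t : ℝ) ^ θ ≤ 2 * ((t + 1 : ℕ) : ℝ) ^ θ := by
  have ht₁ : (1 : ℝ) ≤ t := by exact_mod_cast ht
  have ht₀ : (0 : ℝ) < t := by linarith
  rcases le_or_gt 0 θ with h | h
  · have hle : (t : ℝ) ^ θ ≤ ((t + 1 : ℕ) : ℝ) ^ θ :=
      Real.rpow_le_rpow ht₀.le (by push_cast; linarith) h
    have hpos : 0 ≤ (t : ℝ) ^ θ := by positivity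
    linarith
  · have hle : (2 * t : ℝ) ^ θ ≤ ((t + 1 : ℕ) : ℝ) ^ θ :=
      Real.rpow_le_rpow_of_nonpos (by positivity) (by push_cast; linarith) h.le
    rw [Real.mul_rpow (by norm_num) ht₀.le] at hle
    have htwo : (2 : ℝ) ^ (-1 : ℝ) ≤ 2 ^ θ := Real.rpow_le_rpow_of_exponent_le (by norm_num) hθ
    rw [Real.rpow_neg_one] at htwo
    have hpos : 0 ≤ (t : ℝ) ^ θ := by positivity
    nlinarith

variable {β q ρ : ℝ}

lemma exists_eventually_growth_mul_rpow_le (hβ : 0 < β) (A : ℝ) (hρ : 0 ≤ ρ)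
    (hq : q / (2 + β) < ρ) :
    ∃ d, 0 < d ∧ ∀ᶠ t : ℕ in atTop, (1 + q / totalWeight β t + A / totalWeight β t ^ 2) *
      (t : ℝ) ^ ρ + d * (t : ℝ) ^ (ρ - 1) ≤ ((t + 1 : ℕ) : ℝ) ^ ρ := by
  have hlim : Tendsto (fun t : ℕ => ρ * ((t : ℝ) / (t + 1)) - (q * ((t : ℝ) / totalWeight β t) +
        A * (t / totalWeight β t * (t / totalWeight β t) * (1 / (t : ℝ))))) atTop
      (nhds (ρ * 1 - (q * (1 / (2 + β)) + A * (1 / (2 + β) * (1 / (2 + β)) * 0)))) :=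
    ((tendsto_natCast_div_add_atTop 1).const_mul ρ).sub
      (((tendsto_div_totalWeight hβ).const_mul q).add
        ((((tendsto_div_totalWeight hβ).mul (tendsto_div_totalWeight hβ)).mul
          (tendsto_const_div_atTop_nhds_zero_nat 1)).const_mul A))
  have hd : 0 < (ρ - q / (2 + β)) / 2 := by linarith
  refine ⟨_, hd, ?_⟩
  have hgap : (ρ - q / (2 + β)) / 2 <
      ρ * 1 - (q * (1 / (2 + β)) + A * (1 / (2 + β) * (1 / (2 + β)) * 0)) := by
    rw [mul_zero, mul_zero, add_zero, mul_one_div]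
    linarith
  filter_upwards [hlim.eventually_const_lt hgap, eventually_ge_atTop 1] with t hlt ht
  have ht₀ : (0 : ℝ) < t := by exact_mod_cast ht
  have hL := totalWeight_pos hβ ht
  have hdiv : (ρ - q / (2 + β)) / 2 / t ≤
      ρ / (t + 1) - (q / totalWeight β t + A / totalWeight β t ^ 2) := by
    rw [div_le_iff₀ ht₀]
    refine hlt.le.trans_eq ?_
    field_simp
  refine le_trans ?_ (rpow_mul_one_add_le_rpow_succ hρ ht)
  rw [Real.rpow_sub_one ht₀.ne']
  have hmul := mul_le_mul_of_nonneg_left hdiv (Real.rpow_nonneg ht₀.le ρ)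
  linear_combination hmul

lemma exists_le_mul_rpow_of_growth (hβ : 0 < β) {A C : ℝ} {b : ℕ → ℝ} (hq₀ : 0 ≤ q)
    (hA : 0 ≤ A) (hC : 0 ≤ C) (hρ : 0 ≤ ρ) (hq : q / (2 + β) < ρ)
    (hb : ∀ t, 1 ≤ t → b (t + 1) ≤
      (1 + q / totalWeight β t + A / totalWeight β t ^ 2) * b t + C * (t : ℝ) ^ (ρ - 1)) :
    ∃ K, 0 ≤ K ∧ ∀ t : ℕ, 1 ≤ t → b t ≤ K * (t : ℝ) ^ ρ := by
  obtain ⟨d, hd, hev⟩ := exists_eventually_growth_mul_rpow_le hβ A hρ hq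
  obtain ⟨t₀, ht₀⟩ := eventually_atTop.mp hev
  set K := C / d + ∑ s ∈ range (t₀ + 2), |b s|
  have hsum : 0 ≤ ∑ s ∈ range (t₀ + 2), |b s| := sum_nonneg fun _ _ => abs_nonneg _
  have hK : 0 ≤ K := by positivity
  have hCK : C ≤ K * d := by
    rw [← div_le_iff₀ hd]
    exact le_add_of_nonneg_right hsum
  have hsmall (t : ℕ) (ht : 1 ≤ t) (hle : t < t₀ + 2) : b t ≤ K * (t : ℝ) ^ ρ := by
    have hone : 1 ≤ (t : ℝ) ^ ρ := Real.one_le_rpow (by exact_mod_cast ht) hρ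
    calc b t ≤ |b t| := le_abs_self _
      _ ≤ ∑ s ∈ range (t₀ + 2), |b s| :=
          single_le_sum (fun s _ => abs_nonneg (b s)) (mem_range.mpr hle)
      _ ≤ K := le_add_of_nonneg_left (by positivity)
      _ ≤ K * (t : ℝ) ^ ρ := le_mul_of_one_le_right hK hone
  refine ⟨K, hK, fun t ht => ?_⟩
  induction t, ht using Nat.le_induction with
  | base => exact hsmall 1 le_rfl (by omega)
  | succ t ht ih =>
    rcases lt_or_ge (t + 1) (t₀ + 2) with hlt | hge
    · exact hsmall (t + 1) (by omega) hlt
    · have hL := totalWeight_pos hβ ht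
      calc b (t + 1)
          ≤ (1 + q / totalWeight β t + A / totalWeight β t ^ 2) * b t + C * (t : ℝ) ^ (ρ - 1) :=
            hb t ht
        _ ≤ (1 + q / totalWeight β t + A / totalWeight β t ^ 2) * (K * (t : ℝ) ^ ρ) +
              K * d * (t : ℝ) ^ (ρ - 1) := by gcongr
        _ = K * ((1 + q / totalWeight β t + A / totalWeight β t ^ 2) * (t : ℝ) ^ ρ +
              d * (t : ℝ) ^ (ρ - 1)) := by ring
        _ ≤ K * ((t + 1 : ℕ) : ℝ) ^ ρ := mul_le_mul_of_nonneg_left (ht₀ t (by omega)) hK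

lemma succ_mod_of_ne_zero {m t : ℕ} (h : (t + 1) % m ≠ 0) : (t + 1) % m = t % m + 1 := by
  have hdiv := Nat.succ_div_of_not_dvd (mt Nat.mod_eq_zero_of_dvd h)
  have hsucc := Nat.div_add_mod (t + 1) m
  have ht := Nat.div_add_mod t m
  rw [hdiv] at hsucc
  omega

lemma le_pow_mul_of_block_growth {m T : ℕ} (hm : 0 < m) {A : ℝ} (hA : 0 ≤ A) {u e : ℕ → ℝ}
    (he₀ : ∀ t, 1 ≤ t → t ≤ T → 0 ≤ e t) (he : ∀ t, 1 ≤ t → t < T → e t ≤ 2 * e (t + 1))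
    (hu₁ : 1 ≤ T → u 1 ≤ e 1) (hu₀ : ∀ t, 1 ≤ t → t ≤ T → t % m = 0 → u t ≤ e t)
    (hu : ∀ t, 1 ≤ t → t < T → (t + 1) % m ≠ 0 → u (t + 1) ≤ A * u t + e t) :
    ∀ t, 1 ≤ t → t ≤ T → u t ≤ (2 * A + 2) ^ m * e t := by
  have hbase : 1 ≤ 2 * A + 2 := by linarith
  have hle (t : ℕ) (ht : 1 ≤ t) (htT : t ≤ T) (k : ℕ) : e t ≤ (2 * A + 2) ^ k * e t :=
    le_mul_of_one_le_left (he₀ t ht htT) (one_le_pow₀ hbase)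
  suffices key : ∀ t, 1 ≤ t → t ≤ T → u t ≤ (2 * A + 2) ^ (t % m) * e t from fun t ht htT =>
    (key t ht htT).trans (mul_le_mul_of_nonneg_right
      (pow_le_pow_right₀ hbase (Nat.mod_lt t hm).le) (he₀ t ht htT))
  intro t ht htT
  induction t, ht using Nat.le_induction with
  | base => exact (hu₁ htT).trans (hle 1 le_rfl htT _)
  | succ t ht ih =>
    by_cases hmod : (t + 1) % m = 0
    · exact (hu₀ _ (by omega) htT hmod).trans (hle _ (by omega) htT _)
    rw [succ_mod_of_ne_zero hmod, pow_succ]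
    calc u (t + 1) ≤ A * u t + e t := hu t ht htT hmod
      _ ≤ A * ((2 * A + 2) ^ (t % m) * e t) + (2 * A + 2) ^ (t % m) * e t := by
          gcongr
          · exact ih (by omega)
          · exact hle t ht (by omega) _
      _ = (A + 1) * (2 * A + 2) ^ (t % m) * e t := by ring
      _ ≤ (A + 1) * (2 * A + 2) ^ (t % m) * (2 * e (t + 1)) := by
          gcongr
          exact he t ht htT
      _ = (2 * A + 2) ^ (t % m) * (2 * A + 2) * e (t + 1) := by ring

/-- `u n t ≤ K * t ^ θ` for all `1 ≤ t ≤ n * m`, with one constant `K` for all `n`. -/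
def PowerBounded (m : ℕ) (θ : ℝ) (u : ℕ → ℕ → ℝ) : Prop :=
  ∃ K, 0 ≤ K ∧ ∀ n t, 1 ≤ t → t ≤ n * m → u n t ≤ K * (t : ℝ) ^ θ

namespace PowerBounded

variable {m : ℕ} {θ θ' : ℝ} {u v : ℕ → ℕ → ℝ}

lemma mono (hv : PowerBounded m θ v) (huv : ∀ n t, 1 ≤ t → t ≤ n * m → u n t ≤ v n t) :
    PowerBounded m θ u := by
  obtain ⟨K, hK, h⟩ := hv
  exact ⟨K, hK, fun n t ht htn => (huv n t ht htn).trans (h n t ht htn)⟩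

lemma mono_exponent (hu : PowerBounded m θ u) (hθ : θ ≤ θ') : PowerBounded m θ' u := by
  obtain ⟨K, hK, h⟩ := hu
  refine ⟨K, hK, fun n t ht htn => (h n t ht htn).trans ?_⟩
  gcongr
  exact_mod_cast ht

lemma const (c : ℝ) (hθ : 0 ≤ θ) : PowerBounded m θ fun _ _ => c :=
  ⟨|c|, abs_nonneg c, fun _ t ht _ => (le_abs_self c).trans
    (le_mul_of_one_le_right (abs_nonneg c) (Real.one_le_rpow (by exact_mod_cast ht) hθ))⟩

lemma rpow : PowerBounded m θ fun _ t => (t : ℝ) ^ θ :=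
  ⟨1, zero_le_one, fun _ _ _ _ => (one_mul _).ge⟩

lemma add (hu : PowerBounded m θ u) (hv : PowerBounded m θ v) :
    PowerBounded m θ fun n t => u n t + v n t := by
  obtain ⟨K, hK, hu⟩ := hu
  obtain ⟨K', hK', hv⟩ := hv
  exact ⟨K + K', by positivity, fun n t ht htn =>
    (add_le_add (hu n t ht htn) (hv n t ht htn)).trans_eq (add_mul _ _ _).symm⟩

lemma const_mul (hu : PowerBounded m θ u) {c : ℝ} (hc : 0 ≤ c) :
    PowerBounded m θ fun n t => c * u n t := by
  obtain ⟨K, hK, hu⟩ := hu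
  exact ⟨c * K, by positivity, fun n t ht htn =>
    (mul_le_mul_of_nonneg_left (hu n t ht htn) hc).trans_eq (mul_assoc _ _ _).symm⟩

lemma div_totalWeight (hu : PowerBounded m θ u) (hβ : 0 < β) :
    PowerBounded m (θ - 1) fun n t => u n t / totalWeight β t := by
  obtain ⟨K, hK, hu⟩ := hu
  have : 0 < min 1 β := lt_min one_pos hβ
  refine ⟨(min 1 β)⁻¹ * K, by positivity, fun n t ht htn => ?_⟩
  have hL := totalWeight_pos hβ ht
  have ht₀ : (0 : ℝ) < t := by exact_mod_cast ht
  calc u n t / totalWeight β t ≤ K * (t : ℝ) ^ θ / totalWeight β t := by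
        gcongr
        exact hu n t ht htn
    _ ≤ (min 1 β)⁻¹ * (K * (t : ℝ) ^ θ / t) := div_totalWeight_le hβ ht (by positivity)
    _ = (min 1 β)⁻¹ * K * (t : ℝ) ^ (θ - 1) := by
        rw [Real.rpow_sub_one ht₀.ne']
        ring

lemma of_growth (hβ : 0 < β) {A U : ℝ} (hq₀ : 0 ≤ q) (hA : 0 ≤ A) (hρ : 0 ≤ ρ)
    (hq : q / (2 + β) < ρ) (he : PowerBounded m (ρ - 1) v) (hu₁ : ∀ n, u n 1 ≤ U)
    (hu : ∀ n t, 1 ≤ t → t < n * m → u n (t + 1) ≤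
      (1 + q / totalWeight β t + A / totalWeight β t ^ 2) * u n t + v n t) :
    PowerBounded m ρ u := by
  obtain ⟨C, hC, hv⟩ := he
  let b : ℕ → ℝ := fun t => Nat.rec 0 (fun s x => if s = 0 then U else
    (1 + q / totalWeight β s + A / totalWeight β s ^ 2) * x + C * (s : ℝ) ^ (ρ - 1)) t
  have hb (t : ℕ) (ht : 1 ≤ t) : b (t + 1) =
      (1 + q / totalWeight β t + A / totalWeight β t ^ 2) * b t + C * (t : ℝ) ^ (ρ - 1) :=
    if_neg (by omega)
  obtain ⟨K, hK, hbK⟩ := exists_le_mul_rpow_of_growth hβ hq₀ hA hC hρ hq fun t ht => (hb t ht).le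
  refine ⟨K, hK, fun n t ht htn => le_trans ?_ (hbK t ht)⟩
  induction t, ht using Nat.le_induction with
  | base => exact hu₁ n
  | succ t ht ih =>
    have hL := totalWeight_pos hβ ht
    rw [hb t ht]
    refine (hu n t ht (by omega)).trans (add_le_add ?_ (hv n t ht (by omega)))
    exact mul_le_mul_of_nonneg_left (ih (by omega)) (by positivity)

lemma of_block_growth (hm : 0 < m) {A : ℝ} (hA : 0 ≤ A) (hθ : -1 ≤ θ)
    (he : PowerBounded m θ v) (hu₁ : ∀ n, 1 ≤ n * m → u n 1 ≤ v n 1)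
    (hu₀ : ∀ n t, 1 ≤ t → t ≤ n * m → t % m = 0 → u n t ≤ v n t)
    (hu : ∀ n t, 1 ≤ t → t < n * m → (t + 1) % m ≠ 0 → u n (t + 1) ≤ A * u n t + v n t) :
    PowerBounded m θ u := by
  obtain ⟨K, hK, hv⟩ := he
  refine ⟨(2 * A + 2) ^ m * K, by positivity, fun n t ht htn => ?_⟩
  rw [mul_assoc]
  refine le_pow_mul_of_block_growth (T := n * m) hm hA (fun t _ _ => by positivity)
    (fun t ht _ => ?_) (fun hn => (hu₁ n hn).trans (hv n 1 le_rfl hn))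
    (fun t ht htn hmod => (hu₀ n t ht htn hmod).trans (hv n t ht htn))
    (fun t ht htn hmod => (hu n t ht htn hmod).trans (by gcongr; exact hv n t ht htn.le)) t ht htn
  rw [mul_left_comm]
  gcongr
  exact rpow_le_two_mul_rpow_succ hθ ht

end PowerBounded

end Recursion

section Sums

lemma exists_sum_rpow_le {θ : ℝ} (hθ : θ < -1) :
    ∃ C, 0 ≤ C ∧ ∀ T : ℕ, ∑ t ∈ Ico 1 T, (t : ℝ) ^ θ ≤ C :=
  ⟨∑' t : ℕ, (t : ℝ) ^ θ, tsum_nonneg fun t => by positivity, fun T =>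
    (Real.summable_nat_rpow.mpr hθ).sum_le_tsum _ fun t _ => by positivity⟩

lemma PowerBounded.exists_sum_le {m : ℕ} {θ : ℝ} {u : ℕ → ℕ → ℝ} (hu : PowerBounded m θ u)
    (hθ : θ < -1) : ∃ C, 0 ≤ C ∧ ∀ n, ∑ t ∈ Ico 1 (n * m), u n t ≤ C := by
  obtain ⟨K, hK, hu⟩ := hu
  obtain ⟨C, hC, hsum⟩ := exists_sum_rpow_le hθ
  refine ⟨K * C, by positivity, fun n => ?_⟩
  calc ∑ t ∈ Ico 1 (n * m), u n t ≤ ∑ t ∈ Ico 1 (n * m), K * (t : ℝ) ^ θ :=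
        sum_le_sum fun t ht => hu n t (mem_Ico.mp ht).1 (mem_Ico.mp ht).2.le
    _ ≤ K * C := (mul_sum _ _ _).symm.trans_le (mul_le_mul_of_nonneg_left (hsum _) hK)

lemma abs_sum_Ico_one_div_sub_log_le {n : ℕ} (hn : 1 ≤ n) :
    |∑ j ∈ Ico 1 n, 1 / (j : ℝ) - Real.log n| ≤ 2 := by
  have hlower := log_add_one_le_harmonic n
  have hupper := harmonic_le_one_add_log n
  have hn₀ : (0 : ℝ) < n := by exact_mod_cast hn
  have hsum : ((harmonic n : ℚ) : ℝ) = ∑ j ∈ Ico 1 n, 1 / (j : ℝ) + 1 / n := by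
    rw [harmonic_eq_sum_Icc, ← Ico_add_one_right_eq_Icc, sum_Ico_succ_top hn]
    simp
  have hlog : Real.log n ≤ Real.log ((n + 1 : ℕ) : ℝ) :=
    Real.log_le_log hn₀ (by push_cast; linarith)
  have hinv : 1 / (n : ℝ) ≤ 1 := by
    rw [div_le_one hn₀]
    exact_mod_cast hn
  have hinv₀ : 0 ≤ 1 / (n : ℝ) := by positivity
  rw [hsum] at hlower hupper
  rw [abs_le]
  constructor <;> linarith

/-- The contribution of the block `j m, …, j m + m - 1` to the sum of `(t % m) / t`. -/
noncomputable def blockSum (m j : ℕ) : ℝ := ∑ k ∈ range m, (k : ℝ) / (j * m + k : ℕ)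

lemma sum_range_mod_div (m n : ℕ) :
    ∑ t ∈ range (n * m), ((t % m : ℕ) : ℝ) / t = ∑ j ∈ range n, blockSum m j := by
  induction n with
  | zero => simp
  | succ n ih =>
    rw [sum_range_succ, add_mul, one_mul, sum_range_add, ih, blockSum]
    congr 1
    refine sum_congr rfl fun k hk => ?_
    rw [Nat.mul_comm n m, Nat.mul_add_mod, Nat.mod_eq_of_lt (mem_range.mp hk)]

lemma blockSum_zero_mem_Icc (m : ℕ) : blockSum m 0 ∈ Set.Icc 0 (m : ℝ) := by
  refine ⟨sum_nonneg fun k _ => by positivity, ?_⟩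
  calc blockSum m 0 ≤ ∑ _k ∈ range m, (1 : ℝ) :=
        sum_le_sum fun k _ => by simpa using div_self_le_one (k : ℝ)
    _ = m := by simp

lemma abs_blockSum_sub_le {m j : ℕ} (hm : 1 ≤ m) (hj : 1 ≤ j) :
    |blockSum m j - ((m : ℝ) - 1) / 2 * (1 / j)| ≤ m * (1 / (j : ℝ) ^ 2) := by
  have : (0 : ℝ) < m := by exact_mod_cast hm
  have : (0 : ℝ) < j := by exact_mod_cast hj
  have hgauss : ∑ k ∈ range m, (k : ℝ) = m * (m - 1) / 2 := by
    have h := congrArg (Nat.cast (R := ℝ)) (sum_range_id_mul_two m)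
    push_cast [Nat.cast_pred hm] at h
    linarith
  have hmain : ((m : ℝ) - 1) / 2 * (1 / j) = ∑ k ∈ range m, (k : ℝ) / (j * m) := by
    rw [← sum_div, hgauss]
    field_simp
  have hterm (k : ℕ) (hk : k ∈ range m) :
      |(k : ℝ) / (j * m + k : ℕ) - k / (j * m)| ≤ 1 / (j : ℝ) ^ 2 := by
    have hkm : (k : ℝ) ≤ m := by exact_mod_cast (mem_range.mp hk).le
    have hdiff : (k : ℝ) / (j * m + k : ℕ) - k / (j * m) =
        -((k : ℝ) ^ 2 / ((j * m + k) * (j * m))) := by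
      push_cast
      field_simp
      ring
    rw [hdiff, abs_neg, abs_of_nonneg (by positivity)]
    calc (k : ℝ) ^ 2 / ((j * m + k) * (j * m)) ≤ m ^ 2 / ((j * m + 0) * (j * m)) := by gcongr; simp
      _ = 1 / (j : ℝ) ^ 2 := by field_simp; ring
  rw [hmain, blockSum, ← sum_sub_distrib]
  calc _ ≤ ∑ k ∈ range m, |(k : ℝ) / (j * m + k : ℕ) - k / (j * m)| := abs_sum_le_sum_abs _ _
    _ ≤ ∑ k ∈ range m, 1 / (j : ℝ) ^ 2 := sum_le_sum hterm
    _ = m * (1 / (j : ℝ) ^ 2) := by simp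

lemma exists_abs_sum_mod_div_sub_log_le {m : ℕ} (hm : 1 ≤ m) :
    ∃ C, 0 ≤ C ∧ ∀ n : ℕ, 1 ≤ n →
      |∑ t ∈ Ico 1 (n * m), ((t % m : ℕ) : ℝ) / t - ((m : ℝ) - 1) / 2 * Real.log n| ≤ C := by
  have hm₁ : (1 : ℝ) ≤ m := by exact_mod_cast hm
  have hsummable : Summable fun j : ℕ => (m : ℝ) * (1 / (j : ℝ) ^ 2) :=
    (Real.summable_one_div_nat_pow.mpr (by norm_num)).mul_left _
  set B := ∑' j : ℕ, (m : ℝ) * (1 / (j : ℝ) ^ 2)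
  have hB : 0 ≤ B := tsum_nonneg fun j => by positivity
  refine ⟨m + B + ((m : ℝ) - 1) / 2 * 2, by linarith, fun n hn => ?_⟩
  have hsplit : ∑ t ∈ Ico 1 (n * m), ((t % m : ℕ) : ℝ) / t =
      blockSum m 0 + ∑ j ∈ Ico 1 n, blockSum m j := by
    rw [← zero_add 1, ← sum_eq_sum_Ico_succ_bot (show 0 < n by omega), ← range_eq_Ico,
      ← sum_range_mod_div, range_eq_Ico, sum_eq_sum_Ico_succ_bot (show 0 < n * m by positivity)]
    simp
  have hblocks : |∑ j ∈ Ico 1 n, blockSum m j -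
      ((m : ℝ) - 1) / 2 * ∑ j ∈ Ico 1 n, 1 / (j : ℝ)| ≤ B := by
    rw [mul_sum, ← sum_sub_distrib]
    calc _ ≤ ∑ j ∈ Ico 1 n, |blockSum m j - ((m : ℝ) - 1) / 2 * (1 / j)| :=
          abs_sum_le_sum_abs _ _
      _ ≤ ∑ j ∈ Ico 1 n, (m : ℝ) * (1 / (j : ℝ) ^ 2) :=
          sum_le_sum fun j hj => abs_blockSum_sub_le hm (mem_Ico.mp hj).1
      _ ≤ B := hsummable.sum_le_tsum _ fun j _ => by positivity
  have hfirst : |blockSum m 0| ≤ m := by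
    rw [abs_of_nonneg (blockSum_zero_mem_Icc m).1]
    exact (blockSum_zero_mem_Icc m).2
  have hlog : |((m : ℝ) - 1) / 2 * (∑ j ∈ Ico 1 n, 1 / (j : ℝ) - Real.log n)| ≤
      ((m : ℝ) - 1) / 2 * 2 := by
    rw [abs_mul, abs_of_nonneg (show (0 : ℝ) ≤ ((m : ℝ) - 1) / 2 by linarith)]
    exact mul_le_mul_of_nonneg_left (abs_sum_Ico_one_div_sub_log_le hn) (by linarith)
  calc _ = |blockSum m 0 + (∑ j ∈ Ico 1 n, blockSum m j -
        ((m : ℝ) - 1) / 2 * ∑ j ∈ Ico 1 n, 1 / (j : ℝ)) +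
        ((m : ℝ) - 1) / 2 * (∑ j ∈ Ico 1 n, 1 / (j : ℝ) - Real.log n)| := by
        rw [hsplit]
        ring_nf
    _ ≤ _ := (abs_add_three _ _ _).trans (add_le_add (add_le_add hfirst hblocks) hlog)

end Sums

/-! ### The merged Móri graph -/

section ParentSeq

variable {β : ℝ} {T : ℕ}

/-- A parent sequence of length `T + 1` is a parent sequence of length `T` together with the parent
of the last vertex. -/
def parentSeqSuccEquiv (hT : 1 ≤ T) : ParentSeq (T + 1) ≃ ParentSeq T × Set.Icc 1 T where
  toFun g := (fun t => g ⟨t, t.2.1, t.2.2.trans T.le_succ⟩, g ⟨T + 1, by omega, le_rfl⟩)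
  invFun fv t :=
    if h : (t : ℕ) ≤ T then fv.1 ⟨t, t.2.1, h⟩ else ⟨fv.2, fv.2.2.1, by have := fv.2.2.2; omega⟩
  left_inv g := by
    funext ⟨t, ht⟩
    by_cases h : t ≤ T
    · simp [h]
    · obtain rfl : t = T + 1 := by have := ht.2; omega
      simp
      rfl
  right_inv := by
    rintro ⟨f, v⟩
    refine Prod.ext (funext fun t => ?_) ?_
    · simp [show (t : ℕ) ≤ T from t.2.2]
    · simp

lemma parentSeqSuccEquiv_symm_apply (hT : 1 ≤ T) (f : ParentSeq T) (v : Set.Icc 1 T)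
    (t : Set.Icc 2 (T + 1)) : ((parentSeqSuccEquiv hT).symm (f, v) t : ℕ) =
      if h : (t : ℕ) ≤ T then (f ⟨t, t.2.1, h⟩ : ℕ) else v := by
  have happly : (parentSeqSuccEquiv hT).symm (f, v) t = if h : (t : ℕ) ≤ T then f ⟨t, t.2.1, h⟩
      else ⟨v, v.2.1, by have := v.2.2; omega⟩ := rfl
  rw [happly]
  split_ifs <;> rfl

lemma pval_symm_of_le (hT : 1 ≤ T) (f : ParentSeq T) (v : Set.Icc 1 T) {j : ℕ} (hj : j ≤ T) :
    pval ((parentSeqSuccEquiv hT).symm (f, v)) j = pval f j := by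
  by_cases h : 2 ≤ j
  · simp [pval, h, hj, hj.trans T.le_succ, parentSeqSuccEquiv_symm_apply]
  · simp [pval, h]

lemma pval_symm_last (hT : 1 ≤ T) (f : ParentSeq T) (v : Set.Icc 1 T) :
    pval ((parentSeqSuccEquiv hT).symm (f, v)) (T + 1) = v := by
  simp [pval, parentSeqSuccEquiv_symm_apply, hT]

lemma pval_mem_Icc (f : ParentSeq T) {j : ℕ} (hj : j ∈ Icc 2 T) : pval f j ∈ Icc 1 (j - 1) := by
  rw [pval, dif_pos (mem_Icc.mp hj)]
  exact mem_Icc.mpr (f ⟨j, _⟩).2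

lemma deg_symm (hT : 1 ≤ T) (f : ParentSeq T) (v : Set.Icc 1 T) {t : ℕ} (ht : t ≤ T) (i : ℕ) :
    deg ((parentSeqSuccEquiv hT).symm (f, v)) t i = deg f t i := by
  unfold deg
  congr 2
  exact filter_congr fun j hj => by rw [pval_symm_of_le hT f v ((mem_Icc.mp hj).2.trans ht)]

lemma moriP_symm (hT : 1 ≤ T) (f : ParentSeq T) (v : Set.Icc 1 T) :
    moriP β ((parentSeqSuccEquiv hT).symm (f, v)) =
      moriP β f * ((deg f T v + β) / totalWeight β T) := by
  unfold moriP
  rw [prod_Icc_succ_top (by omega)]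
  congr 1
  · refine prod_congr rfl fun t ht => ?_
    have htT := (mem_Icc.mp ht).2
    rw [pval_symm_of_le hT f v htT, deg_symm hT f v (by omega)]
  · rw [pval_symm_last, Nat.add_sub_cancel, deg_symm hT f v le_rfl, totalWeight]
    push_cast
    ring

lemma moriP_nonneg (hβ : 0 < β) (f : ParentSeq T) : 0 ≤ moriP β f := by
  refine prod_nonneg fun t ht => div_nonneg (by positivity) ?_
  have ht₂ := (mem_Icc.mp ht).1
  have hpos := totalWeight_pos hβ (show 1 ≤ t - 1 by omega)
  rw [totalWeight, Nat.cast_pred (by omega)] at hpos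
  exact hpos.le

end ParentSeq

section MergedGraph

variable {β : ℝ} {m n t : ℕ}

/-- The graph obtained at some time by merging blocks of tree vertices: the in-degrees, loops
included, and the loopless adjacency matrix. The vertex `i < n` stands for `u_{i+1}`; the spare
vertex `n` is the one a tree vertex `v_{nm+1}` would belong to. -/
@[ext] structure MergedGraph (n : ℕ) where
  /-- The number of edges pointing to each vertex. -/
  inDegree : Fin (n + 1) → ℝ
  /-- The numbers of edges between distinct vertices. -/
  adj : Matrix (Fin (n + 1)) (Fin (n + 1)) ℝ

/-- The merged vertex containing the tree vertex `v_{t+1}`. -/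
def blockIndex (m n t : ℕ) : Fin (n + 1) := Fin.ofNat (n + 1) (t / m)

/-- The number of tree vertices among `v_1, …, v_t` in the block `i`. -/
def blockCount (m t i : ℕ) : ℕ := min m (t - i * m)

/-- The merged graph of the first `t` tree vertices for the parent sequence `f`. -/
noncomputable def mergedGraph (m n : ℕ) (f : ParentSeq t) : MergedGraph n where
  inDegree i := #{j ∈ Icc 2 t | blockIndex m n (pval f j - 1) = i}
  adj := Matrix.of fun i k => if i = k then 0 else
    #{j ∈ Icc 2 t | blockIndex m n (j - 1) = i ∧ blockIndex m n (pval f j - 1) = k ∨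
      blockIndex m n (j - 1) = k ∧ blockIndex m n (pval f j - 1) = i}

namespace MergedGraph

/-- The merged graph after an edge from `c` to `a` is added. -/
def addEdge (s : MergedGraph n) (c a : Fin (n + 1)) : MergedGraph n where
  inDegree := s.inDegree + Pi.single a 1
  adj := MoriGraph.addEdge s.adj c a

end MergedGraph

lemma blockIndex_val (ht : t ≤ n * m) : (blockIndex m n t : ℕ) = t / m := by
  have : t / m < n + 1 := Nat.lt_succ_of_le (Nat.div_le_of_le_mul (by rwa [Nat.mul_comm]))
  simp [blockIndex, Fin.ofNat, Nat.mod_eq_of_lt this]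

lemma mergedGraph_symm (ht : 1 ≤ t) (f : ParentSeq t) (v : Set.Icc 1 t) :
    mergedGraph m n ((parentSeqSuccEquiv ht).symm (f, v)) =
      (mergedGraph m n f).addEdge (blockIndex m n t) (blockIndex m n (v - 1)) := by
  have hpval (j : ℕ) (hj : j ∈ Icc 2 t) := pval_symm_of_le ht f v (mem_Icc.mp hj).2
  have hIcc : Icc 2 (t + 1) = insert (t + 1) (Icc 2 t) := by ext; simp; omega
  ext i k
  · simp only [mergedGraph, MergedGraph.addEdge, hIcc, filter_insert, pval_symm_last]
    rw [filter_congr fun j hj => by rw [hpval j hj]]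
    split_ifs with h <;> simp [h, eq_comm]
  · simp only [mergedGraph, MergedGraph.addEdge, hIcc, filter_insert, pval_symm_last,
      addEdge_apply, Matrix.of_apply, Nat.add_sub_cancel]
    rw [filter_congr fun j hj => by rw [hpval j hj]]
    generalize blockIndex m n t = c
    generalize blockIndex m n (v - 1) = a
    by_cases hik : i = k
    · grind
    · rw [if_neg hik, if_neg hik]
      split_ifs <;> simp <;> grind

/-- The initial weight of a completed merged vertex: each of its `m` tree vertices contributes its
out-degree plus `β`. -/
noncomputable def blockWeight (β : ℝ) (m : ℕ) (i : Fin (n + 1)) : ℝ :=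
  (1 + β) * m - if i = 0 then 1 else 0

/-- The part of `blockWeight` contributed by the tree vertices `v_1, …, v_t`. -/
noncomputable def partialBlockWeight (β : ℝ) (m t : ℕ) (i : Fin (n + 1)) : ℝ :=
  (1 + β) * blockCount m t i - if i = 0 then 1 else 0

lemma blockCount_of_lt (hm : 1 ≤ m) {i : ℕ} (h : i < t / m) : blockCount m t i = m := by
  have hle : (i + 1) * m ≤ t := (Nat.le_div_iff_mul_le (by omega)).mp h
  rw [add_mul] at hle
  exact min_eq_left (by omega)

lemma blockCount_of_gt (hm : 1 ≤ m) {i : ℕ} (h : t / m < i) : blockCount m t i = 0 := by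
  have hlt : t < i * m := (Nat.div_lt_iff_lt_mul (by omega)).mp h
  rw [blockCount, Nat.sub_eq_zero_of_le hlt.le, Nat.min_zero]

lemma blockCount_div (hm : 1 ≤ m) : blockCount m t (t / m) = t % m := by
  have hdiv := Nat.div_add_mod' t m
  have hlt := Nat.mod_lt t (show 0 < m by omega)
  rw [blockCount]
  omega

lemma blockCount_succ (hm : 1 ≤ m) (i : ℕ) :
    blockCount m (t + 1) i = blockCount m t i + if i = t / m then 1 else 0 := by
  have hdiv := Nat.div_add_mod' t m
  have hlt := Nat.mod_lt t (show 0 < m by omega)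
  unfold blockCount
  split_ifs with h
  · subst h
    omega
  · rcases Nat.lt_or_gt_of_ne h with h | h
    · have := Nat.mul_le_mul_right m (Nat.succ_le_of_lt h)
      rw [Nat.succ_mul] at this
      omega
    · have := Nat.mul_le_mul_right m (Nat.succ_le_of_lt h)
      rw [Nat.succ_mul] at this
      omega

lemma partialBlockWeight_succ (hm : 1 ≤ m) (ht : t ≤ n * m) (i : Fin (n + 1)) :
    partialBlockWeight β m (t + 1) i =
      partialBlockWeight β m t i + if blockIndex m n t = i then 1 + β else 0 := by
  have hi : (i : ℕ) = t / m ↔ blockIndex m n t = i := by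
    rw [Fin.ext_iff, blockIndex_val ht, eq_comm]
  unfold partialBlockWeight
  rw [blockCount_succ hm, if_congr hi rfl rfl]
  split_ifs <;> push_cast <;> ring

lemma partialBlockWeight_zero (i : Fin (n + 1)) :
    partialBlockWeight β m 0 i = -if i = 0 then 1 else 0 := by
  simp [partialBlockWeight, blockCount]

lemma sum_partialBlockWeight (hm : 1 ≤ m) (ht : t ≤ n * m) :
    ∑ i : Fin (n + 1), partialBlockWeight β m t i = (1 + β) * t - 1 := by
  induction t with
  | zero => simp [partialBlockWeight_zero]
  | succ t ih =>
    simp only [partialBlockWeight_succ hm (Nat.le_of_succ_le ht), sum_add_distrib,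
      ih (Nat.le_of_succ_le ht), sum_ite_eq, mem_univ, if_true]
    push_cast
    ring

lemma partialBlockWeight_nonneg (hβ : 0 < β) (hm : 1 ≤ m) (ht : 1 ≤ t) (i : Fin (n + 1)) :
    0 ≤ partialBlockWeight β m t i := by
  unfold partialBlockWeight
  split_ifs with h
  · have hcount : (1 : ℝ) ≤ blockCount m t i := by
      simp only [h, Fin.val_zero, blockCount, zero_mul, Nat.sub_zero]
      exact_mod_cast le_min hm ht
    nlinarith
  · rw [sub_zero]
    positivity

lemma partialBlockWeight_le (hβ : 0 < β) (i : Fin (n + 1)) :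
    partialBlockWeight β m t i ≤ (1 + β) * m := by
  have hcount : (blockCount m t i : ℝ) ≤ m := by exact_mod_cast min_le_left _ _
  have hle : (1 + β) * blockCount m t i ≤ (1 + β) * m := by gcongr
  unfold partialBlockWeight
  split_ifs <;> linarith

lemma blockWeight_nonneg (hβ : 0 < β) (hm : 1 ≤ m) (i : Fin (n + 1)) : 0 ≤ blockWeight β m i := by
  have : (1 : ℝ) ≤ m := by exact_mod_cast hm
  unfold blockWeight
  split_ifs <;> nlinarith

lemma blockWeight_le (i : Fin (n + 1)) : blockWeight β m i ≤ (1 + β) * m := by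
  unfold blockWeight
  split_ifs <;> linarith

lemma partialBlockWeight_of_lt (hm : 1 ≤ m) (ht : t ≤ n * m) {i : Fin (n + 1)}
    (h : i < blockIndex m n t) : partialBlockWeight β m t i = blockWeight β m i := by
  rw [Fin.lt_def, blockIndex_val ht] at h
  rw [partialBlockWeight, blockCount_of_lt hm h, blockWeight]

lemma partialBlockWeight_of_gt (hm : 1 ≤ m) (ht : t ≤ n * m) {i : Fin (n + 1)}
    (h : blockIndex m n t < i) : partialBlockWeight β m t i = 0 := by
  have hi : i ≠ 0 := (lt_of_le_of_lt (Fin.zero_le _) h).ne'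
  rw [Fin.lt_def, blockIndex_val ht] at h
  simp [partialBlockWeight, blockCount_of_gt hm h, hi]

lemma partialBlockWeight_blockIndex (hm : 1 ≤ m) (ht : t ≤ n * m) :
    partialBlockWeight β m t (blockIndex m n t) =
      blockWeight β m (blockIndex m n t) - (1 + β) * (m - (t % m : ℕ)) := by
  rw [partialBlockWeight, blockIndex_val ht, blockCount_div hm, blockWeight]
  ring

lemma abs_sum_blockWeight_mul_sub_le (hβ : 0 < β) (hm : 1 ≤ m) (ht : 1 ≤ t) (htn : t ≤ n * m) :
    |∑ i : Fin (n + 1), blockWeight β m i * partialBlockWeight β m t i - m * (1 + β) ^ 2 * t| ≤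
      2 * (1 + β) * m := by
  have hsum : ∑ i : Fin (n + 1), blockWeight β m i * partialBlockWeight β m t i =
      (1 + β) * m * ((1 + β) * t - 1) - partialBlockWeight β m t (0 : Fin (n + 1)) := by
    simp only [blockWeight, sub_mul, sum_sub_distrib, ← mul_sum, sum_partialBlockWeight hm htn,
      ite_mul, one_mul, zero_mul, sum_ite_eq', mem_univ, if_true]
  have hnonneg := partialBlockWeight_nonneg (n := n) hβ hm ht 0
  have hle := partialBlockWeight_le (n := n) (m := m) (t := t) hβ 0
  have : 0 ≤ (1 + β) * m := by positivity
  rw [hsum, abs_le]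
  constructor <;> linarith

end MergedGraph

section Attachment

variable {β : ℝ} {m n t : ℕ}

lemma blockIndex_mono {s : ℕ} (hst : s ≤ t) (ht : t ≤ n * m) :
    blockIndex m n s ≤ blockIndex m n t := by
  rw [Fin.le_def, blockIndex_val ht, blockIndex_val (hst.trans ht)]
  exact Nat.div_le_div_right hst

section

variable (ht : t ≤ n * m) (f : ParentSeq t)
include ht

lemma blockIndex_pval_le {j : ℕ} (hj : j ∈ Icc 2 t) :
    blockIndex m n (pval f j - 1) ≤ blockIndex m n (j - 1) := by
  have hp := (mem_Icc.mp (pval_mem_Icc f hj)).2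
  have hjt := (mem_Icc.mp hj).2
  exact blockIndex_mono (by omega) (by omega)

lemma blockIndex_pred_le {j : ℕ} (hj : j ∈ Icc 2 t) :
    blockIndex m n (j - 1) ≤ blockIndex m n t :=
  blockIndex_mono (by have := (mem_Icc.mp hj).2; omega) ht

lemma inDegree_of_gt {i : Fin (n + 1)} (hi : blockIndex m n t < i) :
    (mergedGraph m n f).inDegree i = 0 := by
  simp only [mergedGraph, Nat.cast_eq_zero, card_eq_zero, filter_eq_empty_iff]
  rintro j hj rfl
  exact hi.not_ge ((blockIndex_pval_le ht f hj).trans (blockIndex_pred_le ht hj))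

lemma adj_of_lt {i k : Fin (n + 1)} (hik : i < k) :
    (mergedGraph m n f).adj i k =
      #{j ∈ Icc 2 t | blockIndex m n (j - 1) = k ∧ blockIndex m n (pval f j - 1) = i} := by
  simp only [mergedGraph, Matrix.of_apply, if_neg hik.ne]
  congr 2
  refine filter_congr fun j hj => or_iff_right ?_
  rintro ⟨rfl, rfl⟩
  exact hik.not_ge (blockIndex_pval_le ht f hj)

end

lemma sum_inDegree (f : ParentSeq t) (ht : 1 ≤ t) :
    ∑ i, (mergedGraph m n f).inDegree i = t - 1 := by
  have hcard := card_eq_sum_card_fiberwise (s := Icc 2 t) (t := univ)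
    (f := fun j => blockIndex m n (pval f j - 1)) (fun _ _ => mem_coe.mpr (mem_univ _))
  simp only [mergedGraph, ← Nat.cast_sum, ← hcard, Nat.card_Icc]
  rw [show t + 1 - 2 = t - 1 by omega, Nat.cast_pred ht]

lemma inDegree_nonneg (f : ParentSeq t) (i : Fin (n + 1)) :
    0 ≤ (mergedGraph m n f).inDegree i := by
  simp only [mergedGraph]
  positivity

lemma adj_symm (f : ParentSeq t) : (mergedGraph m n f).adj.IsSymm := by
  ext i k
  simp only [mergedGraph, Matrix.transpose_apply, Matrix.of_apply, eq_comm (a := k), or_comm]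

lemma adj_self (f : ParentSeq t) (i : Fin (n + 1)) : (mergedGraph m n f).adj i i = 0 := by
  simp [mergedGraph]

lemma adj_nonneg (f : ParentSeq t) (i k : Fin (n + 1)) : 0 ≤ (mergedGraph m n f).adj i k := by
  simp only [mergedGraph, Matrix.of_apply]
  positivity

section

variable (ht : t ≤ n * m) (f : ParentSeq t)
include ht

lemma adj_of_gt {i : Fin (n + 1)} (hi : blockIndex m n t < i) (k : Fin (n + 1)) :
    (mergedGraph m n f).adj i k = 0 := by
  simp only [mergedGraph, Matrix.of_apply]
  split_ifs with hik
  · rfl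
  · rw [Nat.cast_eq_zero, card_eq_zero, filter_eq_empty_iff]
    rintro j hj (⟨rfl, -⟩ | ⟨-, rfl⟩)
    · exact hi.not_ge (blockIndex_pred_le ht hj)
    · exact hi.not_ge ((blockIndex_pval_le ht f hj).trans (blockIndex_pred_le ht hj))

end

lemma blockIndex_eq_iff (hm : 1 ≤ m) (ht : t ≤ n * m) {k : Fin (n + 1)} :
    blockIndex m n t = k ↔ t ∈ Ico (k * m : ℕ) (k * m + m) := by
  rw [Fin.ext_iff, blockIndex_val ht, Nat.div_eq_iff hm, mem_Ico]
  omega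

lemma card_blockIndex_pred_eq_le (hm : 1 ≤ m) (ht : t ≤ n * m) (k : Fin (n + 1)) :
    #{j ∈ Icc 2 t | blockIndex m n (j - 1) = k} ≤ blockCount m t k := by
  have hsub : {j ∈ Icc 2 t | blockIndex m n (j - 1) = k} ⊆
      Icc (k * m + 1 : ℕ) (min (k * m + m) t) := by
    intro j hj
    rw [mem_filter, mem_Icc] at hj
    have hk := (blockIndex_eq_iff hm (by omega)).mp hj.2
    rw [mem_Ico] at hk
    exact mem_Icc.mpr (by omega)
  refine (card_le_card hsub).trans ?_
  rw [Nat.card_Icc, blockCount]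
  omega

section

variable (hm : 1 ≤ m) (ht : t ≤ n * m) (f : ParentSeq t)
include hm ht

lemma inDegree_blockIndex_le :
    (mergedGraph m n f).inDegree (blockIndex m n t) ≤ (t % m : ℕ) := by
  have hsub : {j ∈ Icc 2 t | blockIndex m n (pval f j - 1) = blockIndex m n t} ⊆
      Icc (t / m * m + 2) t := by
    intro j hj
    rw [mem_filter] at hj
    have hp := mem_Icc.mp (pval_mem_Icc f hj.1)
    have hjt := mem_Icc.mp hj.1
    have hk := mem_Ico.mp ((blockIndex_eq_iff hm (by omega)).mp hj.2)
    rw [blockIndex_val ht] at hk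
    exact mem_Icc.mpr (by omega)
  simp only [mergedGraph]
  have hcard := card_le_card hsub
  have hmod := Nat.div_add_mod' t m
  rw [Nat.card_Icc] at hcard
  exact_mod_cast hcard.trans (by omega)

lemma adj_le (i k : Fin (n + 1)) : (mergedGraph m n f).adj i k ≤ m := by
  wlog hik : i < k generalizing i k
  · rcases (not_lt.mp hik).eq_or_lt with rfl | hki
    · rw [adj_self]
      positivity
    · rw [← (adj_symm f).apply]
      exact this k i hki
  rw [adj_of_lt ht f hik]
  exact_mod_cast (card_le_card (monotone_filter_right _ fun _ _ hj => And.left hj)).trans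
    ((card_blockIndex_pred_eq_le hm ht k).trans (min_le_left _ _))

lemma sum_adj_blockIndex_le :
    ∑ k, (mergedGraph m n f).adj (blockIndex m n t) k ≤ (t % m : ℕ) := by
  set c := blockIndex m n t with hc
  have hadj (k : Fin (n + 1)) : (mergedGraph m n f).adj c k ≤
      (#{j ∈ {j ∈ Icc 2 t | blockIndex m n (j - 1) = c} |
        blockIndex m n (pval f j - 1) = k} : ℕ) := by
    rcases lt_trichotomy k c with hk | rfl | hk
    · rw [(adj_symm f).apply, adj_of_lt ht f hk, filter_filter]
    · rw [adj_self]
      positivity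
    · rw [(adj_symm f).apply, adj_of_gt ht f hk]
      positivity
  refine (sum_le_sum fun k _ => hadj k).trans ?_
  rw [← Nat.cast_sum, ← card_eq_sum_card_fiberwise fun _ _ => mem_coe.mpr (mem_univ _)]
  have hcard := card_blockIndex_pred_eq_le hm ht c
  rw [hc, blockIndex_val ht, blockCount_div hm] at hcard
  exact_mod_cast hcard

lemma adj_blockIndex_of_mod_eq_zero (hmod : t % m = 0) (k : Fin (n + 1)) :
    (mergedGraph m n f).adj (blockIndex m n t) k = 0 := by
  have hsum := sum_adj_blockIndex_le hm ht f
  rw [hmod, Nat.cast_zero] at hsum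
  exact (sum_eq_zero_iff_of_nonneg fun k _ => adj_nonneg f _ k).mp
    (hsum.antisymm (sum_nonneg fun k _ => adj_nonneg f _ k)) k (mem_univ k)

end

namespace MergedGraph

/-- The weight of a vertex: its in-degree plus its initial weight once completed. -/
noncomputable def weight (β : ℝ) (m : ℕ) (s : MergedGraph n) (i : Fin (n + 1)) : ℝ :=
  blockWeight β m i + s.inDegree i

/-- The weight proportional to which a vertex receives the next edge when `t` tree vertices are
present. It differs from `weight` at the vertices that are not completed. -/
noncomputable def attachWeight (β : ℝ) (m t : ℕ) (s : MergedGraph n) (i : Fin (n + 1)) : ℝ :=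
  s.inDegree i + partialBlockWeight β m t i

lemma weight_addEdge (s : MergedGraph n) (c a : Fin (n + 1)) :
    (s.addEdge c a).weight β m = s.weight β m + Pi.single a 1 := by
  ext i
  simp [weight, addEdge, add_assoc]

end MergedGraph

lemma attachmentStep (hβ : 0 < β) (hm : 1 ≤ m) (ht : 1 ≤ t) (htn : t ≤ n * m) (f : ParentSeq t) :
    AttachmentStep (m : ℝ) ((1 + β) * m) ((1 + β) * (m - (t % m : ℕ))) (totalWeight β t)
      (blockIndex m n t) (blockWeight β m) (mergedGraph m n f).inDegree
      ((mergedGraph m n f).weight β m) ((mergedGraph m n f).attachWeight β m t)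
      (mergedGraph m n f).adj := by
  have hmod : ((t % m : ℕ) : ℝ) ≤ m := by exact_mod_cast (Nat.mod_lt t (by omega)).le
  have : (0 : ℝ) ≤ (t % m : ℕ) := by positivity
  have ht' : (1 : ℝ) ≤ t := by exact_mod_cast ht
  exact
  { one_le := by exact_mod_cast hm
    Z_nonneg := inDegree_nonneg f
    M_nonneg := adj_nonneg f
    M_symm := adj_symm f
    M_diag := adj_self f
    M_le := adj_le hm htn f
    sum_row_le := (sum_adj_blockIndex_le hm htn f).trans hmod
    Z_self_le := (inDegree_blockIndex_le hm htn f).trans hmod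
    w_nonneg := blockWeight_nonneg hβ hm
    w_le := blockWeight_le
    W_eq := fun _ => rfl
    L_pos := totalWeight_pos hβ ht
    X_nonneg := fun i => add_nonneg (inDegree_nonneg f i) (partialBlockWeight_nonneg hβ hm ht i)
    sum_X := by
      simp only [MergedGraph.attachWeight, sum_add_distrib, sum_inDegree f ht,
        sum_partialBlockWeight hm htn, totalWeight]
      ring
    sum_Z_le := by
      rw [sum_inDegree f ht, totalWeight]
      nlinarith
    X_self := by
      rw [MergedGraph.attachWeight, partialBlockWeight_blockIndex hm htn, MergedGraph.weight]
      ring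
    g_nonneg := mul_nonneg (by linarith) (by linarith)
    g_le := mul_le_mul_of_nonneg_left (by linarith) (by linarith)
    X_eq_or := fun i hi => by
      rcases lt_or_gt_of_ne hi with hlt | hgt
      · exact Or.inl <| by
          rw [MergedGraph.attachWeight, partialBlockWeight_of_lt hm htn hlt, MergedGraph.weight,
            add_comm]
      · exact Or.inr ⟨by rw [MergedGraph.attachWeight, partialBlockWeight_of_gt hm htn hgt,
          inDegree_of_gt htn f hgt, add_zero], inDegree_of_gt htn f hgt, adj_of_gt htn f hgt⟩ }

lemma sum_blockIndex_pred_eq (hm : 1 ≤ m) (ht : 1 ≤ t) (htn : t ≤ n * m) (a : Fin (n + 1)) :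
    ∑ v ∈ Icc 1 t, (if blockIndex m n (v - 1) = a then (if 2 ≤ v then 1 else 0) + β else 0) =
      partialBlockWeight β m t a := by
  induction t, ht using Nat.le_induction with
  | base =>
    have h0 : blockIndex m n 0 = 0 := by simp [blockIndex]
    have h1 := partialBlockWeight_succ (β := β) hm (Nat.zero_le (n * m)) a
    rw [partialBlockWeight_zero, h0, zero_add] at h1
    simp only [h1, Icc_self, sum_singleton, Nat.sub_self, h0, eq_comm (a := a),
      show ¬2 ≤ 1 by norm_num, if_false]
    split_ifs <;> ring
  | succ t ht ih =>
    rw [sum_Icc_succ_top (by omega), ih (by omega), partialBlockWeight_succ hm (by omega),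
      Nat.add_sub_cancel, if_pos (show 2 ≤ t + 1 by omega)]

lemma sum_deg_add_blockIndex_pred_eq (hm : 1 ≤ m) (ht : 1 ≤ t) (htn : t ≤ n * m)
    (f : ParentSeq t) (a : Fin (n + 1)) :
    ∑ v ∈ Icc 1 t, (if blockIndex m n (v - 1) = a then (deg f t v : ℝ) + β else 0) =
      (mergedGraph m n f).attachWeight β m t a := by
  have hdeg (v : ℕ) : (if blockIndex m n (v - 1) = a then (deg f t v : ℝ) + β else 0) =
      (∑ j ∈ Icc 2 t, if pval f j = v then (if blockIndex m n (v - 1) = a then 1 else 0) else 0) +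
        (if blockIndex m n (v - 1) = a then (if 2 ≤ v then 1 else 0) + β else 0) := by
    unfold deg
    split_ifs <;> simp [sum_boole]
    ring
  have hpval (j : ℕ) (hj : j ∈ Icc 2 t) : (∑ v ∈ Icc 1 t,
      if pval f j = v then (if blockIndex m n (v - 1) = a then (1 : ℝ) else 0) else 0) =
        if blockIndex m n (pval f j - 1) = a then 1 else 0 := by
    have hp := mem_Icc.mp (pval_mem_Icc f hj)
    have hjt := mem_Icc.mp hj
    rw [sum_ite_eq, if_pos (mem_Icc.mpr (by omega))]
  simp only [hdeg]
  rw [sum_add_distrib, sum_blockIndex_pred_eq hm ht htn, sum_comm, sum_congr rfl hpval,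
    sum_boole, MergedGraph.attachWeight, mergedGraph]

end Attachment

section Expectation

variable {β : ℝ} {m n t : ℕ}

/-- The expectation of the observable `F` of the merged graph of `t` tree vertices. -/
noncomputable def mergedE (β : ℝ) (m n t : ℕ) (F : MergedGraph n → ℝ) : ℝ :=
  moriE t β fun f => F (mergedGraph m n f)

lemma mergedE_add (F G : MergedGraph n → ℝ) :
    mergedE β m n t (fun s => F s + G s) = mergedE β m n t F + mergedE β m n t G := by
  simp only [mergedE, moriE, mul_add, sum_add_distrib]

lemma mergedE_sub (F G : MergedGraph n → ℝ) :
    mergedE β m n t (fun s => F s - G s) = mergedE β m n t F - mergedE β m n t G := by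
  simp only [mergedE, moriE, mul_sub, sum_sub_distrib]

lemma mergedE_const_mul (r : ℝ) (F : MergedGraph n → ℝ) :
    mergedE β m n t (fun s => r * F s) = r * mergedE β m n t F := by
  simp only [mergedE, moriE, mul_left_comm _ r, ← mul_sum]

lemma mergedE_div (F : MergedGraph n → ℝ) (r : ℝ) :
    mergedE β m n t (fun s => F s / r) = mergedE β m n t F / r := by
  simp only [mergedE, moriE, mul_div_assoc', ← sum_div]

lemma mergedE_mono (hβ : 0 < β) {F G : MergedGraph n → ℝ}
    (hFG : ∀ f : ParentSeq t, F (mergedGraph m n f) ≤ G (mergedGraph m n f)) :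
    mergedE β m n t F ≤ mergedE β m n t G :=
  sum_le_sum fun f _ => mul_le_mul_of_nonneg_left (hFG f) (moriP_nonneg hβ f)

lemma mergedE_congr {F G : MergedGraph n → ℝ}
    (hFG : ∀ f : ParentSeq t, F (mergedGraph m n f) = G (mergedGraph m n f)) :
    mergedE β m n t F = mergedE β m n t G :=
  sum_congr rfl fun f _ => congrArg _ (hFG f)

lemma mergedE_one (F : MergedGraph n → ℝ) : mergedE β m n 1 F = F ⟨0, 0⟩ := by
  have hempty : IsEmpty (Set.Icc 2 1) := ⟨fun t => by have := t.2.1.trans t.2.2; omega⟩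
  have : Unique (ParentSeq 1) := by unfold ParentSeq; infer_instance
  have hgraph (f : ParentSeq 1) : mergedGraph m n f = ⟨0, 0⟩ := by
    ext <;> simp [mergedGraph]
  simp [mergedE, moriE, moriP, hgraph]

lemma mergedE_succ (hm : 1 ≤ m) (ht : 1 ≤ t) (htn : t ≤ n * m) (F : MergedGraph n → ℝ) :
    mergedE β m n (t + 1) F = mergedE β m n t fun s =>
      weightedMean (s.attachWeight β m t) (totalWeight β t)
        fun a => F (s.addEdge (blockIndex m n t) a) := by
  unfold mergedE moriE
  rw [← Equiv.sum_comp (parentSeqSuccEquiv ht).symm, Fintype.sum_prod_type]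
  refine sum_congr rfl fun f _ => ?_
  set H := fun a => F ((mergedGraph m n f).addEdge (blockIndex m n t) a)
  calc ∑ v : Set.Icc 1 t, moriP β ((parentSeqSuccEquiv ht).symm (f, v)) *
        F (mergedGraph m n ((parentSeqSuccEquiv ht).symm (f, v)))
    _ = ∑ v : Set.Icc 1 t, moriP β f *
          (((deg f t v : ℝ) + β) / totalWeight β t * H (blockIndex m n (v - 1))) :=
        sum_congr rfl fun v _ => by rw [moriP_symm, mergedGraph_symm, mul_assoc]
    _ = ∑ v ∈ Icc 1 t, moriP β f *
          (((deg f t v : ℝ) + β) / totalWeight β t * H (blockIndex m n (v - 1))) :=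
        (sum_subtype (Icc 1 t) (by simp) fun v => moriP β f *
          (((deg f t v : ℝ) + β) / totalWeight β t * H (blockIndex m n (v - 1)))).symm
    _ = moriP β f * ∑ v ∈ Icc 1 t, ∑ a,
          (if blockIndex m n (v - 1) = a then (deg f t v : ℝ) + β else 0) * H a /
            totalWeight β t := by
        simp only [ite_mul, zero_mul, ite_div, zero_div, sum_ite_eq, mem_univ, if_true, mul_sum,
          div_mul_eq_mul_div]
    _ = moriP β f * weightedMean _ (totalWeight β t) H := by
        rw [sum_comm, weightedMean, sum_div]
        simp only [← sum_mul, ← sum_div, sum_deg_add_blockIndex_pred_eq hm ht htn f]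

lemma moriE_const (hβ : 0 < β) (ht : 1 ≤ t) (r : ℝ) : moriE t β (fun _ => r) = r := by
  suffices hconst : ∀ n, t ≤ n * 1 → mergedE β 1 n t (fun _ => r) = r from hconst t (by omega)
  intro n htn
  induction t, ht using Nat.le_induction with
  | base => exact mergedE_one _
  | succ t ht ih =>
    have hstep (f : ParentSeq t) :=
      (attachmentStep (n := n) hβ le_rfl ht (by omega) f).weightedMean_const r
    rw [mergedE_succ le_rfl ht (by omega)]
    exact (mergedE_congr (G := fun _ => r) hstep).trans (ih (by omega))

lemma mergedE_const (hβ : 0 < β) (ht : 1 ≤ t) (r : ℝ) : mergedE β m n t (fun _ => r) = r :=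
  moriE_const hβ ht r

lemma mergedE_nonneg (hβ : 0 < β) {F : MergedGraph n → ℝ}
    (hF : ∀ f : ParentSeq t, 0 ≤ F (mergedGraph m n f)) : 0 ≤ mergedE β m n t F :=
  sum_nonneg fun f _ => mul_nonneg (moriP_nonneg hβ f) (hF f)

lemma abs_mergedE_le (hβ : 0 < β) (F : MergedGraph n → ℝ) :
    |mergedE β m n t F| ≤ mergedE β m n t fun s => |F s| := by
  refine (abs_sum_le_sum_abs _ _).trans (sum_le_sum fun f _ => ?_)
  rw [abs_mul, abs_of_nonneg (moriP_nonneg hβ f)]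

lemma abs_mergedE_succ_sub_le (hβ : 0 < β) (hm : 1 ≤ m) (ht : 1 ≤ t) (htn : t ≤ n * m)
    {F G D : MergedGraph n → ℝ}
    (hF : ∀ f : ParentSeq t,
      |weightedMean ((mergedGraph m n f).attachWeight β m t) (totalWeight β t)
          (fun a => F ((mergedGraph m n f).addEdge (blockIndex m n t) a)) -
        G (mergedGraph m n f)| ≤ D (mergedGraph m n f)) :
    |mergedE β m n (t + 1) F - mergedE β m n t G| ≤ mergedE β m n t D := by
  rw [mergedE_succ hm ht htn, ← mergedE_sub]
  exact (abs_mergedE_le hβ _).trans (mergedE_mono hβ hF)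

end Expectation

/-! ### Moments of the merged graph -/

section Moments

variable {β : ℝ} {m : ℕ}

/-- The observables `F n t` of the merged graph have expectation `O(t ^ θ)`, uniformly in `n`. -/
def MomentBounded (β : ℝ) (m : ℕ) (θ : ℝ) (F : ∀ n, ℕ → MergedGraph n → ℝ) : Prop :=
  PowerBounded m θ fun n t => mergedE β m n t (F n t)

namespace MomentBounded

variable {θ θ' : ℝ} {F G : ∀ n, ℕ → MergedGraph n → ℝ}

lemma mono (hβ : 0 < β) (hG : MomentBounded β m θ G)
    (hFG : ∀ n t, 1 ≤ t → t ≤ n * m → ∀ f : ParentSeq t,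
      F n t (mergedGraph m n f) ≤ G n t (mergedGraph m n f)) :
    MomentBounded β m θ F :=
  PowerBounded.mono hG fun n t ht htn => mergedE_mono hβ (hFG n t ht htn)

lemma mono_exponent (hF : MomentBounded β m θ F) (hθ : θ ≤ θ') : MomentBounded β m θ' F :=
  PowerBounded.mono_exponent hF hθ

lemma const (hβ : 0 < β) (c : ℝ) (hθ : 0 ≤ θ) : MomentBounded β m θ fun _ _ _ => c :=
  (PowerBounded.const c hθ).mono fun _ _ ht _ => (mergedE_const hβ ht c).le

lemma add (hF : MomentBounded β m θ F) (hG : MomentBounded β m θ G) :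
    MomentBounded β m θ fun n t s => F n t s + G n t s := by
  simpa only [MomentBounded, mergedE_add] using PowerBounded.add hF hG

lemma const_mul (hF : MomentBounded β m θ F) {c : ℝ} (hc : 0 ≤ c) :
    MomentBounded β m θ fun n t s => c * F n t s := by
  simpa only [MomentBounded, mergedE_const_mul] using PowerBounded.const_mul hF hc

lemma div_totalWeight (hF : MomentBounded β m θ F) (hβ : 0 < β) :
    MomentBounded β m (θ - 1) fun n t s => F n t s / totalWeight β t := by
  simpa only [MomentBounded, mergedE_div] using PowerBounded.div_totalWeight hF hβ

lemma of_growth (hβ : 0 < β) (hm : 1 ≤ m) {q A U : ℝ} (hq₀ : 0 ≤ q) (hA : 0 ≤ A) (hθ : 0 ≤ θ)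
    (hq : q / (2 + β) < θ) (hG : MomentBounded β m (θ - 1) G) (hF₁ : ∀ n, F n 1 ⟨0, 0⟩ ≤ U)
    (hF : ∀ n t, 1 ≤ t → t ≤ n * m → ∀ f : ParentSeq t,
      weightedMean ((mergedGraph m n f).attachWeight β m t) (totalWeight β t)
          (fun a => F n (t + 1) ((mergedGraph m n f).addEdge (blockIndex m n t) a)) ≤
        (1 + q / totalWeight β t + A / totalWeight β t ^ 2) * F n t (mergedGraph m n f) +
          G n t (mergedGraph m n f)) :
    MomentBounded β m θ F := by
  refine PowerBounded.of_growth hβ hq₀ hA hθ hq hG (fun n => (mergedE_one _).trans_le (hF₁ n))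
    fun n t ht htn => ?_
  rw [mergedE_succ hm ht htn.le, ← mergedE_const_mul, ← mergedE_add]
  exact mergedE_mono hβ (hF n t ht htn.le)

lemma of_block_growth (hβ : 0 < β) (hm : 1 ≤ m) {A : ℝ} (hA : 0 ≤ A) (hθ : -1 ≤ θ)
    (hG : MomentBounded β m θ G) (hF₁ : ∀ n, F n 1 ⟨0, 0⟩ ≤ 0)
    (hF₀ : ∀ n t, 1 ≤ t → t ≤ n * m → t % m = 0 → ∀ f : ParentSeq t,
      F n t (mergedGraph m n f) ≤ 0)
    (hG₀ : ∀ n t, 1 ≤ t → t ≤ n * m → ∀ f : ParentSeq t, 0 ≤ G n t (mergedGraph m n f))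
    (hF : ∀ n t, 1 ≤ t → t ≤ n * m → (t + 1) % m ≠ 0 → ∀ f : ParentSeq t,
      weightedMean ((mergedGraph m n f).attachWeight β m t) (totalWeight β t)
          (fun a => F n (t + 1) ((mergedGraph m n f).addEdge (blockIndex m n t) a)) ≤
        A * F n t (mergedGraph m n f) + G n t (mergedGraph m n f)) :
    MomentBounded β m θ F := by
  have hG_nonneg (n t : ℕ) (ht : 1 ≤ t) (htn : t ≤ n * m) : 0 ≤ mergedE β m n t (G n t) :=
    mergedE_nonneg hβ (hG₀ n t ht htn)
  refine PowerBounded.of_block_growth hm hA hθ hG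
    (fun n hn => ((mergedE_one _).trans_le (hF₁ n)).trans (hG_nonneg n 1 le_rfl hn))
    (fun n t ht htn hmod => le_trans ?_ (hG_nonneg n t ht htn)) fun n t ht htn hmod => ?_
  · exact (mergedE_mono hβ (hF₀ n t ht htn hmod)).trans_eq (mergedE_const hβ ht 0)
  · rw [mergedE_succ hm ht htn.le, ← mergedE_const_mul, ← mergedE_add]
    exact mergedE_mono hβ (hF n t ht htn.le hmod)

end MomentBounded

end Moments

lemma blockIndex_succ {m n t : ℕ} (hmod : (t + 1) % m ≠ 0) :
    blockIndex m n (t + 1) = blockIndex m n t := by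
  rw [blockIndex, Nat.succ_div_of_not_dvd fun h => hmod (Nat.mod_eq_zero_of_dvd h), blockIndex]

section Weights

variable {β : ℝ} {m n t : ℕ}

/-- The growth exponent `ρ = (4 + β) / (2 + β)` of the bounds: the third moments of the degrees
have order at most `t ^ ρ`. -/
noncomputable def growthExponent (β : ℝ) : ℝ := 1 + 2 / (2 + β)

/-- The limit of `∑ᵢ (Wᵢ² - wᵢ²) / t`, where `W` and `w` are the final and the initial weights. -/
noncomputable def weightSqRate (β : ℝ) (m : ℕ) : ℝ := ((2 + β) + 2 * (m * (1 + β) ^ 2)) / β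

lemma one_lt_growthExponent (hβ : 0 < β) : 1 < growthExponent β := by
  have : 0 < 2 / (2 + β) := by positivity
  rw [growthExponent]
  linarith

lemma growthExponent_lt_two (hβ : 0 < β) : growthExponent β < 2 := by
  have : 2 / (2 + β) < 1 := (div_lt_one (by linarith)).mpr (by linarith)
  rw [growthExponent]
  linarith

lemma four_div_lt_growthExponent (hβ : 0 < β) : 4 / (2 + β) < growthExponent β := by
  rw [growthExponent, div_lt_iff₀ (by linarith), add_mul, div_mul_cancel₀ _ (by linarith)]
  linarith

lemma weightSqRate_nonneg (hβ : 0 < β) : 0 ≤ weightSqRate β m := by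
  unfold weightSqRate
  positivity

namespace MergedGraph

/-- The in-degree of the vertex to which the next tree vertex belongs. -/
abbrev currentInDegree (m t : ℕ) (s : MergedGraph n) : ℝ := s.inDegree (blockIndex m n t)

/-- The expected weight of the end point of the next edge. -/
noncomputable abbrev meanWeight (β : ℝ) (m t : ℕ) (s : MergedGraph n) : ℝ :=
  weightedMean (s.attachWeight β m t) (totalWeight β t) (s.weight β m)

/-- The second moment of one plus the weight of the end point of the next edge. -/
noncomputable abbrev meanWeightSq (β : ℝ) (m t : ℕ) (s : MergedGraph n) : ℝ :=
  weightedMean (s.attachWeight β m t) (totalWeight β t) fun a => (1 + s.weight β m a) ^ 2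

/-- The deviation of `∑ᵢ (Wᵢ² - wᵢ²)` from its limit behaviour. -/
noncomputable def weightSqDeviation (β : ℝ) (m t : ℕ) (s : MergedGraph n) : ℝ :=
  ∑ i, (s.weight β m i ^ 2 - blockWeight β m i ^ 2) - weightSqRate β m * t

/-- The total weight of the neighbours of the vertex to which the next tree vertex belongs. -/
noncomputable abbrev neighborWeight (β : ℝ) (m t : ℕ) (s : MergedGraph n) : ℝ :=
  (s.adj *ᵥ s.weight β m) (blockIndex m n t)

/-- `MoriGraph.edgeWeight` of a merged graph with its own weights. -/
noncomputable abbrev edgeWeight (β : ℝ) (m : ℕ) (s : MergedGraph n) : ℝ :=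
  MoriGraph.edgeWeight s.adj (s.weight β m)

/-- `MoriGraph.starWeight` of a merged graph with its own weights. -/
noncomputable abbrev starWeight (β : ℝ) (m : ℕ) (s : MergedGraph n) : ℝ :=
  MoriGraph.starWeight s.adj (s.weight β m)

/-- `MoriGraph.cherryWeight` of a merged graph, at the vertex to which the next tree vertex
belongs. -/
noncomputable abbrev cherryWeight (β : ℝ) (m t : ℕ) (s : MergedGraph n) : ℝ :=
  MoriGraph.cherryWeight s.adj (s.weight β m) (blockIndex m n t)

/-- `MoriGraph.triangleCount` of a merged graph. -/
noncomputable abbrev triangleCount (s : MergedGraph n) : ℝ := MoriGraph.triangleCount s.adj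

lemma weightSqDeviation_addEdge (s : MergedGraph n) (c a : Fin (n + 1)) :
    (s.addEdge c a).weightSqDeviation β m (t + 1) =
      s.weightSqDeviation β m t + (2 * s.weight β m a + 1 - weightSqRate β m) := by
  have hsq (i : Fin (n + 1)) : (s.weight β m + Pi.single a 1 : Fin (n + 1) → ℝ) i ^ 2 =
      s.weight β m i ^ 2 + if i = a then 2 * s.weight β m a + 1 else 0 := by
    rcases eq_or_ne i a with rfl | hi
    · simp
      ring
    · simp [hi]
  simp only [weightSqDeviation, weight_addEdge, hsq, sum_sub_distrib, sum_add_distrib, sum_ite_eq',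
    mem_univ, if_true]
  push_cast
  ring

end MergedGraph

lemma exists_meanWeight_eq (hβ : 0 < β) (hm : 1 ≤ m) (ht : 1 ≤ t) (htn : t ≤ n * m)
    (f : ParentSeq t) : ∃ e, |e| ≤ (1 + β) * m * m + 2 * (1 + β) * m ∧
      (mergedGraph m n f).meanWeight β m t = ((mergedGraph m n f).weightSqDeviation β m t +
        (weightSqRate β m + m * (1 + β) ^ 2) * t + e) / totalWeight β t := by
  have h := attachmentStep hβ hm ht htn f
  set s := mergedGraph m n f
  have hw := abs_sum_blockWeight_mul_sub_le hβ hm ht htn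
  have hX : ∀ i, s.attachWeight β m t i - s.inDegree i = partialBlockWeight β m t i := fun i => by
    rw [MergedGraph.attachWeight, add_sub_cancel_left]
  have hgZ : |(1 + β) * (m - (t % m : ℕ)) * s.currentInDegree m t| ≤ (1 + β) * m * m := by
    rw [abs_of_nonneg (mul_nonneg h.g_nonneg (h.Z_nonneg _))]
    exact mul_le_mul h.g_le h.Z_self_le (h.Z_nonneg _) h.w₀_nonneg
  refine ⟨-((1 + β) * (m - (t % m : ℕ)) * s.currentInDegree m t) +
    (∑ i : Fin (n + 1), blockWeight β m i * partialBlockWeight β m t i - m * (1 + β) ^ 2 * t),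
    (abs_add_le _ _).trans (by rw [abs_neg]; exact add_le_add hgZ hw), ?_⟩
  rw [MergedGraph.meanWeight, h.weightedMean_W, MergedGraph.weightSqDeviation]
  simp only [hX]
  ring

lemma momentBounded_sum_inDegree_cube (hβ : 0 < β) (hm : 1 ≤ m) :
    MomentBounded β m (growthExponent β) fun _ _ s => ∑ i, s.inDegree i ^ 3 := by
  have hρ := one_lt_growthExponent hβ
  refine .of_growth (q := 4) (A := 0) (U := 0) hβ hm (by norm_num) le_rfl (by linarith)
    (four_div_lt_growthExponent hβ)
    (.const hβ ((3 * ((1 + β) * m) + 3) ^ 2 / 4 + 3 * ((1 + β) * m) + 1) (by linarith)) (by simp)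
    fun n t ht htn f => ?_
  rw [zero_div, add_zero]
  exact (attachmentStep hβ hm ht htn f).weightedMean_sum_cube_le

lemma momentBounded_meanWeightSq (hβ : 0 < β) (hm : 1 ≤ m) :
    MomentBounded β m (growthExponent β - 1) fun _ t s => s.meanWeightSq β m t := by
  have hρ := one_lt_growthExponent hβ
  refine .mono hβ (((MomentBounded.const hβ 1 (by linarith)).add
    ((momentBounded_sum_inDegree_cube hβ hm).div_totalWeight hβ)).const_mul
    (c := 2 * (1 + (1 + β) * m) ^ 2 + 2 * ((1 + β) * m)) (by positivity)) fun n t ht htn f => ?_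
  exact (attachmentStep hβ hm ht htn f).weightedMean_one_add_W_sq_le

lemma two_mul_weightSqDeviation_mul_drift_le (hβ : 0 < β) (hm : 1 ≤ m) (ht : 1 ≤ t)
    (htn : t ≤ n * m) (f : ParentSeq t) :
    2 * (mergedGraph m n f).weightSqDeviation β m t *
        (2 * (mergedGraph m n f).meanWeight β m t + 1 - weightSqRate β m) ≤
      (4 / totalWeight β t + 1 / totalWeight β t ^ 2) *
          (mergedGraph m n f).weightSqDeviation β m t ^ 2 +
        4 * (|weightSqRate β m - 1| + ((1 + β) * m * m + 2 * (1 + β) * m)) ^ 2 := by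
  obtain ⟨e, he, hW⟩ := exists_meanWeight_eq hβ hm ht htn f
  rw [hW]
  set G := (mergedGraph m n f).weightSqDeviation β m t
  set σ := weightSqRate β m with hσ
  set δ := e + (σ - 1)
  have hL := totalWeight_pos hβ ht
  have hδ : δ ^ 2 ≤ (|σ - 1| + ((1 + β) * m * m + 2 * (1 + β) * m)) ^ 2 :=
    sq_le_sq.mpr (((abs_add_le e (σ - 1)).trans (by linarith)).trans (le_abs_self _))
  have hrate : 2 * (σ + m * (1 + β) ^ 2) = (σ - 1) * (2 + β) := by
    rw [hσ, weightSqRate]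
    field_simp
    ring
  have hdrift : 2 * ((G + (σ + m * (1 + β) ^ 2) * t + e) / totalWeight β t) + 1 - σ =
      2 * (G + δ) / totalWeight β t := by
    field_simp
    unfold totalWeight
    linear_combination (t : ℝ) * hrate
  have hsquare := sq_nonneg (G / totalWeight β t - 2 * δ)
  calc 2 * G * (2 * ((G + (σ + m * (1 + β) ^ 2) * t + e) / totalWeight β t) + 1 - σ)
    _ = 4 / totalWeight β t * G ^ 2 + 4 * (G / totalWeight β t) * δ := by
        rw [hdrift]
        ring
    _ ≤ 4 / totalWeight β t * G ^ 2 + ((G / totalWeight β t) ^ 2 + 4 * δ ^ 2) := by linarith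
    _ ≤ 4 / totalWeight β t * G ^ 2 + ((G / totalWeight β t) ^ 2 +
          4 * (|σ - 1| + ((1 + β) * m * m + 2 * (1 + β) * m)) ^ 2) := by gcongr
    _ = (4 / totalWeight β t + 1 / totalWeight β t ^ 2) * G ^ 2 +
          4 * (|σ - 1| + ((1 + β) * m * m + 2 * (1 + β) * m)) ^ 2 := by ring

lemma meanWeightSq_nonneg (hβ : 0 < β) (hm : 1 ≤ m) (ht : 1 ≤ t) (htn : t ≤ n * m)
    (f : ParentSeq t) : 0 ≤ (mergedGraph m n f).meanWeightSq β m t := by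
  have h := attachmentStep hβ hm ht htn f
  exact (h.weightedMean_const 0).ge.trans (h.weightedMean_mono fun a => sq_nonneg _)

lemma momentBounded_weightSqDeviation_sq (hβ : 0 < β) (hm : 1 ≤ m) :
    MomentBounded β m (growthExponent β) fun _ t s => s.weightSqDeviation β m t ^ 2 := by
  have hρ := one_lt_growthExponent hβ
  set σ := weightSqRate β m
  set C := |σ - 1| + ((1 + β) * m * m + 2 * (1 + β) * m)
  have herror := ((momentBounded_meanWeightSq hβ hm).const_mul (c := 8) (by norm_num)).add
    (.const hβ (2 * (1 + σ) ^ 2 + 4 * C ^ 2) (by linarith))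
  refine .of_growth (q := 4) (A := 1) (U := σ ^ 2) hβ hm (by norm_num) zero_le_one (by linarith)
    (four_div_lt_growthExponent hβ) herror (fun n => ?_) fun n t ht htn f => ?_
  · simp [MergedGraph.weightSqDeviation, MergedGraph.weight, σ]
  have h := attachmentStep hβ hm ht htn f
  simp only [MergedGraph.weightSqDeviation_addEdge]
  have hdrift := two_mul_weightSqDeviation_mul_drift_le hβ hm ht htn f
  refine (h.weightedMean_sq_recenter_le _ _).trans ?_
  linarith

lemma momentBounded_abs_weightSqDeviation (hβ : 0 < β) (hm : 1 ≤ m) :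
    MomentBounded β m (growthExponent β / 2) fun _ t s => |s.weightSqDeviation β m t| := by
  obtain ⟨K, hK, hbound⟩ := momentBounded_weightSqDeviation_sq hβ hm
  refine ⟨K + 1, by positivity, fun n t ht htn => ?_⟩
  set x : ℝ := (t : ℝ) ^ (growthExponent β / 2)
  have ht₀ : (0 : ℝ) < t := by exact_mod_cast ht
  have hx : 0 < x := Real.rpow_pos_of_pos ht₀ _
  have hxx : (t : ℝ) ^ growthExponent β = x * x := by rw [← Real.rpow_add ht₀, add_halves]
  have hamgm (y : ℝ) : |y| ≤ x⁻¹ * y ^ 2 + x := by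
    rw [← sq_abs y, inv_mul_eq_div, ← sub_le_iff_le_add, le_div_iff₀ hx]
    nlinarith [sq_nonneg (|y| - x), mul_nonneg (abs_nonneg y) hx.le]
  calc mergedE β m n t (fun s => |s.weightSqDeviation β m t|)
    _ ≤ mergedE β m n t fun s => x⁻¹ * s.weightSqDeviation β m t ^ 2 + x :=
        mergedE_mono hβ fun f => hamgm _
    _ = x⁻¹ * mergedE β m n t (fun s => s.weightSqDeviation β m t ^ 2) + x := by
        rw [mergedE_add, mergedE_const_mul, mergedE_const hβ ht]
    _ ≤ x⁻¹ * (K * (x * x)) + x := by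
        gcongr
        exact hxx ▸ hbound n t ht htn
    _ = (K + 1) * x := by
        field_simp

lemma momentBounded_neighborWeight_sq (hβ : 0 < β) (hm : 1 ≤ m) :
    MomentBounded β m (growthExponent β - 1) fun _ t s => s.neighborWeight β m t ^ 2 := by
  have hρ := one_lt_growthExponent hβ
  refine .of_block_growth (A := 2) hβ hm (by norm_num) (by linarith)
    ((momentBounded_meanWeightSq hβ hm).const_mul (c := 2 * ((m : ℝ) + 1) ^ 2) (by positivity))
    (fun n => by simp [MergedGraph.neighborWeight]) (fun n t _ htn hmod f => ?_)
    (fun n t ht htn f => ?_) fun n t ht htn hmod f => ?_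
  · simp [MergedGraph.neighborWeight, Matrix.mulVec, dotProduct,
      adj_blockIndex_of_mod_eq_zero hm htn f hmod]
  · exact mul_nonneg (by positivity) (meanWeightSq_nonneg hβ hm ht htn f)
  · simp only [MergedGraph.neighborWeight, blockIndex_succ hmod, MergedGraph.weight_addEdge]
    exact (attachmentStep hβ hm ht htn f).weightedMean_mulVec_self_sq_le

lemma momentBounded_neighborWeight (hβ : 0 < β) (hm : 1 ≤ m) :
    MomentBounded β m (growthExponent β / 2) fun _ t s => s.neighborWeight β m t := by
  have hρ := one_lt_growthExponent hβ
  have hρ' := growthExponent_lt_two hβ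
  refine .mono hβ (((MomentBounded.const hβ 1 (by linarith)).add
    (momentBounded_neighborWeight_sq hβ hm)).mono_exponent (by linarith)) fun n t _ _ f => ?_
  nlinarith [sq_nonneg ((mergedGraph m n f).neighborWeight β m t - 1)]

lemma momentBounded_currentInDegree (hβ : 0 < β) (hm : 1 ≤ m) :
    MomentBounded β m (-1) fun _ t s => s.currentInDegree m t := by
  have herror := ((MomentBounded.const (m := m) hβ ((1 + β) * m + m) le_rfl).div_totalWeight hβ)
  rw [zero_sub] at herror
  refine .of_block_growth (A := 1) hβ hm zero_le_one le_rfl herror (fun n => le_rfl)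
    (fun n t _ htn hmod f => ?_) (fun n t ht _ _ => ?_) fun n t ht htn hmod f => ?_
  · simpa [hmod] using (inDegree_blockIndex_le hm htn f)
  · have := totalWeight_pos hβ ht
    positivity
  · have h := attachmentStep hβ hm ht htn f
    set s := mergedGraph m n f
    set c := blockIndex m n t with hc
    have hstep (a : Fin (n + 1)) : (s.addEdge c a).currentInDegree m (t + 1) =
        s.currentInDegree m t + if a = c then 1 else 0 := by
      simp [MergedGraph.currentInDegree, blockIndex_succ hmod, ← hc, MergedGraph.addEdge,
        Pi.single_apply, eq_comm]
    have hX : s.attachWeight β m t c ≤ (1 + β) * m + m :=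
      (h.X_le c).trans (by linarith [h.Z_self_le])
    have hmean : weightedMean (s.attachWeight β m t) (totalWeight β t)
        (fun a => if a = c then 1 else 0) = s.attachWeight β m t c / totalWeight β t := by
      simp [weightedMean]
    simp only [hstep]
    rw [weightedMean_add, h.weightedMean_const, hmean, one_mul]
    gcongr
    exact h.L_pos.le

end Weights

section EdgeWeight

variable {β : ℝ} {m n t : ℕ}

/-- The limit of the expected edge weight divided by the number of tree vertices. -/
noncomputable def edgeWeightRate (β : ℝ) (m : ℕ) : ℝ :=
  2 * ((1 + β) * m) * (weightSqRate β m + m * (1 + β) ^ 2 + (2 + β)) / β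

lemma edgeWeightRate_nonneg (hβ : 0 < β) : 0 ≤ edgeWeightRate β m := by
  have := weightSqRate_nonneg (m := m) hβ
  unfold edgeWeightRate
  positivity

/-- A bound, up to a constant factor, for the difference between the expected edge weight after the
next step and its main terms. -/
noncomputable def MergedGraph.driftError (β : ℝ) (m t : ℕ) (s : MergedGraph n) : ℝ :=
  (|s.weightSqDeviation β m t| + s.neighborWeight β m t + 1) / totalWeight β t +
    s.currentInDegree m t

lemma momentBounded_driftError (hβ : 0 < β) (hm : 1 ≤ m) :
    MomentBounded β m (growthExponent β / 2 - 1) fun _ t s => s.driftError β m t := by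
  have hρ := one_lt_growthExponent hβ
  exact ((((momentBounded_abs_weightSqDeviation hβ hm).add
    (momentBounded_neighborWeight hβ hm)).add (.const hβ 1 (by linarith))).div_totalWeight hβ).add
    ((momentBounded_currentInDegree hβ hm).mono_exponent (by linarith))

lemma driftError_bounds (hβ : 0 < β) (hm : 1 ≤ m) (ht : 1 ≤ t) (htn : t ≤ n * m)
    (f : ParentSeq t) :
    |(mergedGraph m n f).weightSqDeviation β m t| / totalWeight β t ≤
        (mergedGraph m n f).driftError β m t ∧
      (mergedGraph m n f).neighborWeight β m t / totalWeight β t ≤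
        (mergedGraph m n f).driftError β m t ∧
      1 / totalWeight β t ≤ (mergedGraph m n f).driftError β m t ∧
      (mergedGraph m n f).currentInDegree m t ≤ (mergedGraph m n f).driftError β m t := by
  have h := attachmentStep hβ hm ht htn f
  have hL := h.L_pos
  have hG : 0 ≤ |(mergedGraph m n f).weightSqDeviation β m t| / totalWeight β t := by positivity
  have hy : 0 ≤ (mergedGraph m n f).neighborWeight β m t / totalWeight β t :=
    div_nonneg (h.mulVec_nonneg _) hL.le
  have hinv : 0 ≤ 1 / totalWeight β t := by positivity
  have hZ : 0 ≤ (mergedGraph m n f).currentInDegree m t := h.Z_nonneg _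
  rw [MergedGraph.driftError, add_div, add_div]
  refine ⟨?_, ?_, ?_, ?_⟩ <;> linarith

lemma exists_abs_meanWeight_add_one_le (hβ : 0 < β) (hm : 1 ≤ m) :
    ∃ B, 0 ≤ B ∧ ∀ n t, 1 ≤ t → t ≤ n * m → ∀ f : ParentSeq t,
      |(mergedGraph m n f).meanWeight β m t + 1| ≤
        |(mergedGraph m n f).weightSqDeviation β m t| / totalWeight β t + B := by
  have hσ := weightSqRate_nonneg (m := m) hβ
  set r := weightSqRate β m + m * (1 + β) ^ 2
  set C := (1 + β) * m * m + 2 * (1 + β) * m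
  have : 0 < min 1 β := lt_min one_pos hβ
  refine ⟨(min 1 β)⁻¹ * (r + C) + 1, by positivity, fun n t ht htn f => ?_⟩
  obtain ⟨e, he, hW⟩ := exists_meanWeight_eq hβ hm ht htn f
  have hL := totalWeight_pos hβ ht
  have ht₀ : (1 : ℝ) ≤ t := by exact_mod_cast ht
  set G := (mergedGraph m n f).weightSqDeviation β m t
  have hC : 0 ≤ C := by positivity
  have hmain : |r * t + e| ≤ (r + C) * t := by
    refine (abs_add_le _ _).trans ?_
    rw [abs_of_nonneg (a := r * t) (by positivity), add_mul r C]
    exact add_le_add le_rfl (he.trans (le_mul_of_one_le_right hC ht₀))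
  calc |(mergedGraph m n f).meanWeight β m t + 1|
    _ = |G / totalWeight β t + (r * t + e) / totalWeight β t + 1| := by
        rw [hW, ← add_div, add_assoc]
    _ ≤ |G| / totalWeight β t + (r + C) * t / totalWeight β t + 1 := by
        refine (abs_add_three _ _ _).trans ?_
        rw [abs_div, abs_div, abs_of_pos hL, abs_one]
        gcongr
    _ ≤ |G| / totalWeight β t + (min 1 β)⁻¹ * ((r + C) * t / t) + 1 := by
        gcongr
        exact div_totalWeight_le hβ ht (by positivity)
    _ = |G| / totalWeight β t + ((min 1 β)⁻¹ * (r + C) + 1) := by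
        rw [mul_div_cancel_right₀ _ (by positivity), add_assoc]

lemma weight_blockIndex (s : MergedGraph n) : s.weight β m (blockIndex m n t) - (1 + β) * m =
    s.currentInDegree m t - if blockIndex m n t = 0 then 1 else 0 := by
  rw [MergedGraph.weight, blockWeight]
  ring

lemma abs_weight_blockIndex_sub_le (hβ : 0 < β) (hm : 1 ≤ m) (ht : 1 ≤ t) (htn : t ≤ n * m)
    (f : ParentSeq t) : |(mergedGraph m n f).weight β m (blockIndex m n t) - (1 + β) * m| ≤ m := by
  have h := attachmentStep hβ hm ht htn f
  rw [weight_blockIndex, abs_le]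
  have := h.Z_nonneg (blockIndex m n t)
  have := h.Z_self_le
  have := h.one_le
  constructor <;> split_ifs <;> linarith

lemma abs_weight_blockIndex_sub_le_driftError (hβ : 0 < β) (hm : 1 ≤ m) (ht : 1 ≤ t)
    (htn : t ≤ n * m) (f : ParentSeq t) :
    |(mergedGraph m n f).weight β m (blockIndex m n t) - (1 + β) * m| ≤
      (1 + (2 + β) * m) * (mergedGraph m n f).driftError β m t := by
  have h := attachmentStep hβ hm ht htn f
  have hL := h.L_pos
  obtain ⟨-, -, hinv, hZ⟩ := driftError_bounds hβ hm ht htn f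
  have hfirst : (if blockIndex m n t = 0 then (1 : ℝ) else 0) ≤
      (2 + β) * m * (1 / totalWeight β t) := by
    split_ifs with hc
    · have htm : t < m := by
        have hdiv : t / m = 0 := by rw [← blockIndex_val htn, hc, Fin.val_zero]
        exact (Nat.div_eq_zero_iff.mp hdiv).resolve_left (by omega)
      rw [mul_one_div, one_le_div hL]
      refine (totalWeight_le t).trans ?_
      gcongr
    · positivity
  rw [weight_blockIndex, add_mul, one_mul]
  refine (abs_sub _ _).trans (add_le_add ((abs_of_nonneg (h.Z_nonneg _)).trans_le hZ) ?_)
  rw [abs_of_nonneg (by positivity)]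
  exact hfirst.trans (by gcongr)

lemma abs_meanWeight_sub_le (hβ : 0 < β) (hm : 1 ≤ m) (ht : 1 ≤ t) (htn : t ≤ n * m)
    (f : ParentSeq t) :
    |(mergedGraph m n f).meanWeight β m t -
        (weightSqRate β m + m * (1 + β) ^ 2) * t / totalWeight β t| ≤
      (1 + ((1 + β) * m * m + 2 * (1 + β) * m)) * (mergedGraph m n f).driftError β m t := by
  obtain ⟨hG, -, hinv, -⟩ := driftError_bounds hβ hm ht htn f
  obtain ⟨e, he, hW⟩ := exists_meanWeight_eq hβ hm ht htn f
  have hL := totalWeight_pos hβ ht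
  set E := (1 + β) * m * m + 2 * (1 + β) * m
  set D := (mergedGraph m n f).driftError β m t
  set L := totalWeight β t
  rw [hW, ← sub_div, add_right_comm, add_sub_cancel_right, abs_div, abs_of_pos hL]
  calc _ ≤ (|(mergedGraph m n f).weightSqDeviation β m t| + E) / L := by
        gcongr
        exact (abs_add_le _ _).trans (by gcongr)
    _ = |(mergedGraph m n f).weightSqDeviation β m t| / L + E * (1 / L) := by ring
    _ ≤ D + E * D := by gcongr
    _ = (1 + E) * D := by ring

lemma exists_abs_weightedMean_edgeWeight_sub_le (hβ : 0 < β) (hm : 1 ≤ m) :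
    ∃ C, 0 ≤ C ∧ ∀ n t, 1 ≤ t → t ≤ n * m → ∀ f : ParentSeq t,
      |weightedMean ((mergedGraph m n f).attachWeight β m t) (totalWeight β t)
          (fun a => ((mergedGraph m n f).addEdge (blockIndex m n t) a).edgeWeight β m) -
        ((1 + 2 / totalWeight β t) * (mergedGraph m n f).edgeWeight β m +
          2 * ((1 + β) * m) * ((weightSqRate β m + m * (1 + β) ^ 2) * t + totalWeight β t) /
            totalWeight β t)| ≤
        C * (mergedGraph m n f).driftError β m t := by
  obtain ⟨B, hB, hmean⟩ := exists_abs_meanWeight_add_one_le hβ hm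
  set w₀ := (1 + β) * (m : ℝ)
  set E := w₀ * m + 2 * (1 + β) * m
  have : 0 ≤ w₀ := by positivity
  refine ⟨2 * w₀ + 2 * w₀ * (1 + E) + 2 * (m + (1 + (2 + β) * m) * B) +
    2 * (w₀ + m) * ((w₀ + m) * (w₀ + m + 1)), by positivity, fun n t ht htn f => ?_⟩
  have h := attachmentStep hβ hm ht htn f
  have hL := h.L_pos
  obtain ⟨hG, hy, hinv, -⟩ := driftError_bounds hβ hm ht htn f
  have hcenter := abs_meanWeight_sub_le hβ hm ht htn f
  have hmeanW := hmean n t ht htn f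
  have hdev := abs_weight_blockIndex_sub_le hβ hm ht htn f
  have hdev' := abs_weight_blockIndex_sub_le_driftError hβ hm ht htn f
  simp only [MergedGraph.weight_addEdge, MergedGraph.edgeWeight]
  set D := (mergedGraph m n f).driftError β m t
  set L := totalWeight β t
  set μ := (weightSqRate β m + m * (1 + β) ^ 2) * t / L with hμ
  have hmain : 2 * w₀ * ((weightSqRate β m + m * (1 + β) ^ 2) * t + L) / L =
      2 * w₀ * (μ + 1) := by
    rw [hμ, mul_div_assoc, add_div, div_self hL.ne']
  have hcross : |(mergedGraph m n f).weight β m (blockIndex m n t) - w₀| *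
      |(mergedGraph m n f).meanWeight β m t + 1| ≤ (m + (1 + (2 + β) * m) * B) * D := by
    refine (mul_le_mul_of_nonneg_left hmeanW (abs_nonneg _)).trans ?_
    rw [mul_add, add_mul, mul_right_comm _ B]
    gcongr
  rw [hmain]
  refine (h.abs_weightedMean_edgeWeight_sub_le μ).trans ?_
  calc _ ≤ 2 * w₀ * D + 2 * w₀ * ((1 + E) * D) + 2 * ((m + (1 + (2 + β) * m) * B) * D) +
        2 * (w₀ + m) * ((w₀ + m) * (w₀ + m + 1)) * D := by gcongr
    _ = _ := by ring

lemma exists_abs_mergedE_edgeWeight_succ_sub_le (hβ : 0 < β) (hm : 1 ≤ m) :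
    ∃ C, 0 ≤ C ∧ ∀ n t, 1 ≤ t → t < n * m →
      |mergedE β m n (t + 1) (fun s => s.edgeWeight β m) - edgeWeightRate β m * (t + 1 : ℕ)| ≤
        (1 + 2 / totalWeight β t) *
            |mergedE β m n t (fun s => s.edgeWeight β m) - edgeWeightRate β m * t| +
          (C * mergedE β m n t (fun s => s.driftError β m t) +
            |2 * edgeWeightRate β m - 4 * ((1 + β) * m)| / totalWeight β t) := by
  obtain ⟨C, hC, hstep⟩ := exists_abs_weightedMean_edgeWeight_sub_le hβ hm
  refine ⟨C, hC, fun n t ht htn => ?_⟩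
  set p := edgeWeightRate β m with hp_def
  set w₀ := (1 + β) * (m : ℝ) with hw₀
  have hL := totalWeight_pos hβ ht
  set L := totalWeight β t with hL_def
  set P := mergedE β m n t fun s => s.edgeWeight β m
  have hpath := abs_mergedE_succ_sub_le hβ hm ht htn.le
    (F := fun s => s.edgeWeight β m)
    (G := fun s => (1 + 2 / L) * s.edgeWeight β m +
      2 * w₀ * ((weightSqRate β m + m * (1 + β) ^ 2) * t + L) / L)
    (D := fun s => C * s.driftError β m t) (hstep n t ht htn.le)
  rw [mergedE_add, mergedE_const_mul, mergedE_const_mul, mergedE_const hβ ht] at hpath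
  have hrate : p * β = 2 * w₀ * (weightSqRate β m + m * (1 + β) ^ 2 + (2 + β)) := by
    rw [hp_def, edgeWeightRate, div_mul_cancel₀ _ hβ.ne', hw₀]
  have hmain : 2 * w₀ * ((weightSqRate β m + m * (1 + β) ^ 2) * t + L) / L - p * (t + 1 : ℕ) =
      -(1 + 2 / L) * (p * t) + (2 * p - 4 * w₀) / L := by
    push_cast
    field_simp
    rw [hL_def, totalWeight]
    linear_combination (-(t : ℝ)) * hrate
  calc _ ≤ |mergedE β m n (t + 1) (fun s => s.edgeWeight β m) - ((1 + 2 / L) * P +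
          2 * w₀ * ((weightSqRate β m + m * (1 + β) ^ 2) * t + L) / L)| +
        |(1 + 2 / L) * (P - p * t)| + |(2 * p - 4 * w₀) / L| := by
        refine le_of_eq_of_le (congrArg _ ?_) (abs_add_three _ _ _)
        linear_combination hmain
    _ ≤ C * mergedE β m n t (fun s => s.driftError β m t) + (1 + 2 / L) * |P - p * t| +
        |2 * p - 4 * w₀| / L := by
        rw [abs_mul, abs_div, abs_of_pos hL, abs_of_pos (a := 1 + 2 / L) (by positivity)]
        gcongr
    _ = _ := by ring

lemma powerBounded_abs_mergedE_edgeWeight_sub (hβ : 0 < β) (hm : 1 ≤ m) :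
    PowerBounded m (growthExponent β / 2) fun n t =>
      |mergedE β m n t (fun s => s.edgeWeight β m) - edgeWeightRate β m * t| := by
  have hρ := one_lt_growthExponent hβ
  have hp := edgeWeightRate_nonneg (m := m) hβ
  obtain ⟨C, hC, hstep⟩ := exists_abs_mergedE_edgeWeight_succ_sub_le hβ hm
  have herror := PowerBounded.add
    (PowerBounded.const_mul (momentBounded_driftError hβ hm) hC)
    (((PowerBounded.const (m := m) |2 * edgeWeightRate β m - 4 * ((1 + β) * m)|
      le_rfl).div_totalWeight hβ).mono_exponent
        (show (0 : ℝ) - 1 ≤ growthExponent β / 2 - 1 by linarith))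
  have hq : 2 / (2 + β) < growthExponent β / 2 := by
    linarith [four_div_lt_growthExponent hβ, show 4 / (2 + β) = 2 * (2 / (2 + β)) by ring]
  refine .of_growth (q := 2) (A := 0) (U := edgeWeightRate β m) hβ (by norm_num) le_rfl
    (by linarith) hq herror (fun n => ?_) fun n t ht htn => ?_
  · simp [mergedE_one, MergedGraph.edgeWeight, edgeWeight, abs_of_nonneg hp]
  · rw [zero_div, add_zero]
    exact hstep n t ht htn

end EdgeWeight

section Triangles

variable {β : ℝ} {m n t : ℕ}

lemma cherryWeight_of_mod_eq_zero (hm : 1 ≤ m) (htn : t ≤ n * m) (f : ParentSeq t)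
    (hmod : t % m = 0) : (mergedGraph m n f).cherryWeight β m t = 0 := by
  simp [MergedGraph.cherryWeight, cherryWeight, Matrix.mulVec, dotProduct,
    adj_blockIndex_of_mod_eq_zero hm htn f hmod]

/-- The limit of the increment of the expected cherry weight per edge added to the current block. -/
noncomputable def cherryWeightRate (β : ℝ) (m : ℕ) : ℝ := edgeWeightRate β m / (2 + β)

lemma cherryWeightRate_nonneg (hβ : 0 < β) : 0 ≤ cherryWeightRate β m :=
  div_nonneg (edgeWeightRate_nonneg hβ) (by linarith)

lemma abs_mergedE_cherryWeight_succ_sub_le (hβ : 0 < β) (hm : 1 ≤ m) (ht : 1 ≤ t)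
    (htn : t ≤ n * m) (hmod : (t + 1) % m ≠ 0) :
    |mergedE β m n (t + 1) (fun s => s.cherryWeight β m (t + 1)) -
        ((1 + 1 / totalWeight β t) * mergedE β m n t (fun s => s.cherryWeight β m t) +
          mergedE β m n t (fun s => s.edgeWeight β m) / totalWeight β t)| ≤
      2 * ((1 + β) * m + m) * mergedE β m n t (fun s => s.neighborWeight β m t) /
        totalWeight β t := by
  rw [← mergedE_const_mul, ← mergedE_div, ← mergedE_add, ← mergedE_const_mul, ← mergedE_div]
  refine abs_mergedE_succ_sub_le hβ hm ht htn fun f => ?_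
  have h := attachmentStep hβ hm ht htn f
  have hL := h.L_pos
  have hW := h.W_nonneg (blockIndex m n t)
  have hy := h.mulVec_nonneg (blockIndex m n t)
  simp only [MergedGraph.cherryWeight, blockIndex_succ hmod, MergedGraph.weight_addEdge]
  change |weightedMean _ _ (fun a => MoriGraph.cherryWeight
    (MoriGraph.addEdge (mergedGraph m n f).adj _ a) _ _) - _| ≤ _
  rw [h.weightedMean_cherryWeight, add_sub_add_left_eq_sub, ← sub_div, sub_sub_cancel_left,
    abs_div, abs_neg, abs_of_pos hL, abs_of_nonneg (by positivity)]
  gcongr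
  exact h.W_self_le

lemma abs_mergedE_cherryWeight_succ_sub_mod_mul_le (hβ : 0 < β) (hm : 1 ≤ m) (ht : 1 ≤ t)
    (htn : t ≤ n * m) (hmod : (t + 1) % m ≠ 0) :
    |mergedE β m n (t + 1) (fun s => s.cherryWeight β m (t + 1)) -
        ((t + 1) % m : ℕ) * cherryWeightRate β m| ≤
      (1 + (min 1 β)⁻¹) *
          |mergedE β m n t (fun s => s.cherryWeight β m t) - (t % m : ℕ) * cherryWeightRate β m| +
        (|mergedE β m n t (fun s => s.edgeWeight β m) - cherryWeightRate β m * (2 + β) * t| +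
          2 * ((1 + β) * m + m) * mergedE β m n t (fun s => s.neighborWeight β m t) +
          (m + 2 + β) * cherryWeightRate β m) / totalWeight β t := by
  have : 0 < min 1 β := lt_min one_pos hβ
  have hq := cherryWeightRate_nonneg (m := m) hβ
  set q := cherryWeightRate β m
  have hL := totalWeight_pos hβ ht
  have hpath := abs_mergedE_cherryWeight_succ_sub_le hβ hm ht htn hmod
  have hk : ((t % m : ℕ) : ℝ) + 2 ≤ m + 2 + β := by
    have : ((t % m : ℕ) : ℝ) ≤ m := by exact_mod_cast (Nat.mod_lt t (by omega)).le
    linarith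
  have hinv := one_div_totalWeight_le hβ ht
  set L := totalWeight β t with hL_def
  set V := mergedE β m n t fun s => s.cherryWeight β m t
  set P := mergedE β m n t fun s => s.edgeWeight β m
  set k : ℝ := ((t % m : ℕ) : ℝ)
  have hmain : (1 + 1 / L) * V + P / L - (((t + 1) % m : ℕ) : ℝ) * q =
      (1 + 1 / L) * (V - k * q) + (P - q * (2 + β) * t) / L + (k + 2) * q / L := by
    rw [succ_mod_of_ne_zero hmod]
    push_cast
    field_simp
    rw [hL_def, totalWeight]
    ring
  calc _ ≤ 2 * ((1 + β) * m + m) * mergedE β m n t (fun s => s.neighborWeight β m t) / L +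
        |(1 + 1 / L) * V + P / L - (((t + 1) % m : ℕ) : ℝ) * q| :=
        (abs_sub_le _ _ _).trans (add_le_add hpath le_rfl)
    _ ≤ 2 * ((1 + β) * m + m) * mergedE β m n t (fun s => s.neighborWeight β m t) / L +
        ((1 + (min 1 β)⁻¹) * |V - k * q| + |P - q * (2 + β) * t| / L + (m + 2 + β) * q / L) := by
        rw [hmain]
        refine add_le_add le_rfl ((abs_add_three _ _ _).trans ?_)
        rw [abs_mul, abs_div, abs_of_pos hL, abs_of_pos (a := 1 + 1 / L) (by positivity),
          abs_of_nonneg (a := (k + 2) * q / L) (by positivity)]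
        gcongr
    _ = _ := by ring

lemma powerBounded_abs_mergedE_cherryWeight_sub (hβ : 0 < β) (hm : 1 ≤ m) :
    PowerBounded m (growthExponent β / 2 - 1) fun n t =>
      |mergedE β m n t (fun s => s.cherryWeight β m t) - (t % m : ℕ) * cherryWeightRate β m| := by
  have hρ := one_lt_growthExponent hβ
  have hq := cherryWeightRate_nonneg (m := m) hβ
  set q := cherryWeightRate β m with hq_def
  have hp : edgeWeightRate β m = q * (2 + β) := by
    rw [hq_def, cherryWeightRate, div_mul_cancel₀]
    positivity
  have herror := (((powerBounded_abs_mergedE_edgeWeight_sub hβ hm).add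
    (PowerBounded.const_mul (momentBounded_neighborWeight hβ hm)
      (c := 2 * ((1 + β) * m + m)) (by positivity))).add
    (.const ((m + 2 + β) * q) (by linarith))).div_totalWeight hβ
  have : 0 < min 1 β := lt_min one_pos hβ
  have hbase (n t : ℕ) (ht : 1 ≤ t) (htn : t ≤ n * m) : (m + 2 + β) * q / totalWeight β t ≤
      (|mergedE β m n t (fun s => s.edgeWeight β m) - edgeWeightRate β m * t| +
        2 * ((1 + β) * m + m) * mergedE β m n t (fun s => s.neighborWeight β m t) +
        (m + 2 + β) * q) / totalWeight β t := by
    have hL := totalWeight_pos hβ ht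
    have hy : 0 ≤ mergedE β m n t fun s => s.neighborWeight β m t :=
      mergedE_nonneg hβ fun f => (attachmentStep hβ hm ht htn f).mulVec_nonneg _
    gcongr
    exact le_add_of_nonneg_left (by positivity)
  refine .of_block_growth (A := 1 + (min 1 β)⁻¹) hm (by positivity) (by linarith) herror
    (fun n hn => le_trans ?_ (hbase n 1 le_rfl hn))
    (fun n t ht htn hmod => le_trans ?_ (hbase n t ht htn)) fun n t ht htn hmod => ?_
  · have hk : ((1 % m : ℕ) : ℝ) ≤ 1 := by exact_mod_cast Nat.mod_le 1 m
    have hL : totalWeight β 1 = β := by simp [totalWeight]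
    have hV : (⟨0, 0⟩ : MergedGraph n).cherryWeight β m 1 = 0 := by simp [cherryWeight]
    rw [mergedE_one, hL, hV, zero_sub, abs_neg, abs_of_nonneg (by positivity), le_div_iff₀ hβ,
      mul_right_comm]
    gcongr
    nlinarith
  · have hL := totalWeight_pos hβ ht
    have hV : mergedE β m n t (fun s => s.cherryWeight β m t) = 0 :=
      (mergedE_congr fun f => cherryWeight_of_mod_eq_zero hm htn f hmod).trans
        (mergedE_const hβ ht 0)
    rw [hV, hmod, Nat.cast_zero, zero_mul, sub_zero, abs_zero]
    positivity
  · rw [hp]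
    exact abs_mergedE_cherryWeight_succ_sub_mod_mul_le hβ hm ht htn.le hmod

lemma mergedE_triangleCount_eq_sum (hβ : 0 < β) (hm : 1 ≤ m) (ht : 1 ≤ t) (htn : t ≤ n * m) :
    mergedE β m n t (fun s => s.triangleCount) =
      ∑ j ∈ Ico 1 t, mergedE β m n j (fun s => s.cherryWeight β m j) / totalWeight β j := by
  induction t, ht using Nat.le_induction with
  | base => simp [mergedE_one, MergedGraph.triangleCount, triangleCount]
  | succ t ht ih =>
    rw [sum_Ico_succ_top ht, ← ih (by omega), ← mergedE_div, ← mergedE_add,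
      mergedE_succ hm ht (by omega)]
    exact mergedE_congr fun f => (attachmentStep hβ hm ht (by omega) f).weightedMean_triangleCount

/-- The coefficient of `log n` in the expected number of triangles. -/
noncomputable def triangleRate (β : ℝ) (m : ℕ) : ℝ :=
  cherryWeightRate β m / (2 + β) * ((m - 1) / 2)

lemma powerBounded_abs_mergedE_cherryWeight_div_sub (hβ : 0 < β) (hm : 1 ≤ m) :
    PowerBounded m (growthExponent β / 2 - 2) fun n t =>
      |mergedE β m n t (fun s => s.cherryWeight β m t) / totalWeight β t -
        cherryWeightRate β m / (2 + β) * ((t % m : ℕ) / t)| := by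
  have hρ := one_lt_growthExponent hβ
  set q := cherryWeightRate β m
  set r := q / (2 + β) with hr_def
  have hr : 0 ≤ r := div_nonneg (cherryWeightRate_nonneg hβ) (by linarith)
  have hqr : q = r * (2 + β) := by rw [hr_def, div_mul_cancel₀]; positivity
  have herror := ((powerBounded_abs_mergedE_cherryWeight_sub hβ hm).add
    ((PowerBounded.rpow.const_mul (c := 2 * r * m) (by positivity)).mono_exponent
      (show (-1 : ℝ) ≤ growthExponent β / 2 - 1 by linarith))).div_totalWeight hβ
  rw [show growthExponent β / 2 - 1 - 1 = growthExponent β / 2 - 2 by ring] at herror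
  refine herror.mono fun n t ht _ => ?_
  have hL := totalWeight_pos hβ ht
  have : (0 : ℝ) < t := by exact_mod_cast ht
  have hk : ((t % m : ℕ) : ℝ) ≤ m := by exact_mod_cast (Nat.mod_lt t (by omega)).le
  set V := mergedE β m n t fun s => s.cherryWeight β m t
  set k : ℝ := ((t % m : ℕ) : ℝ)
  have : 0 ≤ k := Nat.cast_nonneg _
  calc |V / totalWeight β t - r * (k / t)|
    _ = |(V - k * q) / totalWeight β t + 2 * r * k / t / totalWeight β t| := by
        congr 1
        rw [hqr]
        field_simp
        rw [totalWeight]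
        ring
    _ ≤ |V - k * q| / totalWeight β t + 2 * r * m / t / totalWeight β t := by
        refine (abs_add_le _ _).trans ?_
        rw [abs_div, abs_of_pos hL, abs_of_nonneg (a := _ / (t : ℝ) / _) (by positivity)]
        gcongr
    _ = (|V - k * q| + 2 * r * m * (t : ℝ) ^ (-1 : ℝ)) / totalWeight β t := by
        rw [Real.rpow_neg_one, ← add_div, div_eq_mul_inv _ (t : ℝ)]

lemma exists_abs_mergedE_triangleCount_sub_log_le (hβ : 0 < β) (hm : 1 ≤ m) :
    ∃ C, 0 ≤ C ∧ ∀ n : ℕ, 1 ≤ n →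
      |mergedE β m n (n * m) (fun s => s.triangleCount) - triangleRate β m * Real.log n| ≤ C := by
  have hρ := growthExponent_lt_two hβ
  obtain ⟨C, hC, hsum⟩ :=
    (powerBounded_abs_mergedE_cherryWeight_div_sub hβ hm).exists_sum_le (by linarith)
  obtain ⟨C', hC', hlog⟩ := exists_abs_sum_mod_div_sub_log_le hm
  set r := cherryWeightRate β m / (2 + β)
  have hr : 0 ≤ r := div_nonneg (cherryWeightRate_nonneg hβ) (by linarith)
  refine ⟨C + r * C', by positivity, fun n hn => ?_⟩
  rw [mergedE_triangleCount_eq_sum hβ hm (Nat.mul_pos hn hm) le_rfl]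
  refine (abs_sub_le _ (r * ∑ t ∈ Ico 1 (n * m), ((t % m : ℕ) : ℝ) / t) _).trans
    (add_le_add ?_ ?_)
  · rw [mul_sum, ← sum_sub_distrib]
    exact (abs_sum_le_sum_abs _ _).trans (hsum n)
  · rw [triangleRate, mul_assoc, ← mul_sub, abs_mul, abs_of_nonneg hr]
    exact mul_le_mul_of_nonneg_left (hlog n hn) hr

end Triangles

section SecondMoments

variable {β : ℝ} {m : ℕ}

lemma momentBounded_starWeight (hβ : 0 < β) (hm : 1 ≤ m) :
    MomentBounded β m (growthExponent β) fun _ _ s => s.starWeight β m := by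
  have hρ := one_lt_growthExponent hβ
  set w₀ := (1 + β) * (m : ℝ)
  refine .of_growth (q := 4) (A := 0) (U := 0) hβ hm (by norm_num) le_rfl (by linarith)
    (four_div_lt_growthExponent hβ)
    (((momentBounded_meanWeightSq hβ hm).const_mul (c := ((m + 2 * (w₀ + m)) ^ 2 / 4 +
      (w₀ + m) ^ 2 + 2 * (w₀ + m + 1) * (m + 1) ^ 2)) (by positivity)).add
        ((momentBounded_neighborWeight_sq hβ hm).const_mul (c := w₀ + m + 1) (by positivity)))
    (fun n => by simp [MergedGraph.starWeight, MoriGraph.starWeight]) fun n t ht htn f => ?_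
  rw [zero_div, add_zero, ← add_assoc]
  simp only [MergedGraph.starWeight, MergedGraph.weight_addEdge]
  exact (attachmentStep hβ hm ht htn f).weightedMean_starWeight_le

lemma momentBounded_totalWeight_mul_meanWeight_sq (hβ : 0 < β) (hm : 1 ≤ m) :
    MomentBounded β m 1 fun _ t s => totalWeight β t * (s.meanWeight β m t + 1) ^ 2 := by
  have hρ := growthExponent_lt_two hβ
  obtain ⟨B, -, hmean⟩ := exists_abs_meanWeight_add_one_le hβ hm
  have hdev := ((momentBounded_weightSqDeviation_sq hβ hm).div_totalWeight hβ).mono_exponent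
    (show growthExponent β - 1 ≤ 1 by linarith)
  have htotal : MomentBounded β m 1 fun _ t _ => totalWeight β t :=
    PowerBounded.mono (PowerBounded.rpow.const_mul (c := 2 + β) (by positivity))
      fun n t ht _ => by simpa [mergedE_const hβ ht] using totalWeight_le t
  refine .mono hβ ((hdev.const_mul zero_le_two).add
    (htotal.const_mul (c := 2 * B ^ 2) (by positivity))) fun n t ht htn f => ?_
  have hL := totalWeight_pos hβ ht
  have hsq := pow_le_pow_left₀ (abs_nonneg _) (hmean n t ht htn f) 2
  rw [sq_abs] at hsq
  set G := (mergedGraph m n f).weightSqDeviation β m t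
  set L := totalWeight β t
  calc L * ((mergedGraph m n f).meanWeight β m t + 1) ^ 2 ≤ L * (|G| / L + B) ^ 2 := by gcongr
    _ ≤ L * (2 * ((|G| / L) ^ 2 + B ^ 2)) := by
        gcongr
        exact add_sq_le
    _ = 2 * (G ^ 2 / L) + 2 * B ^ 2 * L := by
        rw [div_pow, sq_abs]
        field_simp

lemma momentBounded_edgeWeight_sq (hβ : 0 < β) (hm : 1 ≤ m) :
    MomentBounded β m 2 fun _ _ s => s.edgeWeight β m ^ 2 := by
  have hρ := growthExponent_lt_two hβ
  set w₀ := (1 + β) * (m : ℝ)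
  have herror := (((momentBounded_totalWeight_mul_meanWeight_sq hβ hm).const_mul
    (c := 4 * (w₀ + m) ^ 2 / β) (by positivity)).add
      ((((momentBounded_starWeight hβ hm).div_totalWeight hβ).mono_exponent
        (by linarith)).const_mul (c := 8) (by norm_num))).add
      (((momentBounded_meanWeightSq hβ hm).mono_exponent (by linarith)).const_mul
        (c := 8 * (w₀ + m) ^ 2) (by positivity))
  refine .of_growth (q := 4 + β) (A := 0) (U := 0) hβ hm (by positivity) le_rfl zero_le_two
    ((div_lt_iff₀ (by positivity)).mpr (by linarith)) (herror.mono_exponent (by norm_num))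
    (fun n => by simp [MergedGraph.edgeWeight, MoriGraph.edgeWeight]) fun n t ht htn f => ?_
  rw [zero_div, add_zero, ← add_assoc, ← add_assoc]
  simp only [MergedGraph.edgeWeight, MergedGraph.weight_addEdge]
  exact (attachmentStep hβ hm ht htn f).weightedMean_edgeWeight_sq_le hβ

lemma momentBounded_cherryWeight_sq (hβ : 0 < β) (hm : 1 ≤ m) :
    MomentBounded β m (growthExponent β - 1) fun _ t s => s.cherryWeight β m t ^ 2 := by
  have hρ := one_lt_growthExponent hβ
  refine .of_block_growth (A := 2) hβ hm zero_le_two (by linarith)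
    ((MomentBounded.const hβ (4 * (m : ℝ) ^ 4) (by linarith)).add
      (((momentBounded_starWeight hβ hm).div_totalWeight hβ).const_mul (c := 4) (by norm_num)))
    (fun n => by simp [MergedGraph.cherryWeight, MoriGraph.cherryWeight])
    (fun n t _ htn hmod f => ?_) (fun n t ht htn f => ?_) fun n t ht htn hmod f => ?_
  · simp [cherryWeight_of_mod_eq_zero hm htn f hmod]
  · have h := attachmentStep hβ hm ht htn f
    have hR : 0 ≤ (mergedGraph m n f).starWeight β m := h.starWeight_nonneg
    have := h.L_pos
    positivity
  · simp only [MergedGraph.cherryWeight, blockIndex_succ hmod, MergedGraph.weight_addEdge,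
      ← add_assoc]
    exact (attachmentStep hβ hm ht htn f).weightedMean_cherryWeight_sq_le

lemma momentBounded_cherryWeight (hβ : 0 < β) (hm : 1 ≤ m) :
    MomentBounded β m 0 fun _ t s => s.cherryWeight β m t := by
  have hρ := growthExponent_lt_two hβ
  refine (((powerBounded_abs_mergedE_cherryWeight_sub hβ hm).mono_exponent
    (show _ ≤ (0 : ℝ) by linarith)).add
      (.const (m * cherryWeightRate β m) le_rfl)).mono fun n t _ _ => ?_
  have hmod : ((t % m : ℕ) : ℝ) * cherryWeightRate β m ≤ m * cherryWeightRate β m := by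
    have := cherryWeightRate_nonneg (m := m) hβ
    gcongr
    exact (Nat.mod_lt t hm).le
  linarith [le_abs_self (mergedE β m n t (fun s => s.cherryWeight β m t) -
    (t % m : ℕ) * cherryWeightRate β m)]

lemma mergedE_triangleCount_sq_le_succ (hβ : 0 < β) (hm : 1 ≤ m) {n t : ℕ} (ht : 1 ≤ t)
    (htn : t ≤ n * m) :
    mergedE β m n t (fun s => s.triangleCount ^ 2) ≤
      mergedE β m n (t + 1) fun s => s.triangleCount ^ 2 := by
  rw [mergedE_succ hm ht htn]
  refine mergedE_mono hβ fun f => ?_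
  have h := attachmentStep hβ hm ht htn f
  rw [← h.weightedMean_const ((mergedGraph m n f).triangleCount ^ 2)]
  refine h.weightedMean_mono fun a => pow_le_pow_left₀ h.triangleCount_nonneg ?_ 2
  refine le_of_le_of_eq (le_add_of_nonneg_right ?_)
    (triangleCount_addEdge h.M_symm h.M_diag _ a).symm
  split_ifs
  exacts [le_rfl, h.sq_apply_nonneg a]

/-- A bound for the terms in the drift of `triangleCount * cherryWeight` that do not involve this
product, apart from `ε * triangleCount ^ 2`. -/
noncomputable def MergedGraph.productError (β ε : ℝ) (m : ℕ) {n : ℕ} (t : ℕ) (s : MergedGraph n) :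
    ℝ :=
  (1 / (4 * ε) + m ^ 2) * (s.edgeWeight β m ^ 2 / totalWeight β t / totalWeight β t) +
    (1 + m ^ 2) * (s.cherryWeight β m t ^ 2 / totalWeight β t) + m ^ 2 * (1 + (min 1 β)⁻¹)

lemma momentBounded_productError (hβ : 0 < β) (hm : 1 ≤ m) {ε : ℝ} (hε : 0 < ε) :
    MomentBounded β m 0 fun _ t s => s.productError β ε m t := by
  have hρ := growthExponent_lt_two hβ
  exact ((((((momentBounded_edgeWeight_sq hβ hm).div_totalWeight hβ).div_totalWeight
    hβ).mono_exponent (by norm_num)).const_mul (by positivity)).add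
      ((((momentBounded_cherryWeight_sq hβ hm).div_totalWeight hβ).mono_exponent
        (by linarith)).const_mul (by positivity))).add (.const hβ _ le_rfl)

lemma weightedMean_triangleCount_mul_cherryWeight_le (hβ : 0 < β) (hm : 1 ≤ m) {ε : ℝ}
    (hε : 0 < ε) {n t : ℕ} (ht : 1 ≤ t) (htn : t ≤ n * m) (hmod : (t + 1) % m ≠ 0)
    (f : ParentSeq t) :
    weightedMean ((mergedGraph m n f).attachWeight β m t) (totalWeight β t)
        (fun a => ((mergedGraph m n f).addEdge (blockIndex m n t) a).triangleCount *
          ((mergedGraph m n f).addEdge (blockIndex m n t) a).cherryWeight β m (t + 1)) ≤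
      (1 + (min 1 β)⁻¹) * ((mergedGraph m n f).triangleCount *
          (mergedGraph m n f).cherryWeight β m t) +
        (ε * (mergedGraph m n f).triangleCount ^ 2 +
          (mergedGraph m n f).productError β ε m t) := by
  have h := attachmentStep hβ hm ht htn f
  have hmean := h.weightedMean_triangleCount_mul_cherryWeight_le
  have hN := h.triangleCount_nonneg
  have hV := h.cherryWeight_nonneg
  have hL := h.L_pos
  simp only [MergedGraph.cherryWeight, blockIndex_succ hmod, MergedGraph.weight_addEdge,
    MergedGraph.productError, MergedGraph.edgeWeight]
  refine hmean.trans ?_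
  change _ ≤ _ * (triangleCount (mergedGraph m n f).adj * _) +
    (ε * triangleCount (mergedGraph m n f).adj ^ 2 + _)
  set N := triangleCount (mergedGraph m n f).adj
  set V := cherryWeight (mergedGraph m n f).adj _ _
  set P := edgeWeight (mergedGraph m n f).adj _
  set L := totalWeight β t
  have hLinv : 1 / L ≤ (min 1 β)⁻¹ := one_div_totalWeight_le hβ ht
  have hNV : 1 / L * (N * V) ≤ (min 1 β)⁻¹ * (N * V) := by gcongr
  have hNP : N * P / L ≤ ε * N ^ 2 + 1 / (4 * ε) * (P ^ 2 / L / L) := by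
    have hsq : ε * N ^ 2 + 1 / (4 * ε) * (P ^ 2 / L / L) - N * P / L =
        (2 * ε * N - P / L) ^ 2 / (4 * ε) := by field_simp; ring
    linarith [show 0 ≤ (2 * ε * N - P / L) ^ 2 / (4 * ε) by positivity]
  have hP : P / L ≤ 1 + P ^ 2 / L / L := by
    rw [div_div, ← sq, ← div_pow]
    nlinarith [sq_nonneg (P / L - 1)]
  have hVL : V / L ≤ 1 / L + V ^ 2 / L := by
    rw [← add_div]
    gcongr
    nlinarith [sq_nonneg (V - 1)]
  have hsum : m ^ 2 * ((V + P) / L) ≤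
      m ^ 2 * (1 + P ^ 2 / L / L + ((min 1 β)⁻¹ + V ^ 2 / L)) := by
    rw [add_div]
    exact mul_le_mul_of_nonneg_left (by linarith) (by positivity)
  linarith

lemma exists_mergedE_triangleCount_mul_cherryWeight_le (hβ : 0 < β) (hm : 1 ≤ m) {ε : ℝ}
    (hε : 0 < ε) :
    ∃ C, 0 ≤ C ∧ ∀ n t : ℕ, 1 ≤ t → t ≤ n * m →
      mergedE β m n t (fun s => s.triangleCount * s.cherryWeight β m t) ≤
        (2 * (1 + (min 1 β)⁻¹) + 2) ^ m *
          (ε * mergedE β m n t (fun s => s.triangleCount ^ 2) + C) := by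
  have : 0 < min 1 β := lt_min one_pos hβ
  obtain ⟨C, hC, herror⟩ := momentBounded_productError hβ hm hε
  simp only [Real.rpow_zero, mul_one] at herror
  refine ⟨C, hC, fun n t => ?_⟩
  have hN (t : ℕ) : 0 ≤ mergedE β m n t (fun s => s.triangleCount ^ 2) :=
    mergedE_nonneg hβ fun f => sq_nonneg _
  refine le_pow_mul_of_block_growth (T := n * m)
    (u := fun t => mergedE β m n t fun s => s.triangleCount * s.cherryWeight β m t)
    (e := fun t => ε * mergedE β m n t (fun s => s.triangleCount ^ 2) + C) hm (by positivity)
    (fun t _ _ => add_nonneg (mul_nonneg hε.le (hN t)) hC) (fun t ht htn => ?_) (fun _ => ?_)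
    (fun t ht htn hmod => ?_) (fun t ht htn hmod => ?_) t
  · have := mul_le_mul_of_nonneg_left (mergedE_triangleCount_sq_le_succ hβ hm ht htn.le) hε.le
    linarith [mul_nonneg hε.le (hN t)]
  · simp only [mergedE_one]
    simpa [MergedGraph.triangleCount, MoriGraph.triangleCount] using hC
  · rw [mergedE_congr (G := fun _ => 0)
      fun f => by simp [cherryWeight_of_mod_eq_zero hm htn f hmod], mergedE_const hβ ht]
    exact add_nonneg (mul_nonneg hε.le (hN t)) hC
  · simp only [mergedE_succ hm ht htn.le]
    refine (mergedE_mono hβ (G := fun s => (1 + (min 1 β)⁻¹) *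
      (s.triangleCount * s.cherryWeight β m t) + (ε * s.triangleCount ^ 2 + s.productError β ε m t))
      (weightedMean_triangleCount_mul_cherryWeight_le hβ hm hε ht htn.le hmod)).trans ?_
    rw [mergedE_add, mergedE_add, mergedE_const_mul, mergedE_const_mul]
    linarith [herror n t ht htn.le]

lemma mergedE_triangleCount_sq_succ_le (hβ : 0 < β) (hm : 1 ≤ m) {n t : ℕ} (ht : 1 ≤ t)
    (htn : t ≤ n * m) :
    mergedE β m n (t + 1) (fun s => s.triangleCount ^ 2) ≤
      mergedE β m n t (fun s => s.triangleCount ^ 2) +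
        2 * mergedE β m n t (fun s => s.triangleCount * s.cherryWeight β m t) /
          totalWeight β t +
        m ^ 2 * (mergedE β m n t (fun s => s.cherryWeight β m t) / totalWeight β t) := by
  calc mergedE β m n (t + 1) (fun s => s.triangleCount ^ 2)
      ≤ mergedE β m n t (fun s => s.triangleCount ^ 2 +
          2 * (s.triangleCount * s.cherryWeight β m t) / totalWeight β t +
          m ^ 2 * (s.cherryWeight β m t / totalWeight β t)) := by
        rw [mergedE_succ hm ht htn]
        exact mergedE_mono hβ fun f =>
          (attachmentStep hβ hm ht htn f).weightedMean_triangleCount_sq_le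
    _ = mergedE β m n t (fun s => s.triangleCount ^ 2) +
          2 * mergedE β m n t (fun s => s.triangleCount * s.cherryWeight β m t) /
            totalWeight β t +
          m ^ 2 * (mergedE β m n t (fun s => s.cherryWeight β m t) / totalWeight β t) := by
        rw [mergedE_add, mergedE_add, mergedE_div, mergedE_const_mul, mergedE_const_mul,
          mergedE_div]

lemma momentBounded_triangleCount_sq (hβ : 0 < β) (hm : 1 ≤ m) :
    MomentBounded β m (2 - growthExponent β) fun _ _ s => s.triangleCount ^ 2 := by
  have := one_lt_growthExponent hβ
  have hρ' := growthExponent_lt_two hβ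
  have : 0 < min 1 β := lt_min one_pos hβ
  set A := (2 * (1 + (min 1 β)⁻¹) + 2) ^ m
  have hA₀ : 0 < A := by positivity
  obtain ⟨C, -, hNV⟩ :=
    exists_mergedE_triangleCount_mul_cherryWeight_le hβ hm (ε := β / (4 * A)) (by positivity)
  have herror : PowerBounded m (2 - growthExponent β - 1) fun n t =>
      (2 * A * C + m ^ 2 * mergedE β m n t (fun s => s.cherryWeight β m t)) / totalWeight β t :=
    (((PowerBounded.const (2 * A * C) le_rfl).add
      (PowerBounded.const_mul (momentBounded_cherryWeight hβ hm) (c := (m : ℝ) ^ 2)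
        (by positivity))).div_totalWeight hβ).mono_exponent (by linarith)
  refine PowerBounded.of_growth (q := β / 2) (A := 0) (U := 0) hβ (by positivity) le_rfl
    (by linarith) ?_ herror (fun n => ?_) fun n t ht htn => ?_
  · rw [growthExponent, div_lt_iff₀ (by positivity)]
    field_simp
    linarith
  · rw [mergedE_one]
    simp [MergedGraph.triangleCount, MoriGraph.triangleCount]
  have hL := totalWeight_pos hβ ht
  calc mergedE β m n (t + 1) (fun s => s.triangleCount ^ 2)
    _ ≤ mergedE β m n t (fun s => s.triangleCount ^ 2) +
          2 * mergedE β m n t (fun s => s.triangleCount * s.cherryWeight β m t) /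
            totalWeight β t +
          m ^ 2 * (mergedE β m n t (fun s => s.cherryWeight β m t) / totalWeight β t) :=
        mergedE_triangleCount_sq_succ_le hβ hm ht htn.le
    _ ≤ mergedE β m n t (fun s => s.triangleCount ^ 2) +
          2 * (A * (β / (4 * A) * mergedE β m n t (fun s => s.triangleCount ^ 2) + C)) /
            totalWeight β t +
          m ^ 2 * (mergedE β m n t (fun s => s.cherryWeight β m t) / totalWeight β t) := by
        gcongr
        exact hNV n t ht htn.le
    _ = _ := by
        field_simp
        ring

end SecondMoments

/-! ### The clustering coefficient -/

section ClusteringCoefficient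

variable {β : ℝ} {m n : ℕ}

namespace MergedGraph

/-- The degree of a completed vertex: its in-degree plus the out-degrees of its `m` tree vertices,
all equal to `1` except that of `v_1`. -/
noncomputable def degree (m : ℕ) (s : MergedGraph n) (i : Fin (n + 1)) : ℝ :=
  s.inDegree i + m - if i = 0 then 1 else 0

/-- The sum `D` of the binomial coefficients `binom(d(u_i), 2)`, over the vertices other than the
spare one. -/
noncomputable def degreePairs (m : ℕ) (s : MergedGraph n) : ℝ :=
  ∑ i : Fin n, s.degree m i.castSucc * (s.degree m i.castSucc - 1) / 2

end MergedGraph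

/-- The limit `c₂` of `D / n`. -/
noncomputable def degreePairRate (β : ℝ) (m : ℕ) : ℝ :=
  (2 + 5 * β) / (2 * β) * m ^ 2 + (2 - β) / (2 * β) * m

lemma degreePairRate_pos (hβ : 0 < β) (hm : 1 ≤ m) : 0 < degreePairRate β m := by
  have : (1 : ℝ) ≤ m := by exact_mod_cast hm
  have heq : degreePairRate β m = m * ((2 + 5 * β) * m + (2 - β)) / (2 * β) := by
    rw [degreePairRate]
    field_simp
  have : 0 < (2 + 5 * β) * m + (2 - β) := by nlinarith
  rw [heq]
  positivity

lemma sum_castSucc_eq_zero (hn : 1 ≤ n) :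
    ∑ i : Fin n, (if i.castSucc = 0 then (1 : ℝ) else 0) = 1 := by
  have hlast : Fin.last n ≠ 0 := by simp [Fin.ext_iff]; omega
  have hsum : ∑ i : Fin (n + 1), (if i = 0 then (1 : ℝ) else 0) = 1 := by simp
  rwa [Fin.sum_univ_castSucc, if_neg hlast, add_zero] at hsum

lemma inDegree_last (hm : 1 ≤ m) (f : ParentSeq (n * m)) :
    (mergedGraph m n f).inDegree (Fin.last n) = 0 := by
  have hindex : blockIndex m n (n * m) = Fin.last n := by
    rw [Fin.ext_iff, blockIndex_val le_rfl, Nat.mul_div_cancel _ hm, Fin.val_last]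
  have hle := inDegree_blockIndex_le hm le_rfl f
  rw [hindex, Nat.mul_mod_left, Nat.cast_zero] at hle
  exact hle.antisymm (inDegree_nonneg f _)

lemma degreePairs_sub_eq (hβ : 0 < β) (hm : 1 ≤ m) (hn : 1 ≤ n) (f : ParentSeq (n * m)) :
    (mergedGraph m n f).degreePairs m - degreePairRate β m * n =
      ((mergedGraph m n f).weightSqDeviation β m (n * m) + (2 * β * m + 3 - 2 * m)) / 2 := by
  have hlast := inDegree_last hm f
  have hZ := sum_inDegree (n := n) (m := m) f (Nat.mul_pos hn hm)
  set s := mergedGraph m n f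
  rw [Fin.sum_univ_castSucc, hlast, add_zero] at hZ
  have hW : ∑ i, (s.weight β m i ^ 2 - blockWeight β m i ^ 2) =
      ∑ i : Fin n, (s.weight β m i.castSucc ^ 2 - blockWeight β m i.castSucc ^ 2) := by
    rw [Fin.sum_univ_castSucc, MergedGraph.weight, hlast]
    simp
  have hpairs (i : Fin (n + 1)) : s.degree m i * (s.degree m i - 1) / 2 =
      1 / 2 * (s.weight β m i ^ 2 - blockWeight β m i ^ 2) -
        (2 * β * m + 1) / 2 * s.inDegree i + (m ^ 2 - m) / 2 -
        (m - 1) * if i = 0 then 1 else 0 := by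
    unfold MergedGraph.degree MergedGraph.weight blockWeight
    split_ifs <;> ring
  simp only [MergedGraph.degreePairs, hpairs, sum_sub_distrib, sum_add_distrib, ← mul_sum,
    sum_castSucc_eq_zero hn, hZ]
  rw [← sum_sub_distrib, ← hW, MergedGraph.weightSqDeviation, degreePairRate, weightSqRate]
  simp only [sum_const, card_univ, Fintype.card_fin, nsmul_eq_mul]
  push_cast
  field_simp
  ring

lemma sub_one_le_degreePairs (hm : 2 ≤ m) (hn : 1 ≤ n) (f : ParentSeq (n * m)) :
    (n : ℝ) - 1 ≤ (mergedGraph m n f).degreePairs m := by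
  have hm' : (2 : ℝ) ≤ m := by exact_mod_cast hm
  have hsum : (n : ℝ) - 1 = ∑ i : Fin n, (1 - if i.castSucc = 0 then (1 : ℝ) else 0) := by
    rw [sum_sub_distrib, sum_castSucc_eq_zero hn]
    simp
  rw [hsum]
  refine sum_le_sum fun i _ => ?_
  have := inDegree_nonneg (m := m) f i.castSucc
  unfold MergedGraph.degree
  split_ifs <;> nlinarith

lemma exists_mergedE_degreePairs_sub_sq_le (hβ : 0 < β) (hm : 1 ≤ m) :
    ∃ K, 0 ≤ K ∧ ∀ n : ℕ, 1 ≤ n →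
      mergedE β m n (n * m) (fun s => (s.degreePairs m - degreePairRate β m * n) ^ 2) ≤
        K * ((n * m : ℕ) : ℝ) ^ growthExponent β := by
  have := one_lt_growthExponent hβ
  set b := 2 * β * m + 3 - 2 * m
  obtain ⟨K, hK, hbound⟩ := (momentBounded_weightSqDeviation_sq hβ hm).add
    (.const hβ (b ^ 2) (by linarith))
  refine ⟨K, hK, fun n hn => (mergedE_mono hβ fun f => ?_).trans
    (hbound n (n * m) (Nat.mul_pos hn hm) le_rfl)⟩
  rw [degreePairs_sub_eq hβ hm hn f]
  nlinarith [sq_nonneg ((mergedGraph m n f).weightSqDeviation β m (n * m) - b)]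

lemma exists_mergedE_triangleCount_mul_abs_degreePairs_sub_le (hβ : 0 < β) (hm : 1 ≤ m) :
    ∃ K, 0 ≤ K ∧ ∀ n : ℕ, 1 ≤ n →
      mergedE β m n (n * m)
        (fun s => s.triangleCount * |s.degreePairs m - degreePairRate β m * n|) ≤ K * n := by
  obtain ⟨K₁, hK₁, hN⟩ := momentBounded_triangleCount_sq hβ hm
  obtain ⟨K₂, hK₂, hD⟩ := exists_mergedE_degreePairs_sub_sq_le hβ hm
  refine ⟨(K₁ + K₂) / 2 * m, by positivity, fun n hn => ?_⟩
  have hnm : 1 ≤ n * m := Nat.mul_pos hn hm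
  have hN := hN n (n * m) hnm le_rfl
  have hD := hD n hn
  have hT : (0 : ℝ) < (n * m : ℕ) := by exact_mod_cast hnm
  set ρ := growthExponent β
  set T : ℝ := ((n * m : ℕ) : ℝ) with hTdef
  have hmul : T ^ (ρ - 1) * T ^ (2 - ρ) = T := by
    rw [← Real.rpow_add hT, show ρ - 1 + (2 - ρ) = 1 by ring, Real.rpow_one]
  have hmul' : T ^ (1 - ρ) * T ^ ρ = T := by
    rw [← Real.rpow_add hT, sub_add_cancel, Real.rpow_one]
  have hinv : T ^ (ρ - 1) * T ^ (1 - ρ) = 1 := by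
    rw [← Real.rpow_add hT, sub_add_sub_cancel, sub_self, Real.rpow_zero]
  have hamgm (a d : ℝ) : a * |d| ≤ T ^ (ρ - 1) / 2 * a ^ 2 + T ^ (1 - ρ) / 2 * d ^ 2 := by
    have : 0 < T ^ (1 - ρ) := Real.rpow_pos_of_pos hT _
    have hsq : 0 ≤ T ^ (1 - ρ) * (T ^ (ρ - 1) * a - |d|) ^ 2 := by positivity
    rw [← sq_abs d]
    linear_combination hsq / 2 + (T ^ (ρ - 1) * a ^ 2 / 2 - a * |d|) * hinv
  calc mergedE β m n (n * m)
        (fun s => s.triangleCount * |s.degreePairs m - degreePairRate β m * n|)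
    _ ≤ mergedE β m n (n * m) (fun s => T ^ (ρ - 1) / 2 * s.triangleCount ^ 2 +
          T ^ (1 - ρ) / 2 * (s.degreePairs m - degreePairRate β m * n) ^ 2) :=
        mergedE_mono hβ fun f => hamgm _ _
    _ ≤ T ^ (ρ - 1) / 2 * (K₁ * T ^ (2 - ρ)) + T ^ (1 - ρ) / 2 * (K₂ * T ^ ρ) := by
        rw [mergedE_add, mergedE_const_mul, mergedE_const_mul]
        gcongr
    _ = (K₁ + K₂) / 2 * T := by
        linear_combination K₁ / 2 * hmul + K₂ / 2 * hmul'
    _ = (K₁ + K₂) / 2 * m * n := by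
        rw [hTdef]
        push_cast
        ring

lemma abs_div_degreePairs_sub_le (hβ : 0 < β) (hm : 2 ≤ m) (hn : 2 ≤ n) (f : ParentSeq (n * m))
    {x : ℝ} (hx : 0 ≤ x) :
    |x / (mergedGraph m n f).degreePairs m - x / (degreePairRate β m * n)| ≤
      2 / (degreePairRate β m * n ^ 2) *
        (x * |(mergedGraph m n f).degreePairs m - degreePairRate β m * n|) := by
  have hn' : (2 : ℝ) ≤ n := by exact_mod_cast hn
  have hD := sub_one_le_degreePairs hm (by omega) f
  have hc := degreePairRate_pos hβ (show 1 ≤ m by omega)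
  set c := degreePairRate β m
  set D := (mergedGraph m n f).degreePairs m
  have hD₀ : 0 < D := by linarith
  have heq : x / D - x / (c * n) = -(x * (D - c * n) / (D * (c * n))) := by
    field_simp
    ring
  rw [heq, abs_neg, abs_div, abs_mul, abs_of_nonneg hx,
    abs_of_pos (a := D * (c * n)) (by positivity)]
  calc x * |D - c * n| / (D * (c * n)) ≤ x * |D - c * n| / (n / 2 * (c * n)) := by
        gcongr
        linarith
    _ = 2 / (c * n ^ 2) * (x * |D - c * n|) := by field_simp

lemma triangleRate_eq (hβ : 0 < β) : triangleRate β m =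
    m * (m - 1) * (1 + β) ^ 2 / β ^ 2 + m * (m - 1) ^ 2 * (1 + β) ^ 3 / (β ^ 2 * (2 + β)) := by
  unfold triangleRate cherryWeightRate edgeWeightRate weightSqRate
  field_simp
  ring

lemma exists_abs_mergedE_triangleCount_div_degreePairs_sub_le (hβ : 0 < β) (hm : 2 ≤ m) :
    ∃ K, 0 ≤ K ∧ ∀ n : ℕ, 2 ≤ n →
      |mergedE β m n (n * m) (fun s => s.triangleCount / s.degreePairs m) -
        triangleRate β m * Real.log n / (degreePairRate β m * n)| ≤ K / n := by
  have hm₁ : 1 ≤ m := by omega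
  obtain ⟨K₁, hK₁, hND⟩ := exists_mergedE_triangleCount_mul_abs_degreePairs_sub_le hβ hm₁
  obtain ⟨K₂, hK₂, hN⟩ := exists_abs_mergedE_triangleCount_sub_log_le hβ hm₁
  have hc := degreePairRate_pos hβ hm₁
  set c := degreePairRate β m
  set q := triangleRate β m
  refine ⟨(2 * K₁ + K₂) / c, by positivity, fun n hn => ?_⟩
  have : (0 : ℝ) < n := by exact_mod_cast (show 0 < n by omega)
  have hquot : |mergedE β m n (n * m) (fun s => s.triangleCount / s.degreePairs m) -
      mergedE β m n (n * m) (fun s => s.triangleCount) / (c * n)| ≤ 2 * K₁ / c / n := by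
    rw [← mergedE_div, ← mergedE_sub]
    calc _ ≤ _ := abs_mergedE_le hβ _
      _ ≤ mergedE β m n (n * m) fun s =>
          2 / (c * n ^ 2) * (s.triangleCount * |s.degreePairs m - c * n|) :=
        mergedE_mono hβ fun f => abs_div_degreePairs_sub_le hβ hm hn f
          (attachmentStep hβ hm₁ (Nat.mul_pos (by omega) hm₁) le_rfl f).triangleCount_nonneg
      _ ≤ 2 / (c * n ^ 2) * (K₁ * n) := by
        rw [mergedE_const_mul]
        gcongr
        exact hND n (by omega)
      _ = 2 * K₁ / c / n := by field_simp
  have hlog : |mergedE β m n (n * m) (fun s => s.triangleCount) / (c * n) -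
      q * Real.log n / (c * n)| ≤ K₂ / c / n := by
    rw [← sub_div, abs_div, abs_of_pos (a := c * n) (by positivity), div_div]
    gcongr
    exact hN n (by omega)
  refine (abs_sub_le _ _ _).trans ((add_le_add hquot hlog).trans_eq ?_)
  ring

end ClusteringCoefficient

section TriangleCount

variable {ι : Type*} [LinearOrder ι]

lemma sum_eq_six_mul_sum_lt {R : Type*} [CommRing R] (s : Finset ι) {F : ι → ι → ι → R}
    (hswap₁₂ : ∀ a b c, F a b c = F b a c) (hswap₂₃ : ∀ a b c, F a b c = F a c b)
    (hdiag : ∀ a c, F a a c = 0) :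
    ∑ a ∈ s, ∑ b ∈ s, ∑ c ∈ s, F a b c =
      6 * ∑ a ∈ s, ∑ b ∈ s with a < b, ∑ c ∈ s with b < c, F a b c := by
  set G : ι → ι → ι → R := fun a b c => if a < b ∧ b < c then F a b c else 0
  have hsplit (a b c : ι) :
      F a b c = G a b c + G a c b + (G b a c + G b c a) + (G c a b + G c b a) := by
    grind
  have hG : ∑ a ∈ s, ∑ b ∈ s with a < b, ∑ c ∈ s with b < c, F a b c =
      ∑ a ∈ s, ∑ b ∈ s, ∑ c ∈ s, G a b c := by
    simp only [G, sum_filter, ite_and, sum_ite_irrel, sum_const_zero]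
  have hcomm₁₂ (H : ι → ι → ι → R) :
      ∑ a ∈ s, ∑ b ∈ s, ∑ c ∈ s, H b a c = ∑ a ∈ s, ∑ b ∈ s, ∑ c ∈ s, H a b c := sum_comm
  have hcomm₂₃ (H : ι → ι → ι → R) :
      ∑ a ∈ s, ∑ b ∈ s, ∑ c ∈ s, H a c b = ∑ a ∈ s, ∑ b ∈ s, ∑ c ∈ s, H a b c :=
    sum_congr rfl fun _ _ => sum_comm
  rw [hG]
  simp only [hsplit, sum_add_distrib]
  linear_combination 3 * hcomm₂₃ G + 2 * hcomm₁₂ G + 2 * hcomm₁₂ (fun a b c => G a c b) +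
    hcomm₂₃ (fun a b c => G b a c) + hcomm₂₃ (fun a b c => G b c a)

lemma triangleCount_eq_sum_lt [Fintype ι] {M : Matrix ι ι ℝ} (hsymm : M.IsSymm)
    (hdiag : ∀ i, M i i = 0) :
    triangleCount M = ∑ a, ∑ b with a < b, ∑ c with b < c, M a b * M a c * M b c := by
  have hsix := sum_eq_six_mul_sum_lt univ (F := fun a b c => M a b * M a c * M b c)
    (fun a b c => by rw [hsymm.apply]; ring) (fun a b c => by rw [hsymm.apply b c]; ring)
    (fun a c => by rw [hdiag]; ring)
  have htrace : (M * M * M).trace = ∑ a, ∑ b, ∑ c, M a b * M a c * M b c := by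
    simp only [Matrix.trace, Matrix.diag_apply, Matrix.mul_apply, sum_mul]
    refine sum_congr rfl fun a _ => sum_comm.trans ?_
    refine sum_congr rfl fun b _ => sum_congr rfl fun c _ => ?_
    rw [hsymm.apply a c]
    ring
  rw [triangleCount, htrace, hsix]
  ring

end TriangleCount

section Statistics

variable {m n : ℕ}

lemma sum_Icc_eq_sum_fin {F : ℕ → ℝ} (hF : F (n + 1) = 0) :
    ∑ a ∈ Icc 1 n, F a = ∑ i : Fin (n + 1), F (i + 1) := by
  rw [Fin.sum_univ_eq_sum_range fun i => F (i + 1), sum_range_succ, hF, add_zero,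
    range_eq_Ico, sum_Ico_add' F]
  rfl

lemma sum_Ioc_eq_sum_fin {F : ℕ → ℝ} (hF : F (n + 1) = 0) (i : Fin (n + 1)) :
    ∑ b ∈ Ioc (i + 1 : ℕ) n, F b = ∑ j with i < j, F (j + 1) := by
  have hIoc : Ioc (i + 1 : ℕ) n = {b ∈ Icc 1 n | (i + 1 : ℕ) < b} := by
    ext
    simp only [mem_Ioc, mem_filter, mem_Icc]
    omega
  rw [hIoc, sum_filter, sum_Icc_eq_sum_fin (by simp [hF]), sum_filter]
  simp only [Nat.add_lt_add_iff_right, Fin.lt_def]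

lemma blk_eq_blockIndex {t : ℕ} (ht : t - 1 ≤ n * m) :
    blk m t = (blockIndex m n (t - 1) : ℕ) + 1 := by
  rw [blk, blockIndex_val ht]

lemma blk_le {t : ℕ} (ht : 1 ≤ t) (htn : t ≤ n * m) : blk m t ≤ n :=
  Nat.div_lt_of_lt_mul (by rw [Nat.mul_comm]; omega)

lemma mult_spare (f : ParentSeq (n * m)) (b : ℕ) : mult n m f (n + 1) b = 0 := by
  simp only [mult, card_eq_zero, filter_eq_empty_iff]
  intro j hj
  have hp := mem_Icc.mp (pval_mem_Icc f hj)
  have hjn := mem_Icc.mp hj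
  have hblk := blk_le (m := m) (by omega) hjn.2
  have hblk' := blk_le (m := m) (n := n) hp.1 (by omega)
  omega

lemma mult_eq_adj (f : ParentSeq (n * m)) {i k : Fin (n + 1)} (hik : i ≠ k) :
    (mult n m f (i + 1) (k + 1) : ℝ) = (mergedGraph m n f).adj i k := by
  simp only [mult, mergedGraph, Matrix.of_apply, if_neg hik]
  congr 2
  refine filter_congr fun j hj => ?_
  have hp := mem_Icc.mp (pval_mem_Icc f hj)
  have hjn := mem_Icc.mp hj
  rw [blk_eq_blockIndex (n := n) (by omega), blk_eq_blockIndex (n := n) (by omega)]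
  simp only [Nat.add_right_cancel_iff, Fin.ext_iff]

lemma sum_mult_eq_triangleCount (f : ParentSeq (n * m)) :
    ∑ a ∈ Icc 1 n, ∑ b ∈ Ioc a n, ∑ c ∈ Ioc b n,
      (mult n m f a b : ℝ) * (mult n m f a c : ℝ) * (mult n m f b c : ℝ) =
        (mergedGraph m n f).triangleCount := by
  have hspare (b : ℕ) : mult n m f b (n + 1) = 0 := by
    rw [← mult_spare f b]
    simp only [mult, or_comm]
  rw [MergedGraph.triangleCount, triangleCount_eq_sum_lt (adj_symm f) (adj_self f),
    sum_Icc_eq_sum_fin (by simp)]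
  refine sum_congr rfl fun i _ => ?_
  rw [sum_Ioc_eq_sum_fin (by simp)]
  refine sum_congr rfl fun j hij => ?_
  rw [sum_Ioc_eq_sum_fin (by simp [hspare])]
  refine sum_congr rfl fun k hjk => ?_
  have hij := (mem_filter.mp hij).2
  have hjk := (mem_filter.mp hjk).2
  rw [mult_eq_adj f hij.ne, mult_eq_adj f (hij.trans hjk).ne, mult_eq_adj f hjk.ne]

lemma card_blk_eq (hm : 1 ≤ m) (i : Fin n) :
    (#{t ∈ Icc 2 (n * m) | blk m t = i + 1} : ℝ) = m - if i.castSucc = 0 then 1 else 0 := by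
  have hblock : ((i : ℕ) + 1) * m ≤ n * m := Nat.mul_le_mul_right m i.2
  have hset : {t ∈ Icc 2 (n * m) | blk m t = i + 1} = Icc (max 2 (i * m + 1)) (i * m + m) := by
    ext t
    rw [mem_filter, blk, Nat.add_right_cancel_iff, Nat.div_eq_iff hm, mem_Icc, mem_Icc]
    rw [add_mul] at hblock
    omega
  rw [hset, Nat.card_Icc]
  split_ifs with hi
  · have hi : (i : ℕ) = 0 := congrArg Fin.val hi
    rw [hi, ← Nat.cast_pred hm]
    congr 1
    omega
  · have hi : (i : ℕ) ≠ 0 := fun h => hi (Fin.ext h)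
    have := Nat.mul_pos (Nat.pos_of_ne_zero hi) hm
    rw [sub_zero]
    congr 1
    omega

lemma degU_eq_degree (hm : 1 ≤ m) (f : ParentSeq (n * m)) (i : Fin n) :
    (degU n m f (i + 1) : ℝ) = (mergedGraph m n f).degree m i.castSucc := by
  have hin : #{t ∈ Icc 2 (n * m) | blk m (pval f t) = i + 1} =
      #{t ∈ Icc 2 (n * m) | blockIndex m n (pval f t - 1) = i.castSucc} := by
    refine congrArg card (filter_congr fun j hj => ?_)
    have hp := mem_Icc.mp (pval_mem_Icc f hj)
    have hjn := mem_Icc.mp hj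
    rw [blk_eq_blockIndex (n := n) (by omega), Nat.add_right_cancel_iff, Fin.ext_iff,
      Fin.val_castSucc]
  rw [degU, Nat.cast_add, card_blk_eq hm, hin, MergedGraph.degree, mergedGraph]
  ring

lemma sum_choose_degU_eq_degreePairs (hm : 1 ≤ m) (f : ParentSeq (n * m)) :
    ∑ i ∈ Icc 1 n, (Nat.choose (degU n m f i) 2 : ℝ) = (mergedGraph m n f).degreePairs m := by
  simp only [MergedGraph.degreePairs, ← degU_eq_degree hm f, ← Nat.cast_choose_two]
  rw [Fin.sum_univ_eq_sum_range fun i => (Nat.choose (degU n m f (i + 1)) 2 : ℝ),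
    range_eq_Ico, sum_Ico_add' fun i => (Nat.choose (degU n m f i) 2 : ℝ)]
  rfl

lemma pval_eq_of_mult_ne_zero {f : ParentSeq (n * 1)} {a c : ℕ} (hac : a < c)
    (h : mult n 1 f a c ≠ 0) : pval f c = a := by
  obtain ⟨t, ht⟩ := card_ne_zero.mp h
  obtain ⟨htn, hends⟩ := mem_filter.mp ht
  have hp := mem_Icc.mp (pval_mem_Icc f htn)
  simp only [blk, Nat.div_one] at hends
  obtain rfl : t = c := by omega
  omega

-- For `m = 1` the graph is a tree: the largest vertex of a triangle would have two parents.
lemma sum_mult_eq_zero (f : ParentSeq (n * 1)) :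
    ∑ a ∈ Icc 1 n, ∑ b ∈ Ioc a n, ∑ c ∈ Ioc b n,
      (mult n 1 f a b : ℝ) * (mult n 1 f a c : ℝ) * (mult n 1 f b c : ℝ) = 0 := by
  refine sum_eq_zero fun a _ => sum_eq_zero fun b hb => sum_eq_zero fun c hc => ?_
  have hab := (mem_Ioc.mp hb).1
  have hbc := (mem_Ioc.mp hc).1
  by_contra hne
  have hac : mult n 1 f a c ≠ 0 := fun h => hne (by simp [h])
  have hbc' : mult n 1 f b c ≠ 0 := fun h => hne (by simp [h])
  have := pval_eq_of_mult_ne_zero (hab.trans hbc) hac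
  have := pval_eq_of_mult_ne_zero hbc hbc'
  omega

end Statistics

end MoriGraph

open MoriGraph

/-- **Theorem 6.1 (main theorem).** For `β > 0`, the expected clustering coefficient of the
Móri graph `G^n_{m,β}` is `3c₁ log n/(c₂ n) + O(1/n)`, where
`c₁ = m(m−1)(1+β)²/β² + m(m−1)²(1+β)³/(β²(2+β))` and
`c₂ = (2+5β)/(2β)·m² + (2−β)/(2β)·m`. Here the clustering coefficient is
`3N/D` with `N` the number of triangles and `D = Σ_i binom(d(u_i),2)`. -/
theorem expected_clustering_coefficient (β : ℝ) (hβ : 0 < β) (m : ℕ) (hm : 1 ≤ m) :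
    ∃ K : ℝ, 0 < K ∧ ∃ n₀ : ℕ, 3 ≤ n₀ ∧ ∀ n : ℕ, n₀ ≤ n →
      |moriE (n * m) β (fun f =>
          3 * (∑ a ∈ Finset.Icc 1 n, ∑ b ∈ Finset.Ioc a n, ∑ c ∈ Finset.Ioc b n,
                (mult n m f a b : ℝ) * (mult n m f a c : ℝ) * (mult n m f b c : ℝ))
            / (∑ i ∈ Finset.Icc 1 n, (Nat.choose (degU n m f i) 2 : ℝ)))
        - 3 * ((m : ℝ) * ((m : ℝ) - 1) * (1 + β) ^ 2 / β ^ 2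
                + (m : ℝ) * ((m : ℝ) - 1) ^ 2 * (1 + β) ^ 3 / (β ^ 2 * (2 + β)))
            * Real.log n
            / (((2 + 5 * β) / (2 * β) * (m : ℝ) ^ 2 + (2 - β) / (2 * β) * (m : ℝ)) * (n : ℝ))|
        ≤ K / (n : ℝ) := by
  rcases hm.eq_or_lt with rfl | hm₂
  · refine ⟨1, one_pos, 3, le_rfl, fun n _ => ?_⟩
    simp only [sum_mult_eq_zero]
    simp [moriE]
  · obtain ⟨K, hK, hbound⟩ := exists_abs_mergedE_triangleCount_div_degreePairs_sub_le hβ hm₂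
    refine ⟨3 * K + 1, by positivity, 3, le_rfl, fun n hn => ?_⟩
    simp only [sum_mult_eq_triangleCount, sum_choose_degU_eq_degreePairs hm]
    rw [← triangleRate_eq hβ, ← degreePairRate]
    calc _ = |3 * (mergedE β m n (n * m) (fun s => s.triangleCount / s.degreePairs m) -
          triangleRate β m * Real.log n / (degreePairRate β m * n))| := by
          rw [mul_sub, ← mergedE_const_mul]
          simp only [mergedE, mul_div_assoc, mul_assoc]
      _ ≤ 3 * (K / n) := by
          rw [abs_mul, abs_of_pos three_pos]
          gcongr
          exact hbound n (by omega)
      _ ≤ (3 * K + 1) / n := by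
          rw [← mul_div_assoc]
          gcongr
          linarith
end

section
/- Let β > 0. There exists a constant C > 0 depending only on β such that for all integers 1 ≤ s ≤ t, Γ(t − 1/(2+β))·Γ(s − 2/(2+β)) / (Γ(t − 2/(2+β))·Γ(s − 1/(2+β))) ≤ (t/s)^{1/(2+β)}·(1 + C/s). -/
/-!
Log-convexity of `Γ` on `[x, x + 1]`, together with `Γ (x + 1) = x Γ x`, pins `Γ (x + c) / Γ x`
between `x (x + c) ^ (c - 1)` and `x ^ c` for `0 ≤ c ≤ 1` (Wendel's inequalities). The upper bound
at `x = t - b` and the lower bound at `x = s - b`, both with `c = b - a`, bound the ratio by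
`(t / s) ^ (b - a)` times `s / (s - b) = 1 + O(1 / s)`.
-/

open Real

section Wendel

variable {x c : ℝ}

theorem gamma_add_le_gamma_mul_rpow (hx : 0 < x) (hc₀ : 0 ≤ c) (hc₁ : c ≤ 1) :
    Gamma (x + c) ≤ Gamma x * x ^ c := by
  rcases hc₀.eq_or_lt with rfl | hc_pos
  · simp
  rcases hc₁.eq_or_lt with rfl | hc_lt
  · rw [Gamma_add_one hx.ne', rpow_one, mul_comm]
  have hΓ : 0 < Gamma x := Gamma_pos_of_pos hx
  calc Gamma (x + c) = Gamma ((1 - c) * x + c * (x + 1)) := by ring_nf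
    _ ≤ Gamma x ^ (1 - c) * Gamma (x + 1) ^ c :=
      Gamma_mul_add_mul_le_rpow_Gamma_mul_rpow_Gamma hx (by linarith) (by linarith) hc_pos
        (by ring)
    _ = Gamma x ^ (1 - c) * Gamma x ^ c * x ^ c := by
      rw [Gamma_add_one hx.ne', mul_rpow hx.le hΓ.le]
      ring
    _ = Gamma x * x ^ c := by rw [← rpow_add hΓ, sub_add_cancel, rpow_one]

theorem gamma_le_gamma_add_mul_rpow_div (hx : 0 < x) (hc₀ : 0 ≤ c) (hc₁ : c ≤ 1) :
    Gamma x ≤ Gamma (x + c) * ((x + c) ^ (1 - c) / x) := by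
  rw [← mul_div_assoc, le_div_iff₀ hx]
  calc Gamma x * x = Gamma (x + c + (1 - c)) := by
        rw [add_add_sub_cancel, Gamma_add_one hx.ne', mul_comm]
    _ ≤ Gamma (x + c) * (x + c) ^ (1 - c) :=
      gamma_add_le_gamma_mul_rpow (by linarith) (by linarith) (by linarith)

end Wendel

section Ratio

variable {a b s t : ℝ}

theorem gamma_sub_le_gamma_sub_mul_rpow (hb : 0 ≤ b) (hab : a ≤ b) (hba : b ≤ a + 1)
    (ht : b < t) : Gamma (t - a) ≤ Gamma (t - b) * t ^ (b - a) := by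
  have htb : 0 < t - b := sub_pos.2 ht
  calc Gamma (t - a) = Gamma (t - b + (b - a)) := by rw [sub_add_sub_cancel]
    _ ≤ Gamma (t - b) * (t - b) ^ (b - a) :=
      gamma_add_le_gamma_mul_rpow htb (by linarith) (by linarith)
    _ ≤ Gamma (t - b) * t ^ (b - a) :=
      mul_le_mul_of_nonneg_left (rpow_le_rpow htb.le (by linarith) (by linarith))
        (Gamma_pos_of_pos htb).le

theorem gamma_sub_le_gamma_sub_mul_rpow_div (ha : 0 ≤ a) (hab : a ≤ b) (hba : b ≤ a + 1)
    (hs : b < s) : Gamma (s - b) ≤ Gamma (s - a) * (s ^ (1 - (b - a)) / (s - b)) := by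
  have hsb : 0 < s - b := sub_pos.2 hs
  have hΓ : 0 < Gamma (s - a) := Gamma_pos_of_pos (by linarith)
  calc Gamma (s - b) ≤ Gamma (s - a) * ((s - a) ^ (1 - (b - a)) / (s - b)) := by
        simpa only [sub_add_sub_cancel] using
          gamma_le_gamma_add_mul_rpow_div (c := b - a) hsb (by linarith) (by linarith)
    _ ≤ Gamma (s - a) * (s ^ (1 - (b - a)) / (s - b)) := by
      gcongr <;> linarith

theorem gamma_sub_ratio_le (ha : 0 ≤ a) (hab : a ≤ b) (hba : b ≤ a + 1) (hs : b < s)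
    (ht : b < t) :
    Gamma (t - a) * Gamma (s - b) / (Gamma (t - b) * Gamma (s - a)) ≤
      (t / s) ^ (b - a) * (s / (s - b)) := by
  have hs₀ : 0 < s := by linarith
  have ht₀ : 0 < t := by linarith
  have hΓt : 0 < Gamma (t - b) := Gamma_pos_of_pos (sub_pos.2 ht)
  have hΓs : 0 < Gamma (s - a) := Gamma_pos_of_pos (by linarith)
  rw [div_le_iff₀ (mul_pos hΓt hΓs)]
  calc Gamma (t - a) * Gamma (s - b)
      ≤ (Gamma (t - b) * t ^ (b - a)) * (Gamma (s - a) * (s ^ (1 - (b - a)) / (s - b))) :=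
        mul_le_mul (gamma_sub_le_gamma_sub_mul_rpow (ha.trans hab) hab hba ht)
          (gamma_sub_le_gamma_sub_mul_rpow_div ha hab hba hs)
          (Gamma_pos_of_pos (sub_pos.2 hs)).le (by positivity)
    _ = (t / s) ^ (b - a) * (s / (s - b)) * (Gamma (t - b) * Gamma (s - a)) := by
        rw [div_rpow ht₀.le hs₀.le, rpow_sub hs₀ 1, rpow_one]
        ring

theorem div_sub_le_one_add_div (hb₀ : 0 ≤ b) (hb₁ : b < 1) (hs : 1 ≤ s) :
    s / (s - b) ≤ 1 + b / (1 - b) / s := by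
  have hsb : 0 < s - b := by linarith
  have hle : (1 - b) * s ≤ s - b := by linarith [le_mul_of_one_le_right hb₀ hs]
  calc s / (s - b) = 1 + b / (s - b) := by
        field_simp
        ring
    _ ≤ 1 + b / ((1 - b) * s) := by
      have hpos : 0 < (1 - b) * s := mul_pos (sub_pos.2 hb₁) (by linarith)
      exact add_le_add_right (div_le_div_of_nonneg_left hb₀ hpos hle) 1
    _ = 1 + b / (1 - b) / s := by rw [div_div]

theorem gamma_ratio_bound_general (ha : 0 ≤ a) (hab : a ≤ b) (hb : b < 1) (hs : 1 ≤ s)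
    (ht : 1 ≤ t) :
    Gamma (t - a) * Gamma (s - b) / (Gamma (t - b) * Gamma (s - a)) ≤
      (t / s) ^ (b - a) * (1 + b / (1 - b) / s) :=
  (gamma_sub_ratio_le ha hab (by linarith) (by linarith) (by linarith)).trans <| by
    gcongr
    exact div_sub_le_one_add_div (ha.trans hab) hb hs

end Ratio

/-- The Gamma-ratio estimate used in Lemma 5.1: for `β > 0` there is `C > 0` depending only
on `β` such that for all integers `1 ≤ s ≤ t`,
`Γ(t−1/(2+β))Γ(s−2/(2+β))/(Γ(t−2/(2+β))Γ(s−1/(2+β))) ≤ (t/s)^{1/(2+β)}(1+C/s)`. -/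
theorem gamma_ratio_bound (β : ℝ) (hβ : 0 < β) :
    ∃ C : ℝ, 0 < C ∧ ∀ s t : ℕ, 1 ≤ s → s ≤ t →
      Real.Gamma ((t : ℝ) - 1 / (2 + β)) * Real.Gamma ((s : ℝ) - 2 / (2 + β)) /
          (Real.Gamma ((t : ℝ) - 2 / (2 + β)) * Real.Gamma ((s : ℝ) - 1 / (2 + β)))
        ≤ ((t : ℝ) / (s : ℝ)) ^ (1 / (2 + β)) * (1 + C / (s : ℝ)) := by
  have hab : 1 / (2 + β) ≤ 2 / (2 + β) := by gcongr; norm_num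
  have hb : 2 / (2 + β) < 1 := by rw [div_lt_one (by positivity)]; linarith
  have hsub : 2 / (2 + β) - 1 / (2 + β) = 1 / (2 + β) := by ring
  refine ⟨2 / (2 + β) / (1 - 2 / (2 + β)), div_pos (by positivity) (sub_pos.2 hb), ?_⟩
  intro s t hs hst
  simpa only [hsub] using gamma_ratio_bound_general (by positivity) hab hb
    (Nat.one_le_cast.2 hs) (Nat.one_le_cast.2 (hs.trans hst))
end
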